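/- Let Ω ⊂ ℝⁿ (n ≥ 2) be a bounded polyhedral domain with singular set S ≠ ∅ and η(x) = dist(x, S), and let μ ≥ 1 be an integer. Then there exists a constant C > 0 such that for every function u : ℝⁿ → ℝ that is smooth on Ω, continuous on the closure of Ω, vanishes on ∂Ω, and satisfies ‖u‖_{K^1_1(Ω)} < ∞ and ‖Δu‖_{K^{μ−1}_{−1}(Ω)} < ∞, one has ‖u‖_{K^{μ+1}_1(Ω)} < ∞ and ‖u‖_{K^{μ+1}_1(Ω)} ≤ C ( ‖Δu‖_{K^{μ−1}_{−1}(Ω)} + ‖u‖_{K^0_1(Ω)} ). -/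

import Mathlib

open MeasureTheory Set Metric
open scoped RealInnerProductSpace ENNReal

noncomputable section

/-- `H` is an affine hyperplane in `ℝⁿ`. -/
def IsAffineHyperplane {n : ℕ} (H : Set (EuclideanSpace ℝ (Fin n))) : Prop :=
  ∃ (v : EuclideanSpace ℝ (Fin n)) (c : ℝ), v ≠ 0 ∧ H = {x | ⟪v, x⟫ = c}

/-- `Ω` is a bounded polyhedral domain with boundary contained in the union of the minimal
finite family `𝓗` of affine hyperplanes. -/
structure IsPolyhedralDomain {n : ℕ} (Ω : Set (EuclideanSpace ℝ (Fin n)))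
    (𝓗 : Finset (Set (EuclideanSpace ℝ (Fin n)))) : Prop where
  isOpen : IsOpen Ω
  isBounded : Bornology.IsBounded Ω
  frontier_closure : frontier Ω = frontier (closure Ω)
  hyperplane : ∀ H ∈ 𝓗, IsAffineHyperplane H
  subset_union : frontier Ω ⊆ ⋃ H ∈ 𝓗, H
  minimal : ∀ 𝓗' ⊂ 𝓗, ¬ frontier Ω ⊆ ⋃ H ∈ 𝓗', H

/-- The set of singular boundary points: boundary points lying on at least two
distinct hyperplanes of the family `𝓗`. -/
def polySingularSet {n : ℕ} (Ω : Set (EuclideanSpace ℝ (Fin n)))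
    (𝓗 : Finset (Set (EuclideanSpace ℝ (Fin n)))) : Set (EuclideanSpace ℝ (Fin n)) :=
  {x | x ∈ frontier Ω ∧ ∃ H₁ ∈ 𝓗, ∃ H₂ ∈ 𝓗, H₁ ≠ H₂ ∧ x ∈ H₁ ∧ x ∈ H₂}

/-- Iterated partial derivative along a list of coordinate directions. -/
def derivAlong {n : ℕ} : List (Fin n) → (EuclideanSpace ℝ (Fin n) → ℝ) →
    EuclideanSpace ℝ (Fin n) → ℝ
  | [], u => u
  | i :: L, u => fun x => fderiv ℝ (derivAlong L u) x (EuclideanSpace.single i 1)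

/-- The iterated partial derivative `∂^β` associated to a multi-index `β`. -/
def pderivMulti {n : ℕ} (β : Fin n → ℕ) (u : EuclideanSpace ℝ (Fin n) → ℝ) :
    EuclideanSpace ℝ (Fin n) → ℝ :=
  derivAlong ((List.finRange n).flatMap fun i => List.replicate (β i) i) u

/-- The finite set of multi-indices `β : Fin n → ℕ` with `|β| = ∑ i, β i ≤ m`. -/
def multiIndicesLE (n m : ℕ) : Finset (Fin n → ℕ) :=
  ((Finset.univ : Finset (Fin n → Fin (m + 1))).filter
    (fun γ => ∑ i, (γ i : ℕ) ≤ m)).image (fun γ i => (γ i : ℕ))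

/-- The squared Babuška–Kondratiev norm `‖u‖²_{K^μ_a(Ω)}` with weight the distance to `S`. -/
def KnormSq {n : ℕ} (Ω S : Set (EuclideanSpace ℝ (Fin n))) (μ : ℕ) (a : ℝ)
    (u : EuclideanSpace ℝ (Fin n) → ℝ) : ℝ≥0∞ :=
  ∑ β ∈ multiIndicesLE n μ, ∫⁻ x in Ω,
    ENNReal.ofReal (infDist x S ^ (2 * (((∑ i, β i : ℕ) : ℝ) - a)) * pderivMulti β u x ^ 2)

/-- The Laplace operator `Δu = ∑ⱼ ∂²u/∂xⱼ²`. -/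
def laplaceOp {n : ℕ} (u : EuclideanSpace ℝ (Fin n) → ℝ) :
    EuclideanSpace ℝ (Fin n) → ℝ :=
  fun x => ∑ j : Fin n, derivAlong [j, j] u x

/-!
Near a point `y` at distance `η(y)` from the singular set, the boundary is flat: by compactness
there is `κ > 0` such that the ball `B(y, κ η(y))` meets `∂Ω` within a single hyperplane. Where the
boundary is flat, translations parallel to it preserve `Ω`, so the Caccioppoli inequality applied to
difference quotients bounds the tangential derivatives, and the equation then expresses the normal
ones. Since `u` is only continuous up to the boundary, the Caccioppoli inequality is tested with
smooth truncations of `u` that vanish near `∂Ω`. Rescaled to `B(y, κ η(y))` the resulting interior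
and boundary estimates carry exactly the weights of the Babuška–Kondratiev norms, and integrating
them over all centres `y` against the weight `η(y)⁻ⁿ` sums them up.
-/

open Filter Topology
open scoped ContDiff NNReal

/-! ### Iterated directional derivatives and difference quotients -/

section DirDeriv

variable {E F ι : Type*} [NormedAddCommGroup E] [NormedSpace ℝ E]
  [NormedAddCommGroup F] [NormedSpace ℝ F] {G G' : Set E} {u v : E → F}

/-- The iterated directional derivative of `u` along a list of vectors, the head of the list being
applied last. Lists rather than multi-indices are used so that directions can be peeled off one at
a time. -/
def dirDeriv : List E → (E → F) → E → F
  | [], u => u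
  | v :: L, u => fun x => fderiv ℝ (dirDeriv L u) x v

lemma dirDeriv_nil (u : E → F) : dirDeriv [] u = u := rfl

lemma dirDeriv_cons (v : E) (L : List E) (u : E → F) :
    dirDeriv (v :: L) u = fun x => fderiv ℝ (dirDeriv L u) x v := rfl

lemma dirDeriv_append (L M : List E) (u : E → F) :
    dirDeriv (L ++ M) u = dirDeriv L (dirDeriv M u) := by
  induction L with
  | nil => rfl
  | cons v L ih => simp only [List.cons_append, dirDeriv_cons, ih]

lemma contDiffOn_dirDeriv (hG : IsOpen G) (hu : ContDiffOn ℝ ∞ u G) (L : List E) :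
    ContDiffOn ℝ ∞ (dirDeriv L u) G := by
  induction L with
  | nil => exact hu
  | cons v L ih => exact (ih.fderiv_of_isOpen hG (by simp)).clm_apply contDiffOn_const

lemma differentiableAt_dirDeriv (hG : IsOpen G) (hu : ContDiffOn ℝ ∞ u G) (L : List E) {x : E}
    (hx : x ∈ G) : DifferentiableAt ℝ (dirDeriv L u) x :=
  ((contDiffOn_dirDeriv hG hu L).contDiffAt (hG.mem_nhds hx)).differentiableAt (by simp)

lemma eqOn_dirDeriv (hG : IsOpen G) (h : EqOn u v G) (L : List E) :
    EqOn (dirDeriv L u) (dirDeriv L v) G := by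
  induction L with
  | nil => exact h
  | cons w L ih =>
    intro x hx
    have : dirDeriv L u =ᶠ[𝓝 x] dirDeriv L v := eventually_of_mem (hG.mem_nhds hx) ih
    simp only [dirDeriv_cons, this.fderiv_eq]

lemma dirDeriv_pair (hG : IsOpen G) (hu : ContDiffOn ℝ ∞ u G) (v w : E) :
    EqOn (dirDeriv [v, w] u) (fun x => fderiv ℝ (fderiv ℝ u) x v w) G := by
  intro x hx
  have hd : DifferentiableAt ℝ (fderiv ℝ u) x :=
    ((hu.fderiv_of_isOpen hG (m := ∞) (by simp)).contDiffAt (hG.mem_nhds hx)).differentiableAt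
      (by simp)
  simp only [dirDeriv_cons, dirDeriv_nil]
  rw [fderiv_clm_apply hd (differentiableAt_const w)]
  simp

lemma dirDeriv_swap (hG : IsOpen G) (hu : ContDiffOn ℝ ∞ u G) (v w : E) :
    EqOn (dirDeriv [v, w] u) (dirDeriv [w, v] u) G := by
  intro x hx
  have hs : IsSymmSndFDerivAt ℝ u x :=
    (hu.contDiffAt (hG.mem_nhds hx)).isSymmSndFDerivAt (by simp; norm_cast)
  rw [dirDeriv_pair hG hu v w hx, dirDeriv_pair hG hu w v hx]
  exact hs v w

lemma dirDeriv_perm (hG : IsOpen G) (hu : ContDiffOn ℝ ∞ u G) {L M : List E} (h : L.Perm M) :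
    EqOn (dirDeriv L u) (dirDeriv M u) G := by
  induction h with
  | nil => exact fun x _ => rfl
  | cons v _ ih => exact eqOn_dirDeriv hG ih [v]
  | swap v w L => exact dirDeriv_swap hG (contDiffOn_dirDeriv hG hu L) w v
  | trans _ _ h₁ h₂ => exact h₁.trans h₂

lemma dirDeriv_comp_add_right (a : E) (u : E → F) (L : List E) :
    dirDeriv L (fun x => u (x + a)) = fun x => dirDeriv L u (x + a) := by
  induction L with
  | nil => rfl
  | cons v L ih =>
    ext x
    simp only [dirDeriv_cons, ih, fderiv_comp_add_right]

lemma dirDeriv_const_smul (c : ℝ) (u : E → F) (L : List E) :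
    dirDeriv L (c • u) = c • dirDeriv L u := by
  induction L with
  | nil => rfl
  | cons v L ih =>
    ext x
    simp only [dirDeriv_cons, ih, fderiv_const_smul_field, Pi.smul_apply, smul_apply]

lemma dirDeriv_map_smul (c : ℝ) (b : ι → E) (u : E → F) (L : List ι) :
    dirDeriv (L.map (c • b)) u = c ^ L.length • dirDeriv (L.map b) u := by
  induction L with
  | nil => simp [dirDeriv_nil]
  | cons i L ih =>
    ext x
    simp only [List.map_cons, dirDeriv_cons, ih, fderiv_const_smul_field, Pi.smul_apply,
      smul_apply, map_smul, smul_smul, List.length_cons, pow_succ']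

lemma dirDeriv_sub (hG : IsOpen G) (hu : ContDiffOn ℝ ∞ u G) (hv : ContDiffOn ℝ ∞ v G)
    (L : List E) :
    EqOn (dirDeriv L (fun x => u x - v x)) (fun x => dirDeriv L u x - dirDeriv L v x) G := by
  induction L with
  | nil => exact fun x _ => rfl
  | cons w L ih =>
    intro x hx
    have hL := eqOn_dirDeriv hG ih [w] hx
    simp only [dirDeriv_cons, dirDeriv_nil] at hL ⊢
    rw [hL, fderiv_fun_sub (differentiableAt_dirDeriv hG hu L hx)
      (differentiableAt_dirDeriv hG hv L hx), sub_apply]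

lemma dirDeriv_sum (hG : IsOpen G) (s : Finset ι) {f : ι → E → F}
    (hf : ∀ i, ContDiffOn ℝ ∞ (f i) G) (L : List E) :
    EqOn (dirDeriv L (fun x => ∑ i ∈ s, f i x)) (fun x => ∑ i ∈ s, dirDeriv L (f i) x) G := by
  induction L with
  | nil => exact fun x _ => rfl
  | cons w L ih =>
    intro x hx
    have hL := eqOn_dirDeriv hG ih [w] hx
    simp only [dirDeriv_cons, dirDeriv_nil] at hL ⊢
    rw [hL, fderiv_fun_sum fun i _ => differentiableAt_dirDeriv hG (hf i) L hx, sum_apply]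

/-- The difference quotient of `u` with step `h • b`. -/
def diffQuot (h : ℝ) (b : E) (u : E → F) : E → F := fun x => h⁻¹ • (u (x + h • b) - u x)

section

variable {h : ℝ} {b : E} (hGG' : G ⊆ G') (hs : ∀ x ∈ G, x + h • b ∈ G')
include hGG' hs

lemma contDiffOn_diffQuot (hu : ContDiffOn ℝ ∞ u G') : ContDiffOn ℝ ∞ (diffQuot h b u) G :=
  contDiffOn_const.smul <|
    (hu.comp (contDiff_id.add contDiff_const).contDiffOn hs).sub (hu.mono hGG')

lemma dirDeriv_diffQuot (hG : IsOpen G) (hu : ContDiffOn ℝ ∞ u G') (L : List E) :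
    EqOn (dirDeriv L (diffQuot h b u)) (diffQuot h b (dirDeriv L u)) G := by
  have hshift : ContDiffOn ℝ ∞ (fun x => u (x + h • b)) G :=
    hu.comp (contDiff_id.add contDiff_const).contDiffOn hs
  intro x hx
  change dirDeriv L (h⁻¹ • fun x => u (x + h • b) - u x) x = _
  rw [dirDeriv_const_smul, Pi.smul_apply, dirDeriv_sub hG hshift (hu.mono hGG') L hx,
    dirDeriv_comp_add_right, diffQuot]

end

lemma tendsto_diffQuot {x : E} (hu : DifferentiableAt ℝ u x) (b : E) :
    Tendsto (fun h => diffQuot h b u x) (𝓝[≠] 0) (𝓝 (fderiv ℝ u x b)) := by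
  simpa [diffQuot] using hasDerivAt_iff_tendsto_slope_zero.1 (hu.hasFDerivAt.hasLineDerivAt b)

/-- The second-order operator `∑ i, ∂²/∂(b i)²`; it is the Laplacian if `b` is an orthonormal
basis, and a multiple of it if `b` is a rescaled one. -/
def frameLaplacian [Fintype ι] (b : ι → E) (u : E → F) : E → F :=
  fun x => ∑ i, dirDeriv [b i, b i] u x

lemma contDiffOn_frameLaplacian [Fintype ι] (b : ι → E) (hG : IsOpen G)
    (hu : ContDiffOn ℝ ∞ u G) : ContDiffOn ℝ ∞ (frameLaplacian b u) G :=
  ContDiffOn.sum fun _ _ => contDiffOn_dirDeriv hG hu _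

lemma frameLaplacian_smul [Fintype ι] (c : ℝ) (b : ι → E) (u : E → F) :
    frameLaplacian (c • b) u = c ^ 2 • frameLaplacian b u := by
  ext x
  simp only [frameLaplacian, Pi.smul_apply, Finset.smul_sum]
  exact Finset.sum_congr rfl fun i _ => congrFun (dirDeriv_map_smul c b u [i, i]) x

lemma eqOn_frameLaplacian [Fintype ι] (b : ι → E) (hG : IsOpen G) (h : EqOn u v G) :
    EqOn (frameLaplacian b u) (frameLaplacian b v) G := fun _ hx =>
  Finset.sum_congr rfl fun _ _ => eqOn_dirDeriv hG h _ hx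

lemma frameLaplacian_diffQuot [Fintype ι] (e : ι → E) {h : ℝ} {b : E} (hGG' : G ⊆ G')
    (hs : ∀ x ∈ G, x + h • b ∈ G') (hG : IsOpen G) (hu : ContDiffOn ℝ ∞ u G') :
    EqOn (frameLaplacian e (diffQuot h b u)) (diffQuot h b (frameLaplacian e u)) G := by
  intro x hx
  simp only [frameLaplacian]
  rw [Finset.sum_congr rfl fun i _ => dirDeriv_diffQuot hGG' hs hG hu [e i, e i] hx]
  simp only [diffQuot, frameLaplacian, Finset.smul_sum, smul_sub, Finset.sum_sub_distrib]

end DirDeriv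

/-! ### Smooth truncations and cutoffs -/

section Truncation

variable {ε : ℝ}

/-- The derivative of `smoothTruncation`: a smooth even function of `t` which vanishes for
`|t| ≤ ε` and equals `1` for `2 * ε ≤ |t|`. -/
def truncationSlope (ε t : ℝ) : ℝ := Real.smoothTransition ((t / ε) ^ 2 - 1)

/-- A smooth approximation of the identity of `ℝ` which vanishes for `|t| ≤ ε`. Composing a
function that is merely continuous up to the boundary with it makes the function vanish near the
boundary, so that it becomes an admissible test function. -/
def smoothTruncation (ε t : ℝ) : ℝ := ∫ s in (0 : ℝ)..t, truncationSlope ε s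

lemma contDiff_truncationSlope (ε : ℝ) : ContDiff ℝ ∞ (truncationSlope ε) :=
  Real.smoothTransition.contDiff.comp (((contDiff_id.div_const ε).pow 2).sub contDiff_const)

lemma truncationSlope_nonneg (ε t : ℝ) : 0 ≤ truncationSlope ε t :=
  Real.smoothTransition.nonneg _

lemma truncationSlope_le_one (ε t : ℝ) : truncationSlope ε t ≤ 1 :=
  Real.smoothTransition.le_one _

lemma truncationSlope_eq_zero (hε : 0 < ε) {t : ℝ} (ht : |t| ≤ ε) : truncationSlope ε t = 0 := by
  refine Real.smoothTransition.zero_of_nonpos (sub_nonpos.2 ?_)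
  rw [sq_le_one_iff_abs_le_one, abs_div, abs_of_pos hε]
  exact div_le_one_of_le₀ ht hε.le

lemma truncationSlope_eq_one (hε : 0 < ε) {t : ℝ} (ht : 2 * ε ≤ |t|) : truncationSlope ε t = 1 := by
  have h : 2 ≤ |t / ε| := by rwa [abs_div, abs_of_pos hε, le_div_iff₀ hε]
  refine Real.smoothTransition.one_of_one_le ?_
  rw [← sq_abs]
  nlinarith

lemma truncationSlope_le_of_abs_le {s t : ℝ} (h : |s| ≤ |t|) :
    truncationSlope ε s ≤ truncationSlope ε t := by
  refine Real.smoothTransition.monotone (sub_le_sub_right ?_ 1)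
  rw [div_pow, div_pow]
  exact div_le_div_of_nonneg_right (sq_le_sq.2 h) (sq_nonneg ε)

lemma hasDerivAt_smoothTruncation (ε t : ℝ) :
    HasDerivAt (smoothTruncation ε) (truncationSlope ε t) t :=
  have hc := (contDiff_truncationSlope ε).continuous
  intervalIntegral.integral_hasDerivAt_right (hc.intervalIntegrable _ _)
    (hc.stronglyMeasurableAtFilter _ _) hc.continuousAt

lemma contDiff_smoothTruncation (ε : ℝ) : ContDiff ℝ ∞ (smoothTruncation ε) := by
  rw [contDiff_infty_iff_deriv, funext fun t => (hasDerivAt_smoothTruncation ε t).deriv]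
  exact ⟨fun t => (hasDerivAt_smoothTruncation ε t).differentiableAt, contDiff_truncationSlope ε⟩

lemma abs_smoothTruncation_le (ε t : ℝ) : |smoothTruncation ε t| ≤ truncationSlope ε t * |t| := by
  have h := intervalIntegral.norm_integral_le_of_norm_le_const (f := truncationSlope ε) (a := 0)
    (b := t) (C := truncationSlope ε t) fun s hs => by
      rw [Real.norm_of_nonneg (truncationSlope_nonneg ε s)]
      refine truncationSlope_le_of_abs_le ?_
      simpa using abs_sub_left_of_mem_uIcc (uIoc_subset_uIcc hs)
  rwa [sub_zero, Real.norm_eq_abs] at h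

lemma smoothTruncation_eq_zero (hε : 0 < ε) {t : ℝ} (ht : |t| ≤ ε) : smoothTruncation ε t = 0 := by
  simpa [truncationSlope_eq_zero hε ht] using abs_smoothTruncation_le ε t

lemma sq_smoothTruncation_le (ε t : ℝ) :
    smoothTruncation ε t ^ 2 ≤ t ^ 2 * truncationSlope ε t := by
  calc smoothTruncation ε t ^ 2 = |smoothTruncation ε t| ^ 2 := (sq_abs _).symm
    _ ≤ (truncationSlope ε t * |t|) ^ 2 := by gcongr; exact abs_smoothTruncation_le ε t
    _ = t ^ 2 * truncationSlope ε t ^ 2 := by rw [mul_pow, sq_abs, mul_comm]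
    _ ≤ t ^ 2 * truncationSlope ε t := by
      gcongr
      exact pow_le_of_le_one (truncationSlope_nonneg ε t) (truncationSlope_le_one ε t) two_ne_zero

lemma sq_smoothTruncation_le_sq (ε t : ℝ) : smoothTruncation ε t ^ 2 ≤ t ^ 2 :=
  (sq_smoothTruncation_le ε t).trans
    (mul_le_of_le_one_right (sq_nonneg t) (truncationSlope_le_one ε t))

end Truncation

section Cutoff

variable {E : Type*} [NormedAddCommGroup E] [NormedSpace ℝ E]

/-- `χ` is a smooth cutoff function: it is compactly supported in `B` and equal to `1` on `A`. -/
structure IsCutoff (A B : Set E) (χ : E → ℝ) : Prop where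
  contDiff : ContDiff ℝ ∞ χ
  hasCompactSupport : HasCompactSupport χ
  tsupport_subset : tsupport χ ⊆ B
  nonneg : ∀ x, 0 ≤ χ x
  le_one : ∀ x, χ x ≤ 1
  eq_one : ∀ x ∈ A, χ x = 1

lemma IsCutoff.sq_le_one {A B : Set E} {χ : E → ℝ} (hχ : IsCutoff A B χ) (x : E) :
    χ x ^ 2 ≤ 1 :=
  pow_le_one₀ (hχ.nonneg x) (hχ.le_one x)

lemma IsCutoff.differentiableAt {A B : Set E} {χ : E → ℝ} (hχ : IsCutoff A B χ) (x : E) :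
    DifferentiableAt ℝ χ x :=
  hχ.contDiff.differentiable (by simp) x

lemma exists_isCutoff_fderiv_le (E : Type*) [NormedAddCommGroup E] [NormedSpace ℝ E]
    [FiniteDimensional ℝ E] {ρ ρ' : ℝ} (hρ : 0 < ρ) (hρ' : ρ < ρ') :
    ∃ K : ℝ, 0 ≤ K ∧ ∀ (y : E) (R : ℝ), 0 < R →
      ∃ χ : E → ℝ, IsCutoff (ball y (ρ * R)) (ball y (ρ' * R)) χ ∧
        ∀ x b, ‖b‖ ≤ R → |fderiv ℝ χ x b| ≤ K := by
  obtain ⟨ρ₁, h₁, h₂⟩ := exists_between hρ'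
  let B : ContDiffBump (0 : E) := ⟨ρ, ρ₁, hρ, h₁⟩
  have hBs : ContDiff ℝ ∞ B := B.contDiff
  obtain ⟨K, hK⟩ :=
    (B.hasCompactSupport.fderiv ℝ).exists_bound_of_continuous (hBs.continuous_fderiv (by simp))
  have hK0 : 0 ≤ K := (norm_nonneg _).trans (hK 0)
  refine ⟨K, hK0, fun y R hR => ?_⟩
  set T : E → E := fun x => R⁻¹ • (x - y) with hT
  have hTs : ContDiff ℝ ∞ T := (contDiff_id.sub contDiff_const).const_smul _
  have hnorm (x) : ‖T x‖ = dist x y / R := by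
    simp only [hT, norm_smul, norm_inv, Real.norm_of_nonneg hR.le, dist_eq_norm, div_eq_inv_mul]
  have hsupp : tsupport (fun x => B (T x)) ⊆ closedBall y (ρ₁ * R) := by
    refine closure_minimal (fun x (hx : T x ∈ Function.support B) => ?_) isClosed_closedBall
    rw [B.support_eq, mem_ball_zero_iff, hnorm, div_lt_iff₀ hR] at hx
    exact hx.le
  refine ⟨fun x => B (T x), ⟨hBs.comp hTs, ?_, ?_, fun x => B.nonneg, fun x => B.le_one, ?_⟩, ?_⟩
  · exact HasCompactSupport.of_support_subset_isCompact (isCompact_closedBall y (ρ₁ * R))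
      ((subset_tsupport _).trans hsupp)
  · exact hsupp.trans (closedBall_subset_ball (by gcongr))
  · intro x hx
    apply B.one_of_mem_closedBall
    rw [mem_closedBall_zero_iff, hnorm, div_le_iff₀ hR]
    exact (mem_ball.1 hx).le
  · intro x b hb
    have hTd : HasFDerivAt T (R⁻¹ • ContinuousLinearMap.id ℝ E) x :=
      ((hasFDerivAt_id x).sub_const y).const_smul R⁻¹
    have hd := (hBs.differentiable (by simp) (T x)).hasFDerivAt.comp x hTd
    calc |fderiv ℝ (fun x => B (T x)) x b| = ‖fderiv ℝ B (T x) (R⁻¹ • b)‖ := by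
          rw [HasFDerivAt.fderiv (f := fun x => B (T x)) hd]; simp
      _ ≤ ‖fderiv ℝ B (T x)‖ * ‖R⁻¹ • b‖ := ContinuousLinearMap.le_opNorm _ _
      _ ≤ K * 1 := by
        gcongr
        · exact hK _
        · rwa [norm_smul, norm_inv, Real.norm_of_nonneg hR.le, inv_mul_le_iff₀ hR, mul_one]
      _ = K := mul_one K

end Cutoff

/-! ### Square integrals -/

section DiffQuotIntegral

lemma sq_integral_Icc_le {f : ℝ → ℝ} (hf : ContinuousOn f (Icc 0 1)) :
    (∫ s in (0 : ℝ)..1, f s) ^ 2 ≤ ∫ s in (0 : ℝ)..1, f s ^ 2 := by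
  rw [← uIcc_of_le (zero_le_one' ℝ)] at hf
  have hi := hf.intervalIntegrable (μ := volume)
  have hi2 : IntervalIntegrable (fun s => f s ^ 2) volume 0 1 := (hf.pow 2).intervalIntegrable
  set m := ∫ s in (0 : ℝ)..1, f s with hm
  have hvar : ∫ s in (0 : ℝ)..1, (f s - m) ^ 2 = (∫ s in (0 : ℝ)..1, f s ^ 2) - m ^ 2 := by
    have h (s) : (f s - m) ^ 2 = f s ^ 2 - 2 * m * f s + m ^ 2 := by ring
    simp_rw [h]
    rw [intervalIntegral.integral_add (hi2.sub (hi.const_mul _)) intervalIntegrable_const,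
      intervalIntegral.integral_sub hi2 (hi.const_mul _), intervalIntegral.integral_const_mul, ← hm,
      intervalIntegral.integral_const]
    simp only [sub_zero, one_smul]
    ring
  linarith [intervalIntegral.integral_nonneg (μ := volume) zero_le_one
    fun s _ => sq_nonneg (f s - m)]

variable {E : Type*} [NormedAddCommGroup E] [NormedSpace ℝ E] {g : E → ℝ} {x b : E} {h : ℝ}

lemma diffQuot_eq_integral (hh : h ≠ 0)
    (hg : ∀ s ∈ Icc (0 : ℝ) 1, DifferentiableAt ℝ g (x + (s * h) • b))
    (hc : ContinuousOn (fun s => fderiv ℝ g (x + (s * h) • b) b) (Icc 0 1)) :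
    diffQuot h b g x = ∫ s in (0 : ℝ)..1, fderiv ℝ g (x + (s * h) • b) b := by
  rw [← uIcc_of_le (zero_le_one' ℝ)] at hg hc
  have hderiv : ∀ s ∈ uIcc (0 : ℝ) 1, HasDerivAt (fun s => g (x + (s * h) • b))
      (h * fderiv ℝ g (x + (s * h) • b) b) s := fun s hs => by
    have hline : HasDerivAt (fun s : ℝ => x + (s * h) • b) (h • b) s := by
      simpa using (((hasDerivAt_id s).mul_const h).smul_const b).const_add x
    rw [← smul_eq_mul, ← map_smul]
    exact (hg s hs).hasFDerivAt.comp_hasDerivAt s hline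
  have hftc := intervalIntegral.integral_eq_sub_of_hasDerivAt hderiv
    (continuousOn_const.mul hc).intervalIntegrable
  rw [intervalIntegral.integral_const_mul] at hftc
  simp only [one_mul, zero_mul, zero_smul, add_zero] at hftc
  rw [diffQuot, ← hftc, smul_eq_mul, inv_mul_cancel_left₀ hh]

lemma ofReal_sq_diffQuot_le {A : Set E} (hA : IsOpen A) (hg : ContDiffOn ℝ ∞ g A)
    (hh : h ≠ 0) (hx : ∀ s ∈ Icc (0 : ℝ) 1, x + (s * h) • b ∈ A) :
    ENNReal.ofReal (diffQuot h b g x ^ 2) ≤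
      ∫⁻ s in Icc (0 : ℝ) 1, ENNReal.ofReal (fderiv ℝ g (x + (s * h) • b) b ^ 2) := by
  have hc : ContinuousOn (fun s => fderiv ℝ g (x + (s * h) • b) b) (Icc 0 1) :=
    (contDiffOn_dirDeriv hA hg [b]).continuousOn.comp (by fun_prop) hx
  rw [diffQuot_eq_integral hh (g := g)
    (fun s hs => differentiableAt_dirDeriv hA hg [] (hx s hs)) hc]
  refine (ENNReal.ofReal_le_ofReal (sq_integral_Icc_le hc)).trans_eq ?_
  rw [intervalIntegral.integral_of_le zero_le_one, ← integral_Icc_eq_integral_Ioc]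
  exact ofReal_integral_eq_lintegral_ofReal (hc.pow 2).integrableOn_Icc
    (Eventually.of_forall fun _ => sq_nonneg _)

end DiffQuotIntegral

section L2

variable {E : Type*} [MeasurableSpace E] (μ : Measure E)

variable {μ} in
lemma lintegral_le_of_ae_tendsto {g : ℕ → E → ℝ≥0∞} {f : E → ℝ≥0∞} {B : ℝ≥0∞}
    (hm : ∀ k, AEMeasurable (g k) μ) (hlim : ∀ᵐ x ∂μ, Tendsto (fun k => g k x) atTop (𝓝 (f x)))
    (hB : ∀ k, ∫⁻ x, g k x ∂μ ≤ B) : ∫⁻ x, f x ∂μ ≤ B :=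
  calc ∫⁻ x, f x ∂μ = ∫⁻ x, liminf (fun k => g k x) atTop ∂μ :=
        lintegral_congr_ae (hlim.mono fun _ hx => hx.liminf_eq.symm)
    _ ≤ liminf (fun k => ∫⁻ x, g k x ∂μ) atTop := lintegral_liminf_le' hm
    _ ≤ B := liminf_le_of_frequently_le' (Frequently.of_forall hB)

/-- The squared `L²(A)` norm of a real-valued function, as an extended nonnegative real so that no
integrability has to be assumed. -/
def l2NormSq (A : Set E) (g : E → ℝ) : ℝ≥0∞ := ∫⁻ x in A, ENNReal.ofReal (g x ^ 2) ∂μ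

lemma l2NormSq_mono {A B : Set E} (h : A ⊆ B) (g : E → ℝ) : l2NormSq μ A g ≤ l2NormSq μ B g :=
  lintegral_mono_set h

lemma l2NormSq_congr {A : Set E} (hA : MeasurableSet A) {g f : E → ℝ} (h : EqOn g f A) :
    l2NormSq μ A g = l2NormSq μ A f :=
  setLIntegral_congr_fun hA fun x hx => by simp only [h hx]

lemma l2NormSq_const_smul (A : Set E) (k : ℝ) (f : E → ℝ) :
    l2NormSq μ A (k • f) = ENNReal.ofReal (k ^ 2) * l2NormSq μ A f := by
  simp only [l2NormSq, Pi.smul_apply, smul_eq_mul, mul_pow, ENNReal.ofReal_mul (sq_nonneg k)]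
  exact lintegral_const_mul' _ _ ENNReal.ofReal_ne_top

lemma integrableOn_sq_of_l2NormSq_le [TopologicalSpace E] [OpensMeasurableSpace E] {A : Set E}
    (hA : MeasurableSet A) {g : E → ℝ} (hg : ContinuousOn g A) {M : ℝ≥0}
    (h : l2NormSq μ A g ≤ M) : IntegrableOn (fun x => g x ^ 2) A μ := by
  refine ⟨(hg.pow 2).aestronglyMeasurable hA, ?_⟩
  rw [hasFiniteIntegral_iff_ofReal (Eventually.of_forall fun _ => sq_nonneg _)]
  exact h.trans_lt ENNReal.coe_lt_top

lemma setIntegral_sq_le_of_l2NormSq_le {A : Set E} {g : E → ℝ} {M : ℝ≥0}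
    (hi : IntegrableOn (fun x => g x ^ 2) A μ) (h : l2NormSq μ A g ≤ M) :
    ∫ x in A, g x ^ 2 ∂μ ≤ M := by
  rw [l2NormSq, ← ofReal_integral_eq_lintegral_ofReal hi
    (Eventually.of_forall fun _ => sq_nonneg _)] at h
  exact ENNReal.ofReal_le_coe.1 h

variable [NormedAddCommGroup E] [NormedSpace ℝ E] [BorelSpace E]
  [FiniteDimensional ℝ E] [μ.IsAddHaarMeasure]

lemma l2NormSq_diffQuot_le {A A' : Set E}
    (hA : IsOpen A) (hA' : IsOpen A') {g : E → ℝ} (hg : ContDiffOn ℝ ∞ g A') (b : E) {h : ℝ}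
    (hh : h ≠ 0) (hAA : ∀ x ∈ A, ∀ s ∈ Icc (0 : ℝ) 1, x + (s * h) • b ∈ A') :
    l2NormSq μ A (diffQuot h b g) ≤ l2NormSq μ A' (fun x => fderiv ℝ g x b) := by
  set F : E → ℝ≥0∞ := A'.indicator (fun x => ENNReal.ofReal (fderiv ℝ g x b ^ 2)) with hF
  have hFm : Measurable F := by
    classical
    rw [hF, ← piecewise_eq_indicator]
    exact (ENNReal.continuous_ofReal.comp_continuousOn
      ((contDiffOn_dirDeriv hA' hg [b]).continuousOn.pow 2)).measurable_piecewise
      continuousOn_const hA'.measurableSet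
  have hpt : ∀ x ∈ A, ENNReal.ofReal (diffQuot h b g x ^ 2) ≤
      ∫⁻ s in Icc (0 : ℝ) 1, F (x + (s * h) • b) := fun x hx =>
    (ofReal_sq_diffQuot_le hA' hg hh (hAA x hx)).trans_eq <|
      setLIntegral_congr_fun measurableSet_Icc fun s hs =>
        (indicator_of_mem (hAA x hx s hs) fun z => ENNReal.ofReal (fderiv ℝ g z b ^ 2)).symm
  calc l2NormSq μ A (diffQuot h b g)
      ≤ ∫⁻ x in A, ∫⁻ s in Icc (0 : ℝ) 1, F (x + (s * h) • b) ∂volume ∂μ :=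
        setLIntegral_mono' hA.measurableSet hpt
    _ ≤ ∫⁻ x, ∫⁻ s in Icc (0 : ℝ) 1, F (x + (s * h) • b) ∂volume ∂μ := setLIntegral_le_lintegral _ _
    _ = ∫⁻ s in Icc (0 : ℝ) 1, ∫⁻ x, F (x + (s * h) • b) ∂μ := by
        refine lintegral_lintegral_swap (hFm.comp ?_).aemeasurable
        exact (by fun_prop : Continuous fun p : E × ℝ => p.1 + (p.2 * h) • b).measurable
    _ = ∫⁻ _ in Icc (0 : ℝ) 1, ∫⁻ x, F x ∂μ := by simp_rw [lintegral_add_right_eq_self F]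
    _ = l2NormSq μ A' (fun x => fderiv ℝ g x b) := by
        rw [setLIntegral_const]
        simp [hF, lintegral_indicator hA'.measurableSet, l2NormSq]

lemma ae_fderiv_eq_zero_of_eqOn_zero {s : Set E}
    (hs : MeasurableSet s) {w : E → ℝ} (hw : ∀ x ∈ s, DifferentiableAt ℝ w x)
    (h0 : ∀ x ∈ s, w x = 0) : ∀ᵐ x ∂(μ.restrict s), fderiv ℝ w x = 0 := by
  rcases subsingleton_or_nontrivial E with hE | hE
  · exact Eventually.of_forall fun x => ContinuousLinearMap.ext fun v => by
      rw [Subsingleton.elim v 0, map_zero, map_zero]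
  obtain ⟨b, hb⟩ := exists_ne (0 : E)
  have hA : ApproximatesLinearOn (fun x => w x • b) (0 : E →L[ℝ] E) s 0 := fun x hx y hy => by
    simp [h0 x hx, h0 y hy]
  filter_upwards [hA.norm_fderiv_sub_le μ hs (fun x => (fderiv ℝ w x).smulRight b) fun x hx =>
    ((hw x hx).hasFDerivAt.smul_const b).hasFDerivWithinAt] with x hx
  simp only [sub_zero, nonpos_iff_eq_zero, nnnorm_eq_zero] at hx
  ext v
  simpa [hb] using congrArg (fun T : E →L[ℝ] E => T v) hx

lemma ae_fderiv_eq_zero_of_eq_zero {G : Set E}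
    (hG : IsOpen G) {w : E → ℝ} (hw : ∀ x ∈ G, DifferentiableAt ℝ w x) :
    ∀ᵐ x ∂(μ.restrict G), w x = 0 → fderiv ℝ w x = 0 := by
  have hc : ContinuousOn w G := fun x hx => (hw x hx).continuousAt.continuousWithinAt
  have hs : MeasurableSet (G ∩ w ⁻¹' {0}) := by
    rw [← compl_compl {(0 : ℝ)}, preimage_compl, ← Set.sdiff_eq, ← Set.sdiff_self_inter]
    exact hG.measurableSet.diff (hc.isOpen_inter_preimage hG isOpen_compl_singleton).measurableSet
  have h := ae_fderiv_eq_zero_of_eqOn_zero μ hs (fun x hx => hw x hx.1) fun x hx => hx.2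
  rw [ae_restrict_iff' hs] at h
  rw [ae_restrict_iff' hG.measurableSet]
  filter_upwards [h] with x hx hxG hx0 using hx ⟨hxG, hx0⟩

end L2

/-! ### The Caccioppoli inequality -/

section Caccioppoli

lemma contDiff_of_support_subset_isCompact {E : Type*} [NormedAddCommGroup E] [NormedSpace ℝ E]
    {G K : Set E} (hG : IsOpen G) (hK : IsCompact K) (hKG : K ⊆ G) {g : E → ℝ}
    (hg : ContDiffOn ℝ ∞ g G) (h0 : Function.support g ⊆ K) : ContDiff ℝ ∞ g := by
  refine contDiff_iff_contDiffAt.2 fun x => ?_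
  by_cases hx : x ∈ G
  · exact hg.contDiffAt (hG.mem_nhds hx)
  · refine contDiffAt_const (c := (0 : ℝ)) |>.congr_of_eventuallyEq ?_
    filter_upwards [hK.isClosed.isOpen_compl.mem_nhds fun h => hx (hKG h)] with z hz
    exact Function.notMem_support.1 fun h => hz (h0 h)

lemma integrable_of_support_subset_isCompact {X : Type*} [TopologicalSpace X] [T2Space X]
    [MeasurableSpace X] [OpensMeasurableSpace X] (μ : Measure X) [IsFiniteMeasureOnCompacts μ]
    {G K : Set X} (hK : IsCompact K) (hKG : K ⊆ G) {g : X → ℝ} (hg : ContinuousOn g G)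
    (h0 : Function.support g ⊆ K) : Integrable g μ :=
  (integrableOn_iff_integrable_of_support_subset h0).1 ((hg.mono hKG).integrableOn_compact hK)

lemma integral_le_setIntegral_of_eq_zero_off {X : Type*} [MeasurableSpace X] {μ : Measure X}
    {G : Set X} (hG : MeasurableSet G) {f g : X → ℝ} (hf : Integrable f μ)
    (hfG : ∀ x ∉ G, f x = 0) (hg : IntegrableOn g G μ) (h : ∀ x ∈ G, f x ≤ g x) :
    ∫ x, f x ∂μ ≤ ∫ x in G, g x ∂μ := by
  rw [← setIntegral_eq_integral_of_forall_compl_eq_zero hfG]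
  exact setIntegral_mono_on hf.integrableOn hg hG h

/-- Smooth functions in the part of `B` inside `V` which satisfy the Dirichlet condition on the part
of the boundary of `V` inside `B`, expressed by continuity of the extension by zero. -/
structure IsDirichletOn {E : Type*} [NormedAddCommGroup E] [NormedSpace ℝ E] (V B : Set E)
    (w : E → ℝ) : Prop where
  continuousOn : ContinuousOn w B
  eq_zero : ∀ x ∈ B, x ∉ V → w x = 0
  contDiffOn : ContDiffOn ℝ ∞ w (V ∩ B)

/-- The test function `χ² T(w)` of the Caccioppoli inequality, where `T` is the smooth truncation
at height `ε`. -/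
def truncatedTest {E : Type*} (χ w : E → ℝ) (ε : ℝ) : E → ℝ :=
  fun x => χ x ^ 2 * smoothTruncation ε (w x)

lemma support_truncatedTest_subset {X : Type*} [TopologicalSpace X] {χ w : X → ℝ} {ε : ℝ}
    (hε : 0 < ε) :
    Function.support (truncatedTest χ w ε) ⊆ tsupport χ ∩ {x | ε ≤ |w x|} := fun x hx => by
  simp only [truncatedTest, Function.mem_support, ne_eq, mul_eq_zero, not_or] at hx
  refine ⟨subset_tsupport χ fun h => hx.1 (by rw [h, zero_pow two_ne_zero]), ?_⟩
  exact (not_le.1 fun h => hx.2 (smoothTruncation_eq_zero hε h)).le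

/-- The part `χ² T'(w) |∇w|²` of `∇(χ² T(w)) · ∇w` that carries the energy of `w`. -/
def truncatedEnergy {E ι : Type*} [NormedAddCommGroup E] [NormedSpace ℝ E] [Fintype ι] (b : ι → E)
    (χ w : E → ℝ) (ε : ℝ) : E → ℝ :=
  fun x => χ x ^ 2 * truncationSlope ε (w x) * ∑ i, fderiv ℝ w x (b i) ^ 2

variable {E ι : Type*} [NormedAddCommGroup E] [NormedSpace ℝ E]
  {A B G V : Set E} {χ w : E → ℝ} {ε K : ℝ}

lemma half_mul_sub_le_of_sq_le {x c t p d φ : ℝ} (hp : 0 ≤ p) (hc : |c| ≤ K)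
    (hφ : φ ^ 2 ≤ t ^ 2 * p) :
    1 / 2 * (x ^ 2 * p * d ^ 2) - 2 * K ^ 2 * t ^ 2 ≤
      (2 * x * c * φ + x ^ 2 * (p * d)) * d := by
  have hcK : c ^ 2 ≤ K ^ 2 := sq_le_sq.2 (hc.trans (le_abs_self K))
  -- AM-GM: `2 x c φ d` is bounded by the geometric mean of `4 K² t²` and `x² p d²`.
  have hsq : (2 * x * c * φ * d) ^ 2 ≤ (1 / 2 * (x ^ 2 * p * d ^ 2) + 2 * K ^ 2 * t ^ 2) ^ 2 := by
    calc (2 * x * c * φ * d) ^ 2 = 4 * x ^ 2 * d ^ 2 * (c ^ 2 * φ ^ 2) := by ring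
      _ ≤ 4 * x ^ 2 * d ^ 2 * (K ^ 2 * (t ^ 2 * p)) := by gcongr
      _ ≤ (1 / 2 * (x ^ 2 * p * d ^ 2) + 2 * K ^ 2 * t ^ 2) ^ 2 := by
        linarith [sq_nonneg (1 / 2 * (x ^ 2 * p * d ^ 2) - 2 * K ^ 2 * t ^ 2)]
  linarith [(abs_le.1 (abs_le_of_sq_le_sq hsq (by positivity))).1]

lemma sq_add_le_of_sq_le {x c t p d φ : ℝ} (hx : x ^ 2 ≤ 1) (hp : 0 ≤ p) (hp1 : p ≤ 1)
    (hc : |c| ≤ K) (hφ : φ ^ 2 ≤ t ^ 2) :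
    (2 * x * c * φ + x ^ 2 * (p * d)) ^ 2 ≤ 2 * (x ^ 2 * p * d ^ 2) + 8 * K ^ 2 * t ^ 2 := by
  have hcK : c ^ 2 ≤ K ^ 2 := sq_le_sq.2 (hc.trans (le_abs_self K))
  calc (2 * x * c * φ + x ^ 2 * (p * d)) ^ 2
      ≤ 2 * (x ^ 2 * p * d ^ 2 * (x ^ 2 * p)) + 8 * (x ^ 2 * (c ^ 2 * φ ^ 2)) := by
        linarith [sq_nonneg (2 * x * c * φ - x ^ 2 * (p * d))]
    _ ≤ 2 * (x ^ 2 * p * d ^ 2 * (1 * 1)) + 8 * (1 * (K ^ 2 * t ^ 2)) := by gcongr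
    _ = 2 * (x ^ 2 * p * d ^ 2) + 8 * K ^ 2 * t ^ 2 := by ring

lemma fderiv_truncatedTest {x : E} (hχ : DifferentiableAt ℝ χ x) (hw : DifferentiableAt ℝ w x)
    (v : E) :
    fderiv ℝ (truncatedTest χ w ε) x v =
      2 * χ x * fderiv ℝ χ x v * smoothTruncation ε (w x) +
        χ x ^ 2 * (truncationSlope ε (w x) * fderiv ℝ w x v) := by
  have hT := (hasDerivAt_smoothTruncation ε (w x)).comp_hasFDerivAt x hw.hasFDerivAt
  rw [HasFDerivAt.fderiv (f := truncatedTest χ w ε) ((hχ.hasFDerivAt.pow 2).mul hT)]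
  simp
  ring

lemma half_mul_truncatedEnergy_sub_le [Fintype ι] (b : ι → E) {x : E}
    (hχ : DifferentiableAt ℝ χ x) (hw : DifferentiableAt ℝ w x)
    (hK : ∀ i, |fderiv ℝ χ x (b i)| ≤ K) :
    1 / 2 * truncatedEnergy b χ w ε x - 2 * (Fintype.card ι * K ^ 2) * w x ^ 2 ≤
      ∑ i, fderiv ℝ (truncatedTest χ w ε) x (b i) * fderiv ℝ w x (b i) := by
  calc _ = ∑ i, (1 / 2 * (χ x ^ 2 * truncationSlope ε (w x) * fderiv ℝ w x (b i) ^ 2)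
          - 2 * K ^ 2 * w x ^ 2) := by
        rw [Finset.sum_sub_distrib, ← Finset.mul_sum, ← Finset.mul_sum, truncatedEnergy,
          Finset.sum_const, Finset.card_univ, nsmul_eq_mul]
        ring
    _ ≤ _ := Finset.sum_le_sum fun i _ => by
        rw [fderiv_truncatedTest hχ hw]
        exact half_mul_sub_le_of_sq_le (truncationSlope_nonneg _ _) (hK i)
          (sq_smoothTruncation_le _ _)

lemma sum_sq_fderiv_truncatedTest_le [Fintype ι] (b : ι → E) {x : E} (hχ : IsCutoff A B χ)
    (hw : DifferentiableAt ℝ w x) (hK : ∀ i, |fderiv ℝ χ x (b i)| ≤ K) :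
    ∑ i, fderiv ℝ (truncatedTest χ w ε) x (b i) ^ 2 ≤
      2 * truncatedEnergy b χ w ε x + 8 * (Fintype.card ι * K ^ 2) * w x ^ 2 := by
  calc _ ≤ ∑ i, (2 * (χ x ^ 2 * truncationSlope ε (w x) * fderiv ℝ w x (b i) ^ 2)
          + 8 * K ^ 2 * w x ^ 2) := Finset.sum_le_sum fun i _ => by
        rw [fderiv_truncatedTest (hχ.differentiableAt x) hw]
        exact sq_add_le_of_sq_le (hχ.sq_le_one x) (truncationSlope_nonneg _ _)
          (truncationSlope_le_one _ _) (hK i) (sq_smoothTruncation_le_sq _ _)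
    _ = _ := by
        rw [Finset.sum_add_distrib, ← Finset.mul_sum, ← Finset.mul_sum, truncatedEnergy,
          Finset.sum_const, Finset.card_univ, nsmul_eq_mul]
        ring

lemma sq_truncatedTest_le (hχ : IsCutoff A B χ) (x : E) : truncatedTest χ w ε x ^ 2 ≤ w x ^ 2 := by
  rw [truncatedTest, mul_pow]
  exact (mul_le_of_le_one_left (sq_nonneg _) (pow_le_one₀ (sq_nonneg _) (hχ.sq_le_one x))).trans
    (sq_smoothTruncation_le_sq _ _)

lemma isCompact_tsupport_inter_le_abs (hχ : IsCutoff A B χ) (hw : ContinuousOn w B) (ε : ℝ) :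
    IsCompact (tsupport χ ∩ {x | ε ≤ |w x|}) :=
  hχ.hasCompactSupport.isCompact.of_isClosed_subset
    ((hw.mono hχ.tsupport_subset).abs.preimage_isClosed_of_isClosed (isClosed_tsupport χ)
      (isClosed_Ici (a := ε))) inter_subset_left

lemma tsupport_inter_le_abs_subset (hχ : IsCutoff A B χ) (hw : IsDirichletOn V B w) (hε : 0 < ε) :
    tsupport χ ∩ {x | ε ≤ |w x|} ⊆ V ∩ B := fun x ⟨hx, (hεx : ε ≤ |w x|)⟩ => by
  refine ⟨by_contra fun hV => ?_, hχ.tsupport_subset hx⟩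
  rw [hw.eq_zero x (hχ.tsupport_subset hx) hV, abs_zero] at hεx
  exact hε.not_ge hεx

lemma support_truncatedEnergy_subset [Fintype ι] (b : ι → E) (hε : 0 < ε) :
    Function.support (truncatedEnergy b χ w ε) ⊆ tsupport χ ∩ {x | ε ≤ |w x|} := fun x hx => by
  simp only [truncatedEnergy, Function.mem_support, ne_eq, mul_eq_zero, not_or] at hx
  refine ⟨subset_tsupport χ fun h => hx.1.1 (by rw [h, zero_pow two_ne_zero]), ?_⟩
  exact (not_le.1 fun h => hx.1.2 (truncationSlope_eq_zero hε h)).le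

lemma continuousOn_truncatedEnergy [Fintype ι] (b : ι → E) (hχ : IsCutoff A B χ) (hG : IsOpen G)
    (hw : ContDiffOn ℝ ∞ w G) : ContinuousOn (truncatedEnergy b χ w ε) G :=
  ((hχ.contDiff.continuous.continuousOn.pow 2).mul
    ((contDiff_truncationSlope ε).continuous.comp_continuousOn hw.continuousOn)).mul <|
    continuousOn_finsetSum _ fun i _ => (contDiffOn_dirDeriv hG hw [b i]).continuousOn.pow 2

lemma contDiff_truncatedTest (hV : IsOpen V) (hB : IsOpen B) (hχ : IsCutoff A B χ)
    (hw : IsDirichletOn V B w) (hε : 0 < ε) : ContDiff ℝ ∞ (truncatedTest χ w ε) :=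
  contDiff_of_support_subset_isCompact (hV.inter hB)
    (isCompact_tsupport_inter_le_abs hχ hw.continuousOn ε) (tsupport_inter_le_abs_subset hχ hw hε)
    ((hχ.contDiff.contDiffOn.pow 2).mul
      ((contDiff_smoothTruncation ε).comp_contDiffOn hw.contDiffOn))
    (support_truncatedTest_subset hε)

lemma tsupport_truncatedTest_subset (hχ : IsCutoff A B χ) (hw : ContinuousOn w B) (hε : 0 < ε) :
    tsupport (truncatedTest χ w ε) ⊆ tsupport χ ∩ {x | ε ≤ |w x|} :=
  closure_minimal (support_truncatedTest_subset hε)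
    (isCompact_tsupport_inter_le_abs hχ hw ε).isClosed

lemma continuous_fderiv_truncatedTest (hV : IsOpen V) (hB : IsOpen B) (hχ : IsCutoff A B χ)
    (hw : IsDirichletOn V B w) (hε : 0 < ε) (v : E) :
    Continuous fun x => fderiv ℝ (truncatedTest χ w ε) x v :=
  ((contDiff_truncatedTest hV hB hχ hw hε).continuous_fderiv (by simp)).clm_apply continuous_const

variable [MeasurableSpace E] [BorelSpace E] (μ : Measure E)

lemma integrable_of_eq_zero_off_tsupport_truncatedTest [IsFiniteMeasureOnCompacts μ]
    (hχ : IsCutoff A B χ) (hw : IsDirichletOn V B w) (hε : 0 < ε) {f : E → ℝ}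
    (hf : ContinuousOn f (V ∩ B)) (h0 : ∀ x ∉ tsupport (truncatedTest χ w ε), f x = 0) :
    Integrable f μ :=
  integrable_of_support_subset_isCompact μ
    (isCompact_tsupport_inter_le_abs hχ hw.continuousOn ε)
    (tsupport_inter_le_abs_subset hχ hw hε) hf
    fun x hx => tsupport_truncatedTest_subset hχ hw.continuousOn hε
      (by_contra fun h => hx (h0 x h))

lemma integrableOn_truncatedEnergy [IsFiniteMeasureOnCompacts μ] [Fintype ι] (b : ι → E)
    (hV : IsOpen V) (hB : IsOpen B) (hχ : IsCutoff A B χ) (hw : IsDirichletOn V B w)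
    (hε : 0 < ε) : IntegrableOn (truncatedEnergy b χ w ε) (V ∩ B) μ :=
  (integrable_of_support_subset_isCompact μ (isCompact_tsupport_inter_le_abs hχ hw.continuousOn ε)
    (tsupport_inter_le_abs_subset hχ hw hε)
    (continuousOn_truncatedEnergy b hχ (hV.inter hB) hw.contDiffOn)
    (support_truncatedEnergy_subset b hε)).integrableOn

section

variable [IsFiniteMeasureOnCompacts μ] [Fintype ι] (b : ι → E) (hV : IsOpen V) (hB : IsOpen B)
  (hχ : IsCutoff A B χ) (hw : IsDirichletOn V B w) (hε : 0 < ε)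
include hV hB hχ hw hε

lemma integral_sq_truncatedTest_le (hwi : IntegrableOn (fun x => w x ^ 2) (V ∩ B) μ) :
    ∫ x, truncatedTest χ w ε x ^ 2 ∂μ ≤ ∫ x in V ∩ B, w x ^ 2 ∂μ := by
  have hψG := (tsupport_truncatedTest_subset hχ hw.continuousOn hε).trans
    (tsupport_inter_le_abs_subset hχ hw hε)
  refine integral_le_setIntegral_of_eq_zero_off (hV.inter hB).measurableSet ?_
    (fun x hx => ?_) hwi fun x _ => sq_truncatedTest_le hχ x
  · refine integrable_of_eq_zero_off_tsupport_truncatedTest μ hχ hw hε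
      ((contDiff_truncatedTest hV hB hχ hw hε).continuous.pow 2).continuousOn fun x hx => ?_
    rw [image_eq_zero_of_notMem_tsupport hx, zero_pow two_ne_zero]
  · rw [image_eq_zero_of_notMem_tsupport fun h => hx (hψG h), zero_pow two_ne_zero]

variable (hK : ∀ x i, |fderiv ℝ χ x (b i)| ≤ K)
  (hwi : IntegrableOn (fun x => w x ^ 2) (V ∩ B) μ)
include hK hwi

lemma half_mul_setIntegral_truncatedEnergy_sub_le :
    1 / 2 * ∫ x in V ∩ B, truncatedEnergy b χ w ε x ∂μ -
        2 * (Fintype.card ι * K ^ 2) * ∫ x in V ∩ B, w x ^ 2 ∂μ ≤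
      ∫ x, ∑ i, fderiv ℝ (truncatedTest χ w ε) x (b i) * fderiv ℝ w x (b i) ∂μ := by
  have hG : IsOpen (V ∩ B) := hV.inter hB
  have hE := integrableOn_truncatedEnergy μ b hV hB hχ hw hε
  have hψG := (tsupport_truncatedTest_subset hχ hw.continuousOn hε).trans
    (tsupport_inter_le_abs_subset hχ hw hε)
  set D : E → ℝ := fun x => ∑ i, fderiv ℝ (truncatedTest χ w ε) x (b i) * fderiv ℝ w x (b i)
    with hD
  have hD0 : ∀ x ∉ tsupport (truncatedTest χ w ε), -D x = 0 := fun x hx => by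
    simp [hD, fderiv_of_notMem_tsupport (𝕜 := ℝ) hx]
  have hDc : ContinuousOn (fun x => -D x) (V ∩ B) :=
    (continuousOn_finsetSum _ fun i _ =>
      (continuous_fderiv_truncatedTest hV hB hχ hw hε (b i)).continuousOn.mul
        (contDiffOn_dirDeriv hG hw.contDiffOn [b i]).continuousOn).neg
  have h := integral_le_setIntegral_of_eq_zero_off hG.measurableSet
    (integrable_of_eq_zero_off_tsupport_truncatedTest μ hχ hw hε hDc hD0)
    (fun x hx => hD0 x fun h => hx (hψG h))
    ((hwi.const_mul (2 * (Fintype.card ι * K ^ 2))).sub (hE.const_mul (1 / 2))) fun x hx => by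
      have hle : _ ≤ D x := half_mul_truncatedEnergy_sub_le b (hχ.differentiableAt x)
        ((hw.contDiffOn.differentiableOn (by simp)).differentiableAt (hG.mem_nhds hx)) (hK x)
      simp only [Pi.sub_apply]
      linarith
  simp only [Pi.sub_apply] at h
  rw [integral_sub (hwi.const_mul _) (hE.const_mul _), integral_const_mul, integral_const_mul,
    integral_neg] at h
  linarith

lemma sum_integral_sq_fderiv_truncatedTest_le :
    ∑ i, ∫ x, fderiv ℝ (truncatedTest χ w ε) x (b i) ^ 2 ∂μ ≤
      2 * ∫ x in V ∩ B, truncatedEnergy b χ w ε x ∂μ +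
        8 * (Fintype.card ι * K ^ 2) * ∫ x in V ∩ B, w x ^ 2 ∂μ := by
  have hG : IsOpen (V ∩ B) := hV.inter hB
  have hE := integrableOn_truncatedEnergy μ b hV hB hχ hw hε
  have hψG := (tsupport_truncatedTest_subset hχ hw.continuousOn hε).trans
    (tsupport_inter_le_abs_subset hχ hw hε)
  have hi (i) : Integrable (fun x => fderiv ℝ (truncatedTest χ w ε) x (b i) ^ 2) μ :=
    integrable_of_eq_zero_off_tsupport_truncatedTest μ hχ hw hε
      ((continuous_fderiv_truncatedTest hV hB hχ hw hε (b i)).pow 2).continuousOn fun x hx => by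
        simp [fderiv_of_notMem_tsupport (𝕜 := ℝ) hx]
  rw [← integral_finsetSum _ fun i _ => hi i, ← integral_const_mul, ← integral_const_mul,
    ← integral_add (hE.const_mul 2) (hwi.const_mul _)]
  exact integral_le_setIntegral_of_eq_zero_off hG.measurableSet
    (integrable_finsetSum Finset.univ fun i _ => hi i)
    (fun x hx => by simp [fderiv_of_notMem_tsupport (𝕜 := ℝ) fun h => hx (hψG h)])
    ((hE.const_mul 2).add (hwi.const_mul _)) fun x hx =>
      sum_sq_fderiv_truncatedTest_le b hχ
        ((hw.contDiffOn.differentiableOn (by simp)).differentiableAt (hG.mem_nhds hx)) (hK x)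

end

variable [FiniteDimensional ℝ E] [μ.IsAddHaarMeasure]

lemma integral_mul_frameLaplacian [Fintype ι] (b : ι → E) (hG : IsOpen G) {ψ : E → ℝ}
    (hψ : ContDiff ℝ ∞ ψ) (hψc : HasCompactSupport ψ) (hψG : tsupport ψ ⊆ G)
    (hw : ContDiffOn ℝ ∞ w G) :
    ∫ x, ψ x * frameLaplacian b w x ∂μ =
      -∫ x, ∑ i, fderiv ℝ ψ x (b i) * fderiv ℝ w x (b i) ∂μ := by
  have hint {g f : E → ℝ} (hg : Continuous g) (hgψ : Function.support g ⊆ tsupport ψ)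
      (hf : ContinuousOn f G) : Integrable (fun x => g x * f x) μ :=
    integrable_of_support_subset_isCompact μ hψc.isCompact hψG (hg.continuousOn.mul hf)
      ((Function.support_mul_subset_left g f).trans hgψ)
  have hdw (i : ι) := contDiffOn_dirDeriv hG hw [b i]
  have hψw (i : ι) := hint hψ.continuous (subset_tsupport ψ)
    (contDiffOn_dirDeriv hG hw [b i, b i]).continuousOn
  have hdψw (i : ι) : Integrable (fun x => fderiv ℝ ψ x (b i) * fderiv ℝ w x (b i)) μ :=
    hint ((hψ.continuous_fderiv (by simp)).clm_apply continuous_const)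
      ((subset_tsupport _).trans (tsupport_fderiv_apply_subset ℝ (b i))) (hdw i).continuousOn
  simp only [frameLaplacian, Finset.mul_sum]
  rw [integral_finsetSum _ fun i _ => hψw i, integral_finsetSum _ fun i _ => hdψw i,
    ← Finset.sum_neg_distrib]
  exact Finset.sum_congr rfl fun i _ =>
    integral_mul_fderiv_eq_neg_fderiv_mul_of_integrable (hdψw i) (hψw i)
      (hint hψ.continuous (subset_tsupport ψ) (hdw i).continuousOn)
      (fun x _ => hψ.differentiable (by simp) x)
      fun x hx => ((hdw i).contDiffAt (hG.mem_nhds (hψG hx))).differentiableAt (by simp)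

/-- A bound for `f` as a functional on test functions supported in `G`, by a small multiple of the
`H¹` norm. The constants are those for which the bound can be absorbed in the Caccioppoli
inequality; it holds for `f` in `L²` and for difference quotients of functions in `L²`. -/
def DualEnergyBound [Fintype ι] (b : ι → E) (G : Set E) (f : E → ℝ) (M : ℝ) : Prop :=
  ∀ ψ : E → ℝ, ContDiff ℝ ∞ ψ → HasCompactSupport ψ → tsupport ψ ⊆ G →
    |∫ x, ψ x * f x ∂μ| ≤
      2 * M + 1 / 8 * ∑ i, ∫ x, fderiv ℝ ψ x (b i) ^ 2 ∂μ + 1 / 2 * ∫ x, ψ x ^ 2 ∂μ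

section

variable [Fintype ι] {b : ι → E} {μ} (hV : IsOpen V) (hB : IsOpen B) (hχ : IsCutoff A B χ)
  (hw : IsDirichletOn V B w) (hK : ∀ x i, |fderiv ℝ χ x (b i)| ≤ K)
  (hwi : IntegrableOn (fun x => w x ^ 2) (V ∩ B) μ)
include hV hB hχ hw hK hwi

lemma setIntegral_truncatedEnergy_le (hε : 0 < ε) {M : ℝ}
    (hdual : DualEnergyBound μ b (V ∩ B) (frameLaplacian b w) M) :
    ∫ x in V ∩ B, truncatedEnergy b χ w ε x ∂μ ≤
      2 * (6 * (Fintype.card ι * K ^ 2) + 1) * ∫ x in V ∩ B, w x ^ 2 ∂μ + 8 * M := by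
  have hψ := contDiff_truncatedTest hV hB hχ hw hε
  have hψK := tsupport_truncatedTest_subset hχ hw.continuousOn hε
  have hψG := hψK.trans (tsupport_inter_le_abs_subset hχ hw hε)
  have hψc : HasCompactSupport (truncatedTest χ w ε) :=
    (isCompact_tsupport_inter_le_abs hχ hw.continuousOn ε).of_isClosed_subset isClosed_closure hψK
  have h := hdual _ hψ hψc hψG
  rw [integral_mul_frameLaplacian μ b (hV.inter hB) hψ hψc hψG hw.contDiffOn, abs_neg] at h
  linarith [half_mul_setIntegral_truncatedEnergy_sub_le μ b hV hB hχ hw hε hK hwi,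
    sum_integral_sq_fderiv_truncatedTest_le μ b hV hB hχ hw hε hK hwi,
    integral_sq_truncatedTest_le μ hV hB hχ hw hε hwi, le_of_abs_le h]

lemma l2NormSq_fderiv_le_of_dualEnergyBound {M : ℝ} (hA : IsOpen A) (hAB : A ⊆ B)
    (hdual : DualEnergyBound μ b (V ∩ B) (frameLaplacian b w) M) (i : ι) :
    l2NormSq μ (V ∩ A) (fun x => fderiv ℝ w x (b i)) ≤ ENNReal.ofReal
      (2 * (6 * (Fintype.card ι * K ^ 2) + 1) * ∫ x in V ∩ B, w x ^ 2 ∂μ + 8 * M) := by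
  have hG : IsOpen (V ∩ A) := hV.inter hA
  have hwA : ContDiffOn ℝ ∞ w (V ∩ A) := hw.contDiffOn.mono (inter_subset_inter_right _ hAB)
  set ε : ℕ → ℝ := fun k => 1 / (k + 1)
  have hε (k) : 0 < ε k := by positivity
  refine lintegral_le_of_ae_tendsto (g := fun k x =>
    ENNReal.ofReal (truncationSlope (ε k) (w x) * fderiv ℝ w x (b i) ^ 2)) (fun k => ?_) ?_
    fun k => ?_
  · refine ContinuousOn.aemeasurable ?_ hG.measurableSet
    exact ENNReal.continuous_ofReal.comp_continuousOn
      (((contDiff_truncationSlope _).continuous.comp_continuousOn hwA.continuousOn).mul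
        ((contDiffOn_dirDeriv hG hwA [b i]).continuousOn.pow 2))
  · filter_upwards [ae_fderiv_eq_zero_of_eq_zero μ hG fun x hx =>
      (hwA.differentiableOn (by simp)).differentiableAt (hG.mem_nhds hx)] with x hx
    by_cases h0 : w x = 0
    · simp [hx h0]
    · have hlim : Tendsto (fun k => 2 * ε k) atTop (𝓝 0) := by
        simpa only [mul_zero] using (tendsto_one_div_add_atTop_nhds_zero_nat (𝕜 := ℝ)).const_mul 2
      refine tendsto_const_nhds.congr' ?_
      filter_upwards [hlim.eventually_lt_const (abs_pos.2 h0)] with k hk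
      rw [truncationSlope_eq_one (hε k) hk.le, one_mul]
  · calc _ ≤ ∫⁻ x in V ∩ A, ENNReal.ofReal (truncatedEnergy b χ w (ε k) x) ∂μ := by
          refine setLIntegral_mono' hG.measurableSet fun x hx => ENNReal.ofReal_le_ofReal ?_
          rw [truncatedEnergy, hχ.eq_one x hx.2, one_pow, one_mul]
          gcongr
          · exact truncationSlope_nonneg _ _
          · exact Finset.single_le_sum (f := fun i => fderiv ℝ w x (b i) ^ 2)
              (fun i _ => sq_nonneg _) (Finset.mem_univ i)
      _ ≤ ∫⁻ x in V ∩ B, ENNReal.ofReal (truncatedEnergy b χ w (ε k) x) ∂μ :=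
          lintegral_mono_set (inter_subset_inter_right V hAB)
      _ = ENNReal.ofReal (∫ x in V ∩ B, truncatedEnergy b χ w (ε k) x ∂μ) :=
          (ofReal_integral_eq_lintegral_ofReal
            (integrableOn_truncatedEnergy μ b hV hB hχ hw (hε k))
            (Eventually.of_forall fun x => mul_nonneg (mul_nonneg (sq_nonneg _)
              (truncationSlope_nonneg _ _)) (Finset.sum_nonneg fun i _ => sq_nonneg _))).symm
      _ ≤ _ := ENNReal.ofReal_le_ofReal
          (setIntegral_truncatedEnergy_le hV hB hχ hw hK hwi (hε k) hdual)

end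

theorem exists_caccioppoli (ι : Type*) [Fintype ι] {ρ ρ' : ℝ} (hρ : 0 < ρ) (hρ' : ρ < ρ') :
    ∃ C : ℝ≥0, ∀ {V : Set E} {y : E} {R : ℝ} {b : ι → E} {w : E → ℝ} {M : ℝ≥0}, IsOpen V →
      0 < R → (∀ i, ‖b i‖ ≤ R) → IsDirichletOn V (ball y (ρ' * R)) w →
      DualEnergyBound μ b (V ∩ ball y (ρ' * R)) (frameLaplacian b w) M →
      l2NormSq μ (V ∩ ball y (ρ' * R)) w ≤ M →
      ∀ i, l2NormSq μ (V ∩ ball y (ρ * R)) (fun x => fderiv ℝ w x (b i)) ≤ (C * M : ℝ≥0) := by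
  obtain ⟨K, -, hcut⟩ := exists_isCutoff_fderiv_le E hρ hρ'
  refine ⟨2 * (6 * (Fintype.card ι * Real.toNNReal (K ^ 2)) + 1) + 8, ?_⟩
  intro V y R b w M hV hR hb hw hdual hM i
  obtain ⟨χ, hχ, hK⟩ := hcut y R hR
  have hwi := integrableOn_sq_of_l2NormSq_le μ (hV.inter isOpen_ball).measurableSet
    hw.contDiffOn.continuousOn hM
  refine (l2NormSq_fderiv_le_of_dualEnergyBound hV isOpen_ball hχ hw (fun x i => hK x _ (hb i)) hwi
    isOpen_ball (ball_subset_ball (by gcongr)) hdual i).trans (ENNReal.ofReal_le_coe.2 ?_)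
  have hI := setIntegral_sq_le_of_l2NormSq_le μ hwi hM
  push_cast
  rw [Real.coe_toNNReal _ (sq_nonneg K), add_mul]
  gcongr

end Caccioppoli

/-! ### Tangential regularity -/

section L2Pairing

variable {X : Type*} [MeasurableSpace X] {μ : Measure X} {G : Set X} {f g φ ψ : X → ℝ} {M : ℝ≥0}

lemma abs_integral_mul_le_of_memLp_two (hφ : MemLp φ 2 μ) (hf : MemLp f 2 μ) {a : ℝ} (ha : 0 < a) :
    |∫ x, φ x * f x ∂μ| ≤ a * ∫ x, f x ^ 2 ∂μ + 1 / (4 * a) * ∫ x, φ x ^ 2 ∂μ := by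
  rw [← integral_const_mul, ← integral_const_mul,
    ← integral_add (hf.integrable_sq.const_mul a) (hφ.integrable_sq.const_mul _),
    ← Real.norm_eq_abs]
  refine norm_integral_le_of_norm_le
    ((hf.integrable_sq.const_mul a).add (hφ.integrable_sq.const_mul _))
    (Eventually.of_forall fun x => ?_)
  rw [Real.norm_eq_abs, abs_le']
  have hplus : 0 ≤ a * (f x + 1 / (2 * a) * φ x) ^ 2 := by positivity
  have hminus : 0 ≤ a * (f x - 1 / (2 * a) * φ x) ^ 2 := by positivity
  field_simp at hplus hminus ⊢
  constructor <;> linarith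

variable [TopologicalSpace X]

lemma integral_mul_indicator (hψG : tsupport ψ ⊆ G) (f : X → ℝ) :
    ∫ x, ψ x * G.indicator f x ∂μ = ∫ x, ψ x * f x ∂μ := by
  congr 1 with x
  by_cases hx : x ∈ G
  · rw [indicator_of_mem hx]
  · rw [image_eq_zero_of_notMem_tsupport fun h => hx (hψG h), zero_mul, zero_mul]

variable [OpensMeasurableSpace X]

lemma memLp_two_indicator_of_l2NormSq_le (hG : MeasurableSet G) (hg : ContinuousOn g G)
    (h : l2NormSq μ G g ≤ M) : MemLp (G.indicator g) 2 μ := by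
  rw [memLp_indicator_iff_restrict hG,
    memLp_two_iff_integrable_sq (hg.aestronglyMeasurable hG)]
  exact integrableOn_sq_of_l2NormSq_le μ hG hg h

lemma integral_sq_indicator_le_of_l2NormSq_le (hG : MeasurableSet G) (hg : ContinuousOn g G)
    (h : l2NormSq μ G g ≤ M) : ∫ x, G.indicator g x ^ 2 ∂μ ≤ M := by
  refine le_of_eq_of_le ?_
    (setIntegral_sq_le_of_l2NormSq_le μ (integrableOn_sq_of_l2NormSq_le μ hG hg h) h)
  rw [← integral_indicator hG]
  congr 1 with x
  by_cases hx : x ∈ G <;> simp [hx]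

end L2Pairing

section DualEnergy

variable {E ι : Type*} [NormedAddCommGroup E] [NormedSpace ℝ E] [MeasurableSpace E]
  {μ : Measure E} [Fintype ι] {b : ι → E} {G G' : Set E} {f g φ ψ : E → ℝ} {M : ℝ≥0}

lemma dualEnergyBound_congr (h : EqOn f g G) {M : ℝ} (hg : DualEnergyBound μ b G g M) :
    DualEnergyBound μ b G f M := fun ψ hψ hψc hψG => by
  rw [← integral_mul_indicator hψG, indicator_congr h, integral_mul_indicator hψG]
  exact hg ψ hψ hψc hψG

variable [BorelSpace E]

lemma l2NormSq_fderiv_le_of_diffQuot_le {G G' : Set E} (hG : IsOpen G) (hGG' : G ⊆ G')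
    (hG' : IsOpen G') (hg : ContDiffOn ℝ ∞ g G') {v : E} {δ : ℝ} (hδ : 0 < δ) {B : ℝ≥0∞}
    (hs : ∀ t, |t| ≤ δ → ∀ x ∈ G, x + t • v ∈ G')
    (h : ∀ t ≠ 0, |t| ≤ δ → l2NormSq μ G (diffQuot t v g) ≤ B) :
    l2NormSq μ G (fun x => fderiv ℝ g x v) ≤ B := by
  obtain ⟨t, -, ht, htlim⟩ := exists_seq_strictAnti_tendsto' hδ
  have htδ (k) : |t k| ≤ δ := (abs_of_pos (ht k).1).trans_le (ht k).2.le
  refine lintegral_le_of_ae_tendsto (fun k => ?_) ?_ fun k => h (t k) (ht k).1.ne' (htδ k)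
  · exact (ENNReal.continuous_ofReal.comp_continuousOn
      ((contDiffOn_diffQuot hGG' (hs _ (htδ k)) hg).continuousOn.pow 2)).aemeasurable
        hG.measurableSet
  · filter_upwards [ae_restrict_mem hG.measurableSet] with x hx
    have hx' := (hg.differentiableOn (by simp)).differentiableAt (hG'.mem_nhds (hGG' hx))
    have hlim := (tendsto_diffQuot hx' v).comp
      (tendsto_nhdsWithin_iff.2 ⟨htlim, Eventually.of_forall fun k => (ht k).1.ne'⟩)
    exact (ENNReal.continuous_ofReal.tendsto _).comp (hlim.pow 2)

variable (μ)

lemma memLp_two_of_contDiff [IsFiniteMeasureOnCompacts μ] (hψ : ContDiff ℝ ∞ ψ)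
    (hψc : HasCompactSupport ψ) : MemLp ψ 2 μ :=
  hψ.continuous.memLp_of_hasCompactSupport hψc

lemma dualEnergyBound_of_l2NormSq_le [IsFiniteMeasureOnCompacts μ] (b : ι → E)
    (hG : MeasurableSet G) (hf : ContinuousOn f G) (h : l2NormSq μ G f ≤ M) :
    DualEnergyBound μ b G f M := fun ψ hψ hψc hψG => by
  have hψf := abs_integral_mul_le_of_memLp_two (memLp_two_of_contDiff μ hψ hψc)
    (memLp_two_indicator_of_l2NormSq_le hG hf h) (a := 1 / 2) (by norm_num)
  rw [integral_mul_indicator hψG] at hψf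
  have hsum : 0 ≤ ∑ i, ∫ x, fderiv ℝ ψ x (b i) ^ 2 ∂μ :=
    Finset.sum_nonneg fun i _ => integral_nonneg fun x => sq_nonneg _
  linarith [integral_sq_indicator_le_of_l2NormSq_le hG hf h, M.coe_nonneg]

variable {μ} in
lemma memLp_two_diffQuot [μ.IsAddRightInvariant] (hf : MemLp f 2 μ) (h : ℝ) (a : E) :
    MemLp (diffQuot h a f) 2 μ :=
  ((hf.comp_measurePreserving (measurePreserving_add_right μ (h • a))).sub hf).const_smul h⁻¹

variable {μ} in
lemma integral_mul_diffQuot [μ.IsAddRightInvariant] (hφ : MemLp φ 2 μ) (hf : MemLp f 2 μ) (h : ℝ)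
    (a : E) : ∫ x, φ x * diffQuot h a f x ∂μ = -∫ x, diffQuot (-h) a φ x * f x ∂μ := by
  have hφs : MemLp (fun x => φ (x - h • a)) 2 μ :=
    hφ.comp_measurePreserving (measurePreserving_sub_right μ _)
  have hfs : MemLp (fun x => f (x + h • a)) 2 μ :=
    hf.comp_measurePreserving (measurePreserving_add_right μ _)
  have hint : Integrable (fun x => φ x * f x) μ := hφ.integrable_mul hf
  have hint_right : Integrable (fun x => φ x * f (x + h • a)) μ := hφ.integrable_mul hfs
  have hint_left : Integrable (fun x => φ (x - h • a) * f x) μ := hφs.integrable_mul hf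
  have hshift : ∫ x, φ x * f (x + h • a) ∂μ = ∫ x, φ (x - h • a) * f x ∂μ := by
    rw [← integral_add_right_eq_self (fun x => φ (x - h • a) * f x) (h • a)]
    simp
  calc ∫ x, φ x * diffQuot h a f x ∂μ
      = ∫ x, h⁻¹ * (φ x * f (x + h • a) - φ x * f x) ∂μ := by
        congr 1 with x
        simp only [diffQuot, smul_eq_mul]
        ring
    _ = ∫ x, h⁻¹ * (φ (x - h • a) * f x - φ x * f x) ∂μ := by
        rw [integral_const_mul, integral_const_mul, integral_sub hint_right hint, hshift,
          integral_sub hint_left hint]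
    _ = -∫ x, diffQuot (-h) a φ x * f x ∂μ := by
        rw [← integral_neg]
        congr 1 with x
        simp only [diffQuot, smul_eq_mul, neg_smul, inv_neg, ← sub_eq_add_neg]
        ring

variable [FiniteDimensional ℝ E] [μ.IsAddHaarMeasure]

lemma integral_sq_diffQuot_le (hψ : ContDiff ℝ ∞ ψ) (hψc : HasCompactSupport ψ) (a : E) {h : ℝ}
    (hh : h ≠ 0) : ∫ x, diffQuot h a ψ x ^ 2 ∂μ ≤ ∫ x, fderiv ℝ ψ x a ^ 2 ∂μ := by
  have hdψ : MemLp (fun x => fderiv ℝ ψ x a) 2 μ :=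
    ((hψ.continuous_fderiv (by simp)).clm_apply continuous_const).memLp_of_hasCompactSupport
      (hψc.fderiv_apply ℝ a)
  have hle := l2NormSq_diffQuot_le μ isOpen_univ isOpen_univ hψ.contDiffOn a hh
    fun x _ s _ => mem_univ _
  simp only [l2NormSq, Measure.restrict_univ] at hle
  rw [← ofReal_integral_eq_lintegral_ofReal hdψ.integrable_sq
      (Eventually.of_forall fun _ => sq_nonneg _),
    ← ofReal_integral_eq_lintegral_ofReal
      (memLp_two_diffQuot (memLp_two_of_contDiff μ hψ hψc) h a).integrable_sq
      (Eventually.of_forall fun _ => sq_nonneg _)] at hle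
  exact (ENNReal.ofReal_le_ofReal_iff (integral_nonneg fun _ => sq_nonneg _)).1 hle

lemma dualEnergyBound_diffQuot (hGG' : G ⊆ G') (hG' : MeasurableSet G') (hg : ContinuousOn g G')
    (hM : l2NormSq μ G' g ≤ M) (τ : ι) {h : ℝ} (hh : h ≠ 0) (hs : ∀ x ∈ G, x + h • b τ ∈ G') :
    DualEnergyBound μ b G (diffQuot h (b τ) g) M := by
  have heq : EqOn (diffQuot h (b τ) g) (diffQuot h (b τ) (G'.indicator g)) G := fun x hx => by
    rw [diffQuot, diffQuot, indicator_of_mem (hGG' hx), indicator_of_mem (hs x hx)]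
  refine dualEnergyBound_congr heq fun ψ hψ hψc _ => ?_
  have hψ2 := memLp_two_of_contDiff μ hψ hψc
  have hg2 := memLp_two_indicator_of_l2NormSq_le hG' hg hM
  have hYoung := abs_integral_mul_le_of_memLp_two (memLp_two_diffQuot hψ2 (-h) (b τ)) hg2
    zero_lt_two
  rw [integral_mul_diffQuot hψ2 hg2, abs_neg]
  have hψτ := integral_sq_diffQuot_le μ hψ hψc (b τ) (neg_ne_zero.2 hh)
  have hτ := Finset.single_le_sum (f := fun i => ∫ x, fderiv ℝ ψ x (b i) ^ 2 ∂μ)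
    (fun i _ => integral_nonneg fun x => sq_nonneg _) (Finset.mem_univ τ)
  have hψ0 : 0 ≤ ∫ x, ψ x ^ 2 ∂μ := integral_nonneg fun x => sq_nonneg _
  linarith [integral_sq_indicator_le_of_l2NormSq_le hG' hg hM]

end DualEnergy

/-- The frame `b` of vectors of length at most `R` is flat for `V` in the ball `B(y, R)`: inside
this ball, `V` is invariant under translations along all frame vectors except the normal one
`b i₀`. -/
structure IsFlatFrame {E ι : Type*} [NormedAddCommGroup E] [NormedSpace ℝ E] (i₀ : ι) (V : Set E)
    (y : E) (R : ℝ) (b : ι → E) : Prop where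
  isOpen : IsOpen V
  pos : 0 < R
  norm_le : ∀ i, ‖b i‖ ≤ R
  add_smul_mem : ∀ i ≠ i₀, ∀ x ∈ ball y R, ∀ t : ℝ, x + t • b i ∈ ball y R → x ∈ V →
    x + t • b i ∈ V

section Tangential

variable {E ι : Type*} [NormedAddCommGroup E] [NormedSpace ℝ E] {i₀ : ι} {V : Set E} {y : E}
  {R ρ ρ' : ℝ} {b : ι → E} {u : E → ℝ}

namespace IsFlatFrame

variable (h : IsFlatFrame i₀ V y R b)
include h

lemma isOpen_inter (ρ : ℝ) : IsOpen (V ∩ ball y (ρ * R)) := h.isOpen.inter isOpen_ball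

lemma ball_subset (hρ : ρ ≤ ρ') : ball y (ρ * R) ⊆ ball y (ρ' * R) :=
  ball_subset_ball (by have := h.pos; gcongr)

lemma ball_subset_one (hρ : ρ ≤ 1) : ball y (ρ * R) ⊆ ball y R := by
  simpa only [one_mul] using h.ball_subset hρ

lemma inter_subset (hρ : ρ ≤ ρ') : V ∩ ball y (ρ * R) ⊆ V ∩ ball y (ρ' * R) :=
  inter_subset_inter_right _ (h.ball_subset hρ)

lemma add_smul_mem_ball (i : ι) {x : E} (hx : x ∈ ball y (ρ * R)) {t : ℝ} (ht : |t| ≤ ρ' - ρ) :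
    x + t • b i ∈ ball y (ρ' * R) := by
  rw [mem_ball_iff_norm] at hx ⊢
  have hti : ‖t • b i‖ ≤ (ρ' - ρ) * R := by
    rw [norm_smul, Real.norm_eq_abs]
    exact mul_le_mul ht (h.norm_le i) (norm_nonneg _) ((abs_nonneg t).trans ht)
  calc ‖x + t • b i - y‖ = ‖(x - y) + t • b i‖ := by congr 1; abel
    _ ≤ ‖x - y‖ + ‖t • b i‖ := norm_add_le _ _
    _ < ρ' * R := by linarith

variable (hρ' : ρ' ≤ 1) {τ : ι} (hτ : τ ≠ i₀)
include hρ' hτ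

lemma add_smul_mem_inter {x : E} (hx : x ∈ V ∩ ball y (ρ * R)) {t : ℝ} (ht : |t| ≤ ρ' - ρ) :
    x + t • b τ ∈ V ∩ ball y (ρ' * R) := by
  have hx' := h.add_smul_mem_ball τ hx.2 ht
  have hρ : ρ ≤ 1 := by linarith [abs_nonneg t]
  exact ⟨h.add_smul_mem τ hτ x (h.ball_subset_one hρ hx.2) t (h.ball_subset_one hρ' hx') hx.1, hx'⟩

lemma isDirichletOn_diffQuot (hu : IsDirichletOn V (ball y (ρ' * R)) u) {t : ℝ}
    (ht : |t| ≤ ρ' - ρ) : IsDirichletOn V (ball y (ρ * R)) (diffQuot t (b τ) u) := by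
  have hρ : ρ ≤ ρ' := by linarith [abs_nonneg t]
  refine ⟨?_, fun x hx hxV => ?_, ?_⟩
  · have hshift : ContinuousOn (fun x => u (x + t • b τ)) (ball y (ρ * R)) :=
      hu.continuousOn.comp (by fun_prop) fun x hx => h.add_smul_mem_ball τ hx ht
    exact (hshift.sub (hu.continuousOn.mono (h.ball_subset hρ))).const_smul t⁻¹
  · have hx' := h.add_smul_mem_ball τ hx ht
    have hx'V : x + t • b τ ∉ V := fun hmem => hxV <| by
      have hback : x + t • b τ + (-t) • b τ = x := by rw [neg_smul, add_neg_cancel_right]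
      have := h.add_smul_mem τ hτ _ (h.ball_subset_one hρ' hx') (-t)
      rw [hback] at this
      exact this (h.ball_subset_one (hρ.trans hρ') hx) hmem
    rw [diffQuot, hu.eq_zero x (h.ball_subset hρ hx) hxV, hu.eq_zero _ hx' hx'V, sub_zero,
      smul_zero]
  · exact contDiffOn_diffQuot (h.inter_subset hρ)
      (fun x hx => h.add_smul_mem_inter hρ' hτ hx ht) hu.contDiffOn

lemma l2NormSq_diffQuot_le [FiniteDimensional ℝ E] [MeasurableSpace E] [BorelSpace E]
    (μ : Measure E) [μ.IsAddHaarMeasure] {g : E → ℝ} (hg : ContDiffOn ℝ ∞ g (V ∩ ball y (ρ' * R)))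
    {t : ℝ} (ht₀ : t ≠ 0) (ht : |t| ≤ ρ' - ρ) :
    l2NormSq μ (V ∩ ball y (ρ * R)) (diffQuot t (b τ) g) ≤
      l2NormSq μ (V ∩ ball y (ρ' * R)) (fun x => fderiv ℝ g x (b τ)) := by
  refine _root_.l2NormSq_diffQuot_le μ (h.isOpen_inter ρ) (h.isOpen_inter ρ') hg (b τ) ht₀
    fun x hx s hs => h.add_smul_mem_inter hρ' hτ hx ?_
  rw [abs_mul, abs_of_nonneg hs.1]
  exact (mul_le_of_le_one_left (abs_nonneg _) hs.2).trans ht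

end IsFlatFrame

variable [MeasurableSpace E] (μ : Measure E) [Fintype ι]

/-- The data of the local regularity estimates: a function `u` satisfying the Dirichlet condition
near a flat piece of the boundary, together with a bound `M` for the squared norms of `u` in `L²`
and of `frameLaplacian b u` in the Sobolev space of order `m`, on the ball of radius `ρ * R`. -/
structure IsBoundedSolution (i₀ : ι) (V : Set E) (y : E) (R : ℝ) (b : ι → E) (ρ : ℝ) (m : ℕ)
    (u : E → ℝ) (M : ℝ≥0) : Prop where
  isFlatFrame : IsFlatFrame i₀ V y R b
  isDirichletOn : IsDirichletOn V (ball y (ρ * R)) u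
  l2NormSq_le : l2NormSq μ (V ∩ ball y (ρ * R)) u ≤ M
  l2NormSq_dirDeriv_le : ∀ L : List ι, L.length ≤ m →
    l2NormSq μ (V ∩ ball y (ρ * R)) (dirDeriv (L.map b) (frameLaplacian b u)) ≤ M

namespace IsBoundedSolution

variable {μ} {m m' : ℕ} {M : ℝ≥0} (h : IsBoundedSolution μ i₀ V y R b ρ m u M)
include h

lemma contDiffOn : ContDiffOn ℝ ∞ u (V ∩ ball y (ρ * R)) := h.isDirichletOn.contDiffOn

lemma contDiffOn_frameLaplacian :
    ContDiffOn ℝ ∞ (frameLaplacian b u) (V ∩ ball y (ρ * R)) :=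
  _root_.contDiffOn_frameLaplacian b (h.isFlatFrame.isOpen_inter ρ) h.contDiffOn

lemma l2NormSq_frameLaplacian_le :
    l2NormSq μ (V ∩ ball y (ρ * R)) (frameLaplacian b u) ≤ M :=
  h.l2NormSq_dirDeriv_le [] (Nat.zero_le m)

lemma mono_order (hm : m' ≤ m) : IsBoundedSolution μ i₀ V y R b ρ m' u M :=
  { h with l2NormSq_dirDeriv_le := fun L hL => h.l2NormSq_dirDeriv_le L (hL.trans hm) }

end IsBoundedSolution

variable [BorelSpace E] [FiniteDimensional ℝ E] [μ.IsAddHaarMeasure]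

lemma exists_l2NormSq_fderiv_le (ι : Type*) [Fintype ι] (hρ : 0 < ρ) (hρρ' : ρ < ρ') :
    ∃ C : ℝ≥0, ∀ {i₀ : ι} {V y R b u m} {M : ℝ≥0}, IsBoundedSolution μ i₀ V y R b ρ' m u M →
      ∀ i, l2NormSq μ (V ∩ ball y (ρ * R)) (fun x => fderiv ℝ u x (b i)) ≤ (C * M : ℝ≥0) := by
  obtain ⟨C, hC⟩ := exists_caccioppoli μ ι hρ hρρ'
  refine ⟨C, fun h => ?_⟩
  exact hC h.isFlatFrame.isOpen h.isFlatFrame.pos h.isFlatFrame.norm_le h.isDirichletOn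
    (dualEnergyBound_of_l2NormSq_le μ _ (h.isFlatFrame.isOpen_inter ρ').measurableSet
      h.contDiffOn_frameLaplacian.continuousOn h.l2NormSq_frameLaplacian_le) h.l2NormSq_le

lemma exists_l2NormSq_diffQuot_le (ι : Type*) [Fintype ι] (hρ : 0 < ρ) (hρρ' : ρ < ρ')
    (hρ' : ρ' ≤ 1) :
    ∃ C : ℝ≥0, 1 ≤ C ∧ ∀ {i₀ : ι} {V y R b u m} {M : ℝ≥0},
      IsBoundedSolution μ i₀ V y R b ρ' m u M → ∀ τ ≠ i₀, ∀ t ≠ 0, |t| ≤ (ρ' - ρ) / 2 →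
      l2NormSq μ (V ∩ ball y (ρ * R)) (diffQuot t (b τ) u) ≤ (C * M : ℝ≥0) := by
  obtain ⟨C, hC⟩ := exists_l2NormSq_fderiv_le μ ι (ρ := (ρ + ρ') / 2) (ρ' := ρ')
    (by linarith) (by linarith)
  refine ⟨max 1 C, le_max_left 1 C, fun {i₀ V y R b u m M} h τ hτ t ht₀ ht => ?_⟩
  have hmid : (ρ + ρ') / 2 ≤ ρ' := by linarith
  calc _ ≤ _ := h.isFlatFrame.l2NormSq_diffQuot_le (hmid.trans hρ') hτ μ
        (h.contDiffOn.mono (h.isFlatFrame.inter_subset hmid)) ht₀ (by linarith)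
    _ ≤ (C * M : ℝ≥0) := hC h τ
    _ ≤ _ := by gcongr; exact le_max_right 1 C

lemma exists_isBoundedSolution_diffQuot (ι : Type*) [Fintype ι] (hρ : 0 < ρ) (hρρ' : ρ < ρ')
    (hρ' : ρ' ≤ 1) :
    ∃ C : ℝ≥0, ∀ {i₀ : ι} {V y R b u m} {M : ℝ≥0},
      IsBoundedSolution μ i₀ V y R b ρ' (m + 1) u M → ∀ τ ≠ i₀, ∀ t ≠ 0, |t| ≤ (ρ' - ρ) / 2 →
      IsBoundedSolution μ i₀ V y R b ρ m (diffQuot t (b τ) u) (C * M) := by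
  obtain ⟨C, hC1, hC⟩ := exists_l2NormSq_diffQuot_le μ ι hρ hρρ' hρ'
  refine ⟨C, fun {i₀ V y R b u m M} h τ hτ t ht₀ ht => ?_⟩
  have hfl := h.isFlatFrame
  have ht' : |t| ≤ ρ' - ρ := by linarith [abs_nonneg t]
  have hs : ∀ x ∈ V ∩ ball y (ρ * R), x + t • b τ ∈ V ∩ ball y (ρ' * R) :=
    fun x hx => hfl.add_smul_mem_inter hρ' hτ hx ht'
  have hsub := hfl.inter_subset (V := V) hρρ'.le
  refine ⟨hfl, hfl.isDirichletOn_diffQuot hρ' hτ h.isDirichletOn ht', hC h τ hτ t ht₀ ht,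
    fun L hL => ?_⟩
  have hcomm : EqOn (dirDeriv (L.map b) (frameLaplacian b (diffQuot t (b τ) u)))
      (diffQuot t (b τ) (dirDeriv (L.map b) (frameLaplacian b u))) (V ∩ ball y (ρ * R)) :=
    (eqOn_dirDeriv (hfl.isOpen_inter ρ) (frameLaplacian_diffQuot b hsub hs (hfl.isOpen_inter ρ)
      h.contDiffOn) _).trans (dirDeriv_diffQuot hsub hs (hfl.isOpen_inter ρ)
        h.contDiffOn_frameLaplacian _)
  rw [l2NormSq_congr μ (hfl.isOpen_inter ρ).measurableSet hcomm]
  calc _ ≤ _ := hfl.l2NormSq_diffQuot_le hρ' hτ μ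
        (contDiffOn_dirDeriv (hfl.isOpen_inter ρ') h.contDiffOn_frameLaplacian _) ht₀ ht'
    _ ≤ M := h.l2NormSq_dirDeriv_le (τ :: L) (by simpa using hL)
    _ ≤ _ := by exact_mod_cast le_mul_of_one_le_left M.2 hC1

lemma exists_l2NormSq_fderiv_diffQuot_le (ι : Type*) [Fintype ι] (hρ : 0 < ρ) (hρρ' : ρ < ρ')
    (hρ' : ρ' ≤ 1) :
    ∃ C : ℝ≥0, ∀ {i₀ : ι} {V y R b u m} {M : ℝ≥0},
      IsBoundedSolution μ i₀ V y R b ρ' m u M → ∀ τ ≠ i₀, ∀ t ≠ 0, |t| ≤ (ρ' - ρ) / 4 →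
      ∀ i, l2NormSq μ (V ∩ ball y (ρ * R)) (fun x => fderiv ℝ (diffQuot t (b τ) u) x (b i)) ≤
        (C * M : ℝ≥0) := by
  set ρ₁ := (ρ + ρ') / 2 with hρ₁
  obtain ⟨C₁, hC₁1, hC₁⟩ := exists_l2NormSq_diffQuot_le μ ι (ρ := ρ₁) (by linarith)
    (by linarith) hρ'
  obtain ⟨C₂, hC₂⟩ := exists_caccioppoli μ ι (ρ' := ρ₁) hρ (by linarith)
  refine ⟨C₂ * C₁, fun {i₀ V y R b u m M} h τ hτ t ht₀ ht i => ?_⟩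
  have hfl := h.isFlatFrame
  have ht' : |t| ≤ ρ' - ρ₁ := by linarith [abs_nonneg t]
  have hs : ∀ x ∈ V ∩ ball y (ρ₁ * R), x + t • b τ ∈ V ∩ ball y (ρ' * R) :=
    fun x hx => hfl.add_smul_mem_inter hρ' hτ hx ht'
  have hsub := hfl.inter_subset (V := V) (show ρ₁ ≤ ρ' by linarith)
  have hM : l2NormSq μ (V ∩ ball y (ρ' * R)) (frameLaplacian b u) ≤ (C₁ * M : ℝ≥0) :=
    h.l2NormSq_frameLaplacian_le.trans (by exact_mod_cast le_mul_of_one_le_left M.2 hC₁1)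
  rw [mul_assoc]
  refine hC₂ hfl.isOpen hfl.pos hfl.norm_le (hfl.isDirichletOn_diffQuot hρ' hτ h.isDirichletOn ht')
    (dualEnergyBound_congr (frameLaplacian_diffQuot b hsub hs (hfl.isOpen_inter ρ₁) h.contDiffOn)
      (dualEnergyBound_diffQuot μ hsub (hfl.isOpen_inter ρ').measurableSet
        h.contDiffOn_frameLaplacian.continuousOn hM τ ht₀ hs))
    (hC₁ h τ hτ t ht₀ (by linarith)) i

/-- Regularity in tangential directions, for derivatives of order `k` and radii `ρ < ρ'`. -/
def TangentialEstimate (ι : Type*) [Fintype ι] (k : ℕ) (ρ ρ' : ℝ) : Prop :=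
  ∃ C : ℝ≥0, ∀ {i₀ : ι} {V y R b u} {M : ℝ≥0}, IsBoundedSolution μ i₀ V y R b ρ' (k - 1) u M →
    ∀ T : List ι, T.length = k → i₀ ∉ T → ∀ i,
      l2NormSq μ (V ∩ ball y (ρ * R)) (dirDeriv (b i :: T.map b) u) ≤ (C * M : ℝ≥0)

lemma exists_l2NormSq_dirDeriv_diffQuot_le (ι : Type*) [Fintype ι] (hρ : 0 < ρ) (hρρ' : ρ < ρ')
    (hρ' : ρ' ≤ 1) {k : ℕ} (ih : TangentialEstimate μ ι k ρ ((ρ + ρ') / 2)) :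
    ∃ C : ℝ≥0, ∀ {i₀ : ι} {V y R b u} {M : ℝ≥0}, IsBoundedSolution μ i₀ V y R b ρ' k u M →
      ∀ τ ≠ i₀, ∀ t ≠ 0, |t| ≤ (ρ' - ρ) / 4 → ∀ T : List ι, T.length = k → i₀ ∉ T → ∀ i,
      l2NormSq μ (V ∩ ball y (ρ * R)) (dirDeriv (b i :: T.map b) (diffQuot t (b τ) u)) ≤
        (C * M : ℝ≥0) := by
  rcases k with _ | k
  · obtain ⟨C, hC⟩ := exists_l2NormSq_fderiv_diffQuot_le μ ι hρ hρρ' hρ'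
    refine ⟨C, fun h τ hτ t ht₀ ht T hT _ => ?_⟩
    rw [List.length_eq_zero_iff.1 hT]
    exact hC h τ hτ t ht₀ ht
  · obtain ⟨C₁, hC₁⟩ := exists_isBoundedSolution_diffQuot μ ι (ρ := (ρ + ρ') / 2) (by linarith)
      (by linarith) hρ'
    obtain ⟨C₂, hC₂⟩ := ih
    refine ⟨C₂ * C₁, fun h τ hτ t ht₀ ht T hT hi₀ i => ?_⟩
    rw [mul_assoc]
    exact hC₂ (hC₁ h τ hτ t ht₀ (by linarith)) T hT hi₀ i

theorem tangentialEstimate (ι : Type*) [Fintype ι] (k : ℕ) (hρ : 0 < ρ) (hρρ' : ρ < ρ')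
    (hρ' : ρ' ≤ 1) : TangentialEstimate μ ι k ρ ρ' := by
  induction k generalizing ρ' with
  | zero =>
    obtain ⟨C, hC⟩ := exists_l2NormSq_fderiv_le μ ι hρ hρρ'
    refine ⟨C, fun h T hT _ => ?_⟩
    rw [List.length_eq_zero_iff.1 hT]
    exact hC h
  | succ k ih =>
    obtain ⟨C, hC⟩ := exists_l2NormSq_dirDeriv_diffQuot_le μ ι hρ hρρ' hρ'
      (ih (ρ' := (ρ + ρ') / 2) (by linarith) (by linarith))
    refine ⟨C, fun {i₀ V y R b u M} h T hT hi₀ i => ?_⟩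
    obtain ⟨τ, T, rfl⟩ := List.exists_cons_of_length_eq_add_one hT
    obtain ⟨hτ, hi₀⟩ := List.ne_and_not_mem_of_not_mem_cons hi₀
    have hfl := h.isFlatFrame
    have hG := hfl.isOpen_inter ρ
    have hsub := hfl.inter_subset (V := V) hρρ'.le
    have hs (t : ℝ) (ht : |t| ≤ (ρ' - ρ) / 4) (x : E) (hx : x ∈ V ∩ ball y (ρ * R)) :
        x + t • b τ ∈ V ∩ ball y (ρ' * R) :=
      hfl.add_smul_mem_inter hρ' hτ.symm hx (by linarith)
    rw [List.map_cons, l2NormSq_congr μ hG.measurableSet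
      (dirDeriv_perm hG (h.contDiffOn.mono hsub) (List.Perm.swap (b τ) (b i) (T.map b)))]
    refine l2NormSq_fderiv_le_of_diffQuot_le hG hsub (hfl.isOpen_inter ρ')
      (contDiffOn_dirDeriv (hfl.isOpen_inter ρ') h.contDiffOn _) (δ := (ρ' - ρ) / 4)
      (by linarith) hs fun t ht₀ ht => ?_
    rw [← l2NormSq_congr μ hG.measurableSet
      (dirDeriv_diffQuot hsub (hs t ht) hG h.contDiffOn (b i :: T.map b))]
    exact hC h τ hτ.symm t ht₀ ht T (by simpa using hT) hi₀ i

end Tangential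

/-! ### Control of all derivatives -/

section L2Sums

variable {X : Type*} [TopologicalSpace X] [MeasurableSpace X] [OpensMeasurableSpace X]
  (μ : Measure X) {A : Set X}

lemma aemeasurable_ofReal_sq (hA : MeasurableSet A) {g : X → ℝ} (hg : ContinuousOn g A) :
    AEMeasurable (fun x => ENNReal.ofReal (g x ^ 2)) (μ.restrict A) :=
  ((hg.pow 2).aemeasurable hA).ennreal_ofReal

lemma l2NormSq_sum_le (hA : MeasurableSet A) {κ : Type*} (s : Finset κ)
    {g : κ → X → ℝ} (hg : ∀ i ∈ s, ContinuousOn (g i) A) :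
    l2NormSq μ A (fun x => ∑ i ∈ s, g i x) ≤ s.card * ∑ i ∈ s, l2NormSq μ A (g i) := by
  simp only [l2NormSq]
  rw [← lintegral_finsetSum' _ fun i hi => aemeasurable_ofReal_sq μ hA (hg i hi),
    ← lintegral_const_mul' _ _ (by simp)]
  refine lintegral_mono fun x => ?_
  rw [← ENNReal.ofReal_sum_of_nonneg (fun i _ => sq_nonneg _), ← ENNReal.ofReal_natCast,
    ← ENNReal.ofReal_mul (by positivity)]
  exact ENNReal.ofReal_le_ofReal sq_sum_le_card_mul_sum_sq

lemma l2NormSq_sub_le (hA : MeasurableSet A) {f g : X → ℝ} (hf : ContinuousOn f A) :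
    l2NormSq μ A (fun x => f x - g x) ≤ 2 * (l2NormSq μ A f + l2NormSq μ A g) := by
  simp only [l2NormSq]
  rw [← lintegral_add_left' (aemeasurable_ofReal_sq μ hA hf), ← lintegral_const_mul' _ _ (by simp)]
  refine lintegral_mono fun x => ?_
  rw [← ENNReal.ofReal_add (sq_nonneg _) (sq_nonneg _), ← ENNReal.ofReal_ofNat 2,
    ← ENNReal.ofReal_mul zero_le_two]
  exact ENNReal.ofReal_le_ofReal (by nlinarith [sq_nonneg (f x + g x)])

end L2Sums

lemma exists_perm_append_pair {α : Type*} [DecidableEq α] {a : α} {L : List α}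
    (h : 2 ≤ L.count a) : ∃ T : List α, L.Perm (T ++ [a, a]) := by
  obtain ⟨T, hT⟩ := (List.replicate_sublist_iff.2 h).exists_perm_append
  exact ⟨T, hT.trans List.perm_append_comm⟩

section AllDerivatives

variable {E ι : Type*} [NormedAddCommGroup E] [NormedSpace ℝ E] [Fintype ι]

lemma eqOn_dirDeriv_append_pair [DecidableEq ι] (b : ι → E) {G : Set E} (hG : IsOpen G)
    {u : E → ℝ} (hu : ContDiffOn ℝ ∞ u G) (i₀ : ι) (T : List ι) :
    EqOn (dirDeriv ((T ++ [i₀, i₀]).map b) u)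
      (fun x => dirDeriv (T.map b) (frameLaplacian b u) x -
        ∑ i ∈ Finset.univ.erase i₀, dirDeriv ((T ++ [i, i]).map b) u x) G := by
  have hd (i : ι) : ContDiffOn ℝ ∞ (dirDeriv [b i, b i] u) G := contDiffOn_dirDeriv hG hu _
  have hpair : dirDeriv [b i₀, b i₀] u =
      fun x => frameLaplacian b u x - ∑ i ∈ Finset.univ.erase i₀, dirDeriv [b i, b i] u x := by
    ext x
    rw [frameLaplacian, ← Finset.add_sum_erase Finset.univ _ (Finset.mem_univ i₀)]
    ring
  simp only [List.map_append, dirDeriv_append, List.map_cons, List.map_nil]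
  rw [hpair]
  refine (dirDeriv_sub hG (contDiffOn_frameLaplacian b hG hu)
    (ContDiffOn.sum fun i _ => hd i) _).trans fun x hx => ?_
  beta_reduce
  rw [dirDeriv_sum hG _ hd _ hx]

variable [MeasurableSpace E] [BorelSpace E] (μ : Measure E)

lemma l2NormSq_dirDeriv_append_pair_le (b : ι → E) {G : Set E} (hG : IsOpen G)
    {u : E → ℝ} (hu : ContDiffOn ℝ ∞ u G) (i₀ : ι) (T : List ι) {M N : ℝ≥0}
    (hM : l2NormSq μ G (dirDeriv (T.map b) (frameLaplacian b u)) ≤ M)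
    (hN : ∀ i ≠ i₀, l2NormSq μ G (dirDeriv ((T ++ [i, i]).map b) u) ≤ N) :
    l2NormSq μ G (dirDeriv ((T ++ [i₀, i₀]).map b) u) ≤
      (2 * (M + Fintype.card ι ^ 2 * N) : ℝ≥0) := by
  classical
  have hd (L : List E) : ContDiffOn ℝ ∞ (dirDeriv L u) G := contDiffOn_dirDeriv hG hu L
  set s := (Finset.univ : Finset ι).erase i₀
  have hcard : (s.card : ℝ≥0∞) ≤ Fintype.card ι := mod_cast Finset.card_le_univ s
  rw [l2NormSq_congr μ hG.measurableSet (eqOn_dirDeriv_append_pair b hG hu i₀ T)]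
  calc _ ≤ 2 * (l2NormSq μ G (dirDeriv (T.map b) (frameLaplacian b u)) +
          l2NormSq μ G fun x => ∑ i ∈ s, dirDeriv ((T ++ [i, i]).map b) u x) :=
        l2NormSq_sub_le μ hG.measurableSet
          (contDiffOn_dirDeriv hG (contDiffOn_frameLaplacian b hG hu) _).continuousOn
    _ ≤ 2 * (M + s.card * ∑ i ∈ s, l2NormSq μ G (dirDeriv ((T ++ [i, i]).map b) u)) := by
        gcongr
        exact l2NormSq_sum_le μ hG.measurableSet s fun i _ => (hd _).continuousOn
    _ ≤ 2 * (M + s.card * (s.card * N)) := by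
        gcongr
        refine (Finset.sum_le_sum fun i hi => hN i (Finset.ne_of_mem_erase hi)).trans ?_
        rw [Finset.sum_const, nsmul_eq_mul]
    _ ≤ 2 * (M + Fintype.card ι * (Fintype.card ι * N)) := by gcongr
    _ = _ := by push_cast; ring

variable [FiniteDimensional ℝ E] [μ.IsAddHaarMeasure]

lemma exists_l2NormSq_dirDeriv_le_of_count_le_one [DecidableEq ι] (m : ℕ) :
    ∃ C : ℝ≥0, ∀ {i₀ : ι} {V y R b u} {M : ℝ≥0}, IsBoundedSolution μ i₀ V y R b 1 m u M →
      ∀ L : List ι, L.length ≤ m + 2 → L.count i₀ ≤ 1 →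
        l2NormSq μ (V ∩ ball y (1 / 2 * R)) (dirDeriv (L.map b) u) ≤ (C * M : ℝ≥0) := by
  choose C hC using fun k => tangentialEstimate μ ι k (ρ := 1 / 2) (ρ' := 1) (by norm_num)
    (by norm_num) le_rfl
  refine ⟨1 + ∑ k ∈ Finset.range (m + 2), C k, fun {i₀ V y R b u M} h L hL hcount => ?_⟩
  have hG := h.isFlatFrame.isOpen_inter (1 / 2)
  have hsub := h.isFlatFrame.inter_subset (V := V) (show (1 / 2 : ℝ) ≤ 1 by norm_num)
  have hcons (i : ι) (T : List ι) (hT : T.length ≤ m + 1) (hi₀ : i₀ ∉ T) :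
      l2NormSq μ (V ∩ ball y (1 / 2 * R)) (dirDeriv ((i :: T).map b) u) ≤
        ((1 + ∑ k ∈ Finset.range (m + 2), C k) * M : ℝ≥0) := by
    refine (hC T.length (h.mono_order (by omega)) T rfl hi₀ i).trans ?_
    gcongr
    exact (Finset.single_le_sum (f := C) (fun _ _ => zero_le)
      (Finset.mem_range.2 (by omega))).trans le_add_self
  by_cases hi₀ : i₀ ∈ L
  · rw [l2NormSq_congr μ hG.measurableSet
      (dirDeriv_perm hG (h.contDiffOn.mono hsub) ((List.perm_cons_erase hi₀).map b))]
    refine hcons i₀ _ ?_ ?_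
    · rw [List.length_erase_of_mem hi₀]; omega
    · rw [← List.count_eq_zero, List.count_erase_self]; omega
  · rcases L with _ | ⟨i, T⟩
    · refine (l2NormSq_mono μ hsub u).trans (h.l2NormSq_le.trans ?_)
      exact_mod_cast le_mul_of_one_le_left M.2 (le_self_add (a := (1 : ℝ≥0)))
    · exact hcons i T (by simpa using hL) fun h => hi₀ (List.mem_cons_of_mem i h)

lemma exists_l2NormSq_dirDeriv_le_of_count_le [DecidableEq ι] (m c : ℕ) :
    ∃ C : ℝ≥0, ∀ {i₀ : ι} {V y R b u} {M : ℝ≥0}, IsBoundedSolution μ i₀ V y R b 1 m u M →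
      ∀ L : List ι, L.length ≤ m + 2 → L.count i₀ ≤ c + 1 →
        l2NormSq μ (V ∩ ball y (1 / 2 * R)) (dirDeriv (L.map b) u) ≤ (C * M : ℝ≥0) := by
  induction c with
  | zero => exact exists_l2NormSq_dirDeriv_le_of_count_le_one μ m
  | succ c ih =>
    obtain ⟨C, hC⟩ := ih
    refine ⟨C + 2 * (1 + Fintype.card ι ^ 2 * C), fun {i₀ V y R b u M} h L hL hcount => ?_⟩
    by_cases hcount' : L.count i₀ ≤ c + 1
    · refine (hC h L hL hcount').trans ?_
      gcongr
      exact le_self_add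
    have hG := h.isFlatFrame.isOpen_inter (1 / 2)
    have hsub := h.isFlatFrame.inter_subset (V := V) (show (1 / 2 : ℝ) ≤ 1 by norm_num)
    have hu := h.contDiffOn.mono hsub
    obtain ⟨T, hT⟩ := exists_perm_append_pair (show 2 ≤ L.count i₀ by omega)
    have hlen := hT.length_eq
    have hcountT := hT.count_eq i₀
    simp only [List.length_append, List.length_cons, List.length_nil] at hlen
    simp only [List.count_append, List.count_cons_self, List.count_nil] at hcountT
    rw [l2NormSq_congr μ hG.measurableSet (dirDeriv_perm hG hu (hT.map b))]
    refine (l2NormSq_dirDeriv_append_pair_le μ b hG hu i₀ T (M := M) (N := C * M)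
      ((l2NormSq_mono μ hsub _).trans (h.l2NormSq_dirDeriv_le T (by omega)))
      fun i hi => hC h _ (by simp only [List.length_append, List.length_cons, List.length_nil]
                             omega) ?_).trans ?_
    · rw [List.count_append, List.count_cons_of_ne hi, List.count_cons_of_ne hi, List.count_nil]
      omega
    · rw [ENNReal.coe_le_coe]
      calc _ = 2 * (1 + Fintype.card ι ^ 2 * C) * M := by ring
        _ ≤ _ := by gcongr; exact le_add_self

/-- Second normal derivatives are traded for tangential ones through the equation. -/
theorem exists_l2NormSq_dirDeriv_le (ι : Type*) [Fintype ι] (m : ℕ) :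
    ∃ C : ℝ≥0, ∀ {i₀ : ι} {V y R b u} {M : ℝ≥0}, IsBoundedSolution μ i₀ V y R b 1 m u M →
      ∀ L : List ι, L.length ≤ m + 2 →
        l2NormSq μ (V ∩ ball y (1 / 2 * R)) (dirDeriv (L.map b) u) ≤ (C * M : ℝ≥0) := by
  classical
  obtain ⟨C, hC⟩ := exists_l2NormSq_dirDeriv_le_of_count_le (ι := ι) μ m (m + 1)
  exact ⟨C, fun h L hL => hC h L hL (List.count_le_length.trans hL)⟩

end AllDerivatives

/-! ### Polyhedral geometry -/

lemma exists_forall_le_mul_dist_of_isCompact {X : Type*} [PseudoMetricSpace X] {K : Set X}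
    (hK : IsCompact K) (P : X → X → Prop) (f : X → ℝ)
    (h : ∀ p ∈ K, ∃ C > (0 : ℝ), ∃ r > (0 : ℝ), ∀ y₁ ∈ ball p r, ∀ y₂ ∈ ball p r, P y₁ y₂ →
      f y₁ ≤ C * dist y₁ y₂) :
    ∃ C > (0 : ℝ), ∃ r > (0 : ℝ), ∀ y₁ ∈ K, ∀ y₂, dist y₁ y₂ < r → P y₁ y₂ →
      f y₁ ≤ C * dist y₁ y₂ := by
  refine hK.induction_on (p := fun T => ∃ C > (0 : ℝ), ∃ r > (0 : ℝ), ∀ y₁ ∈ T, ∀ y₂,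
    dist y₁ y₂ < r → P y₁ y₂ → f y₁ ≤ C * dist y₁ y₂) ?_ ?_ ?_ ?_
  · exact ⟨1, one_pos, 1, one_pos, fun y₁ h => h.elim⟩
  · rintro s t hst ⟨C, hC, r, hr, h⟩
    exact ⟨C, hC, r, hr, fun y₁ h₁ => h y₁ (hst h₁)⟩
  · rintro s t ⟨C, hC, r, hr, h⟩ ⟨C', -, r', hr', h'⟩
    refine ⟨max C C', lt_max_of_lt_left hC, min r r', lt_min hr hr', ?_⟩
    rintro y₁ (hy₁ | hy₁) y₂ hd hP
    · refine (h y₁ hy₁ y₂ (hd.trans_le (min_le_left _ _)) hP).trans ?_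
      gcongr
      exact le_max_left _ _
    · refine (h' y₁ hy₁ y₂ (hd.trans_le (min_le_right _ _)) hP).trans ?_
      gcongr
      exact le_max_right _ _
  · intro p hp
    obtain ⟨C, hC, r, hr, h⟩ := h p hp
    refine ⟨ball p (r / 2), mem_nhdsWithin_of_mem_nhds (ball_mem_nhds p (by positivity)),
      C, hC, r / 2, by positivity, fun y₁ hy₁ y₂ hd => ?_⟩
    refine h y₁ (ball_subset_ball (by linarith) hy₁) y₂ ?_
    rw [mem_ball] at hy₁ ⊢
    linarith [dist_triangle_left y₂ p y₁, dist_comm y₁ y₂]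

lemma mem_of_segment_disjoint_frontier {E : Type*} [AddCommGroup E] [Module ℝ E]
    [TopologicalSpace E] [IsTopologicalAddGroup E] [ContinuousSMul ℝ E] {U : Set E}
    (hU : IsOpen U) {z z' : E} (hz : z ∈ U) (h : Disjoint (segment ℝ z z') (frontier U)) :
    z' ∈ U := by
  refine (convex_segment z z').isPreconnected.subset_left_of_subset_union hU
    isClosed_closure.isOpen_compl (disjoint_compl_right_iff_subset.2 subset_closure)
    (fun w hw => ?_) ⟨z, left_mem_segment ℝ z z', hz⟩ (right_mem_segment ℝ z z')
  by_contra hcon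
  rw [mem_union, mem_compl_iff, not_or, not_not] at hcon
  exact h.notMem_of_mem_left hw ⟨hcon.2, by rw [hU.interior_eq]; exact hcon.1⟩

section Arrangement

variable {E ι : Type*} [NormedAddCommGroup E] [InnerProductSpace ℝ E]

/-- The affine functionals whose zero sets `{x | ⟪v i, x⟫ = c i}` are the hyperplanes of the
arrangement given by normals `v` and offsets `c`. -/
def hyperplaneFun (v : ι → E) (c : ι → ℝ) (i : ι) (x : E) : ℝ := ⟪v i, x⟫ - c i

/-- Two points lie in the same relatively open cell of the arrangement. -/
def SameCell (v : ι → E) (c : ι → ℝ) (x x' : E) : Prop :=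
  ∀ i, SignType.sign (hyperplaneFun v c i x) = SignType.sign (hyperplaneFun v c i x')

/-- `X` is a union of relatively open cells of the arrangement. -/
def IsUnionOfCells (v : ι → E) (c : ι → ℝ) (X : Set E) : Prop :=
  ∀ x ∈ X, ∀ x', SameCell v c x x' → x' ∈ X

/-- The ball `B(p, r)` meets no hyperplane of the arrangement that misses its centre, so that in
this ball the arrangement is a cone with apex `p`. -/
structure IsConicalRadius (v : ι → E) (c : ι → ℝ) (p : E) (r : ℝ) : Prop where
  pos : 0 < r
  sign_eq : ∀ x ∈ ball p r, ∀ i, hyperplaneFun v c i p ≠ 0 →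
    SignType.sign (hyperplaneFun v c i x) = SignType.sign (hyperplaneFun v c i p)

/-- The directions parallel to all hyperplanes of the arrangement through `p`. -/
def linealitySpace (v : ι → E) (c : ι → ℝ) (p : E) : Submodule ℝ E :=
  ⨅ i : {i // hyperplaneFun v c i p = 0}, (ℝ ∙ v i)ᗮ

/-- The points of `X` on at least two hyperplanes of the arrangement. -/
def doublePoints (v : ι → E) (c : ι → ℝ) (X : Set E) : Set E :=
  {x | x ∈ X ∧ ∃ i j, i ≠ j ∧ hyperplaneFun v c i x = 0 ∧ hyperplaneFun v c j x = 0}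

/-- `y₁` and `y₂` are points of `X` on different hyperplanes of the arrangement. -/
def OnDistinctHyperplanes (v : ι → E) (c : ι → ℝ) (X : Set E) (y₁ y₂ : E) : Prop :=
  y₁ ∈ X ∧ y₂ ∈ X ∧ ∃ i j, i ≠ j ∧ hyperplaneFun v c i y₁ = 0 ∧ hyperplaneFun v c j y₂ = 0

/-- Near `p`, the distance between points of `X` on different hyperplanes dominates the distance
to the double points. -/
def IsSeparatedNear (v : ι → E) (c : ι → ℝ) (X : Set E) (p : E) : Prop :=
  ∃ C > (0 : ℝ), ∃ r > (0 : ℝ), ∀ y₁ ∈ ball p r, ∀ y₂ ∈ ball p r,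
    OnDistinctHyperplanes v c X y₁ y₂ → infDist y₁ (doublePoints v c X) ≤ C * dist y₁ y₂

variable {v : ι → E} {c : ι → ℝ} {X U : Set E} {p x x' y z a w : E} {r k : ℝ} {i : ι}

lemma hyperplaneFun_add (x w : E) :
    hyperplaneFun v c i (x + w) = hyperplaneFun v c i x + ⟪v i, w⟫ := by
  rw [hyperplaneFun, hyperplaneFun, inner_add_right]
  ring

lemma hyperplaneFun_eq_add_inner_sub (x y : E) :
    hyperplaneFun v c i y = hyperplaneFun v c i x + ⟪v i, y - x⟫ := by
  rw [← hyperplaneFun_add, add_sub_cancel]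

lemma continuous_hyperplaneFun (v : ι → E) (c : ι → ℝ) (i : ι) :
    Continuous (hyperplaneFun v c i) := by
  unfold hyperplaneFun
  fun_prop

lemma mem_linealitySpace :
    a ∈ linealitySpace v c p ↔ ∀ i, hyperplaneFun v c i p = 0 → ⟪v i, a⟫ = 0 := by
  simp only [linealitySpace, Submodule.mem_iInf, Submodule.mem_orthogonal_singleton_iff_inner_right,
    Subtype.forall]

lemma SameCell.eq_zero_iff (h : SameCell v c x x') (i : ι) :
    hyperplaneFun v c i x = 0 ↔ hyperplaneFun v c i x' = 0 := by
  rw [← sign_eq_zero_iff, h i, sign_eq_zero_iff]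

lemma SameCell.ne_zero_of_mem_segment (h : SameCell v c x x') (hx : hyperplaneFun v c i x ≠ 0)
    (hw : w ∈ segment ℝ x x') : hyperplaneFun v c i w ≠ 0 := by
  obtain ⟨s, t, hs, ht, hst, rfl⟩ := hw
  have hcomb : hyperplaneFun v c i (s • x + t • x') =
      s * hyperplaneFun v c i x + t * hyperplaneFun v c i x' := by
    simp only [hyperplaneFun, inner_add_right, inner_smul_right]
    linear_combination c i * hst
  rw [hcomb]
  have hsign := h i
  rcases hx.lt_or_gt with hneg | hpos
  · rw [sign_neg hneg, eq_comm, sign_eq_neg_one_iff] at hsign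
    exact (convex_Iio (𝕜 := ℝ) 0 hneg hsign hs ht hst).ne
  · rw [sign_pos hpos, eq_comm, sign_eq_one_iff] at hsign
    exact (convex_Ioi (𝕜 := ℝ) 0 hpos hsign hs ht hst).ne'

lemma SameCell.mem_doublePoints (h : SameCell v c x x') (hX : IsUnionOfCells v c X)
    (hx : x ∈ doublePoints v c X) : x' ∈ doublePoints v c X := by
  obtain ⟨hxX, i, j, hij, hi, hj⟩ := hx
  exact ⟨hX x hxX x' h, i, j, hij, (h.eq_zero_iff i).1 hi, (h.eq_zero_iff j).1 hj⟩

lemma OnDistinctHyperplanes.map {y₁ y₂ z₁ z₂ : E} (h : OnDistinctHyperplanes v c X y₁ y₂)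
    (hX : IsUnionOfCells v c X) (h₁ : SameCell v c y₁ z₁) (h₂ : SameCell v c y₂ z₂) :
    OnDistinctHyperplanes v c X z₁ z₂ := by
  obtain ⟨hy₁, hy₂, i, j, hij, hi, hj⟩ := h
  exact ⟨hX y₁ hy₁ z₁ h₁, hX y₂ hy₂ z₂ h₂, i, j, hij, (h₁.eq_zero_iff i).1 hi,
    (h₂.eq_zero_iff j).1 hj⟩

namespace IsConicalRadius

variable (hr : IsConicalRadius v c p r)
include hr

lemma eq_zero_center (hx : x ∈ ball p r) (hi : hyperplaneFun v c i x = 0) :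
    hyperplaneFun v c i p = 0 := by
  by_contra h
  have hsign := hr.sign_eq x hx i h
  rw [hi, sign_zero] at hsign
  exact h (sign_eq_zero_iff.1 hsign.symm)

lemma sameCell_homothety (ha : a ∈ linealitySpace v c p) (hk : 0 < k) (hx : x ∈ ball p r)
    (hx' : p + a + k • (x - p) ∈ ball p r) : SameCell v c x (p + a + k • (x - p)) := by
  intro i
  by_cases hi : hyperplaneFun v c i p = 0
  · rw [hyperplaneFun_add, hyperplaneFun_add, hyperplaneFun_eq_add_inner_sub p x, hi,
      mem_linealitySpace.1 ha i hi, inner_smul_right, zero_add, zero_add, zero_add, sign_mul,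
      sign_pos hk, one_mul]
  · rw [hr.sign_eq x hx i hi, hr.sign_eq _ hx' i hi]

lemma setOf_eq_zero_ssubset (hw : w ∈ (linealitySpace v c p)ᗮ) (hw₀ : w ≠ 0) (hwr : ‖w‖ < r) :
    {i | hyperplaneFun v c i (p + w) = 0} ⊂ {i | hyperplaneFun v c i p = 0} := by
  have hpw : p + w ∈ ball p r := by rwa [mem_ball_iff_norm, add_sub_cancel_left]
  refine ⟨fun i hi => hr.eq_zero_center hpw hi, fun hsub => hw₀ ?_⟩
  refine inner_self_eq_zero.1 (Submodule.inner_right_of_mem_orthogonal (𝕜 := ℝ)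
    (mem_linealitySpace.2 fun i hi => ?_) hw)
  have hpwi : hyperplaneFun v c i (p + w) = 0 := hsub hi
  rwa [hyperplaneFun_add, hi, zero_add] at hpwi

end IsConicalRadius

section Finite

variable [Finite ι]

lemma exists_isConicalRadius (v : ι → E) (c : ι → ℝ) (p : E) : ∃ r, IsConicalRadius v c p r := by
  have hev : ∀ᶠ x in 𝓝 p, ∀ i, hyperplaneFun v c i p ≠ 0 →
      SignType.sign (hyperplaneFun v c i x) = SignType.sign (hyperplaneFun v c i p) := by
    refine eventually_all.2 fun i => eventually_imp_distrib_left.2 fun hi => ?_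
    exact ((continuousAt_sign_of_ne_zero hi).comp (f := hyperplaneFun v c i)
      (continuous_hyperplaneFun v c i).continuousAt).eventually
        (mem_nhds_discrete (s := {_}).2 rfl)
  obtain ⟨r, hr, h⟩ := Metric.eventually_nhds_iff_ball.1 hev
  exact ⟨r, hr, h⟩

lemma isClosed_doublePoints (v : ι → E) (c : ι → ℝ) (hX : IsClosed X) :
    IsClosed (doublePoints v c X) := by
  have heq : doublePoints v c X = X ∩ ⋃ i, ⋃ j, ⋃ (_ : i ≠ j),
      {x | hyperplaneFun v c i x = 0} ∩ {x | hyperplaneFun v c j x = 0} := by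
    ext x
    simp only [doublePoints, mem_ofPred_eq, mem_inter_iff, mem_iUnion, exists_prop]
  rw [heq]
  exact hX.inter (isClosed_iUnion_of_finite fun i => isClosed_iUnion_of_finite fun j =>
    isClosed_iUnion_of_finite fun _ =>
      (isClosed_eq (continuous_hyperplaneFun v c i) continuous_const).inter
        (isClosed_eq (continuous_hyperplaneFun v c j) continuous_const))

lemma dense_setOf_hyperplaneFun_ne_zero [CompleteSpace E] (c : ι → ℝ) (hv : ∀ i, v i ≠ 0) :
    Dense {z : E | ∀ i, hyperplaneFun v c i z ≠ 0} := by
  rw [ofPred_forall]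
  refine dense_iInter_of_isOpen
    (fun i => isOpen_ne_fun (continuous_hyperplaneFun v c i) continuous_const) fun i => ?_
  refine Metric.dense_iff.2 fun x r hr => ?_
  by_cases h : hyperplaneFun v c i x = 0
  · have hvi : 0 < ‖v i‖ := norm_pos_iff.2 (hv i)
    refine ⟨x + (r / 2 / ‖v i‖) • v i, ?_, ?_⟩
    · rw [mem_ball_iff_norm, add_sub_cancel_left, norm_smul, Real.norm_of_nonneg (by positivity),
        div_mul_cancel₀ _ hvi.ne']
      exact half_lt_self hr
    · change hyperplaneFun v c i _ ≠ 0
      rw [hyperplaneFun_add, h, zero_add, inner_smul_right, real_inner_self_eq_norm_sq]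
      positivity
  · exact ⟨x, mem_ball_self hr, h⟩

lemma isUnionOfCells_closure [CompleteSpace E] (hv : ∀ i, v i ≠ 0) (hU : IsOpen U)
    (hF : ∀ x ∈ frontier U, ∃ i, hyperplaneFun v c i x = 0) :
    IsUnionOfCells v c (closure U) := by
  intro x hx x' hxx'
  obtain ⟨r, hr⟩ := exists_isConicalRadius v c x
  obtain ⟨r', hr'⟩ := exists_isConicalRadius v c x'
  refine Metric.mem_closure_iff.2 fun ε hε => ?_
  have hpos : 0 < min ε (min r r') := lt_min hε (lt_min hr.pos hr'.pos)
  obtain ⟨z, ⟨hzU, hzx⟩, hz⟩ := (dense_setOf_hyperplaneFun_ne_zero c hv).inter_open_nonempty _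
    (hU.inter isOpen_ball) (by
      rw [inter_comm]
      exact mem_closure_iff_nhds.1 hx _ (ball_mem_nhds x hpos))
  simp only [mem_ball, lt_min_iff, dist_eq_norm] at hzx
  set w := z - x with hw
  have hzw : z = x + w := by rw [hw, add_sub_cancel]
  have hcell : SameCell v c z (x' + w) := fun i => by
    have hxw : x + w ∈ ball x r := by simpa [mem_ball_iff_norm] using hzx.2.1
    have hxw' : x' + w ∈ ball x' r' := by simpa [mem_ball_iff_norm] using hzx.2.2
    rw [hzw]
    by_cases hi : hyperplaneFun v c i x = 0
    · rw [hyperplaneFun_add, hyperplaneFun_add, hi, (hxx'.eq_zero_iff i).1 hi]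
    · rw [hr.sign_eq _ hxw i hi, hr'.sign_eq _ hxw' i (mt (hxx'.eq_zero_iff i).2 hi), hxx' i]
  refine ⟨x' + w, mem_of_segment_disjoint_frontier hU hzU (disjoint_left.2 fun q hq hqF => ?_), ?_⟩
  · obtain ⟨i, hi⟩ := hF q hqF
    exact hcell.ne_zero_of_mem_segment (hz i) hq hi
  · rw [dist_eq_norm, sub_add_cancel_left, norm_neg]
    exact hzx.1

lemma isUnionOfCells_frontier [CompleteSpace E] (hv : ∀ i, v i ≠ 0) (hU : IsOpen U)
    (hU' : frontier U = frontier (closure U))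
    (hF : ∀ x ∈ frontier U, ∃ i, hyperplaneFun v c i x = 0) :
    IsUnionOfCells v c (frontier U) := by
  rw [hU', frontier_eq_closure_inter_closure, closure_closure]
  rintro x ⟨hx, hx'⟩ x' hxx'
  refine ⟨isUnionOfCells_closure hv hU hF x hx x' hxx',
    isUnionOfCells_closure hv isClosed_closure.isOpen_compl (fun q hq => hF q ?_) x hx' x' hxx'⟩
  rwa [frontier_compl, ← hU'] at hq

variable [FiniteDimensional ℝ E]

lemma infDist_doublePoints_le_of_homothety (hX : IsClosed X) (hXc : IsUnionOfCells v c X)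
    (hr : IsConicalRadius v c p (4 * r)) (hp : p ∈ doublePoints v c X)
    (ha : a ∈ linealitySpace v c p) (har : ‖a‖ ≤ r) (hk : 1 ≤ k)
    (hz : dist (p + k • (y - p - a)) p ≤ r) :
    infDist y (doublePoints v c X) ≤ k⁻¹ * infDist (p + k • (y - p - a)) (doublePoints v c X) := by
  have hr₀ : 0 < r := by linarith [hr.pos]
  have hk₀ : 0 < k := one_pos.trans_le hk
  set z := p + k • (y - p - a) with hzdef
  obtain ⟨s, hs, hzs⟩ := (isClosed_doublePoints v c hX).exists_infDist_eq_dist ⟨p, hp⟩ z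
  have hzsr : dist z s ≤ r := hzs ▸ (infDist_le_dist_of_mem hp).trans hz
  have hsp : dist s p ≤ 2 * r := by linarith [dist_triangle_left s p z]
  have hksp : ‖k⁻¹ • (s - p)‖ ≤ 2 * r := by
    rw [norm_smul, Real.norm_of_nonneg (by positivity), ← dist_eq_norm]
    exact (mul_le_of_le_one_left dist_nonneg (inv_le_one_of_one_le₀ hk)).trans hsp
  have hs' : p + a + k⁻¹ • (s - p) ∈ doublePoints v c X := by
    refine (hr.sameCell_homothety ha (inv_pos.2 hk₀) ?_ ?_).mem_doublePoints hXc hs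
    · rw [mem_ball]
      linarith
    · rw [mem_ball_iff_norm, add_assoc, add_sub_cancel_left]
      linarith [norm_add_le a (k⁻¹ • (s - p))]
  calc _ ≤ dist y (p + a + k⁻¹ • (s - p)) := infDist_le_dist_of_mem hs'
    _ = ‖k⁻¹ • (z - s)‖ := by
        rw [dist_eq_norm, hzdef, add_sub_right_comm, smul_add, smul_smul, inv_mul_cancel₀ hk₀.ne']
        congr 1
        module
    _ = _ := by rw [norm_smul, Real.norm_of_nonneg (by positivity), ← dist_eq_norm, hzs]

section Sphere

variable {C δ : ℝ} {y₁ y₂ : E} (hX : IsClosed X) (hXc : IsUnionOfCells v c X)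
  (hr : IsConicalRadius v c p (4 * r))
  (h : ∀ w ∈ (linealitySpace v c p)ᗮ, ‖w‖ = r → ∀ z, dist (p + w) z < δ →
    OnDistinctHyperplanes v c X (p + w) z →
      infDist (p + w) (doublePoints v c X) ≤ C * dist (p + w) z)
include hX hXc hr h

/-- A homothety of the cone with apex `p`, followed by a translation along its lineality space,
moves `y₁` to the sphere of radius `r`. -/
lemma infDist_doublePoints_le_mul_dist (hp : p ∈ doublePoints v c X) (hδr : δ ≤ r)
    (ha : a ∈ linealitySpace v c p) (hw : w ∈ (linealitySpace v c p)ᗮ) (hy₁w : y₁ - p = a + w)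
    (hw₀ : w ≠ 0) (har : ‖a‖ ≤ r) (hwr : ‖w‖ ≤ r) (hy₁ : y₁ ∈ ball p r) (hy₂ : y₂ ∈ ball p r)
    (hd : r * dist y₁ y₂ < δ * ‖w‖) (hy : OnDistinctHyperplanes v c X y₁ y₂) :
    infDist y₁ (doublePoints v c X) ≤ C * dist y₁ y₂ := by
  have hr₀ : 0 < r := by linarith [hr.pos]
  have hsub : ball p r ⊆ ball p (4 * r) := ball_subset_ball (by linarith)
  have hw_pos : 0 < ‖w‖ := norm_pos_iff.2 hw₀
  set k := r / ‖w‖ with hk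
  have hk₀ : 0 < k := by positivity
  set φ : E → E := fun y => p + k • (y - p - a) with hφ
  have hφ_dist (y y' : E) : dist (φ y) (φ y') = k * dist y y' := by
    rw [dist_add_left, dist_smul₀, dist_sub_right, dist_sub_right, Real.norm_of_nonneg hk₀.le]
  have hφ_cell {y : E} (hy : y ∈ ball p r) (hφy : φ y ∈ ball p (4 * r)) :
      SameCell v c y (φ y) := by
    have hφ_eq : φ y = p + -(k • a) + k • (y - p) := by rw [hφ]; module
    rw [hφ_eq] at hφy ⊢
    exact hr.sameCell_homothety (neg_mem (Submodule.smul_mem _ k ha)) hk₀ (hsub hy) hφy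
  have hφ₁ : φ y₁ = p + k • w := by simp only [hφ]; rw [hy₁w, add_sub_cancel_left]
  have hkw : ‖k • w‖ = r := by
    rw [norm_smul, Real.norm_of_nonneg hk₀.le, hk, div_mul_cancel₀ _ hw_pos.ne']
  have hφ₁p : dist (φ y₁) p = r := by rw [hφ₁, dist_eq_norm, add_sub_cancel_left, hkw]
  have hφ₁₂ : dist (φ y₁) (φ y₂) < δ := by
    rwa [hφ_dist, hk, div_mul_eq_mul_div, div_lt_iff₀ hw_pos]
  have hφ₂p : dist (φ y₂) p < 4 * r := by linarith [dist_triangle_left (φ y₂) p (φ y₁)]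
  have hφ_le : infDist (φ y₁) (doublePoints v c X) ≤ C * dist (φ y₁) (φ y₂) := by
    have hmap := hy.map hXc (hφ_cell hy₁ (by rw [mem_ball]; linarith)) (hφ_cell hy₂ hφ₂p)
    rw [hφ₁] at hφ₁₂ hmap ⊢
    exact h (k • w) (Submodule.smul_mem _ k hw) hkw _ hφ₁₂ hmap
  calc _ ≤ k⁻¹ * infDist (φ y₁) (doublePoints v c X) :=
        infDist_doublePoints_le_of_homothety hX hXc hr hp ha har ((one_le_div hw_pos).2 hwr)
          hφ₁p.le
    _ ≤ k⁻¹ * (C * dist (φ y₁) (φ y₂)) := by gcongr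
    _ = C * dist y₁ y₂ := by rw [hφ_dist]; field_simp

lemma isSeparatedNear_of_sphere (hpX : p ∈ X) (hC : 0 < C) (hδ : 0 < δ) (hδr : δ ≤ r) :
    IsSeparatedNear v c X p := by
  have hr₀ : 0 < r := by linarith [hr.pos]
  refine ⟨max C (r / δ), lt_max_of_lt_left hC, r, hr₀, fun y₁ hy₁ y₂ hy₂ hy => ?_⟩
  have hsub : ball p r ⊆ ball p (4 * r) := ball_subset_ball (by linarith)
  have hp : p ∈ doublePoints v c X := by
    obtain ⟨-, -, i, j, hij, hi, hj⟩ := hy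
    exact ⟨hpX, i, j, hij, hr.eq_zero_center (hsub hy₁) hi, hr.eq_zero_center (hsub hy₂) hj⟩
  obtain ⟨a, ha, w, hw, haw⟩ := (linealitySpace v c p).exists_add_mem_mem_orthogonal (y₁ - p)
  have hpyth : ‖y₁ - p‖ * ‖y₁ - p‖ = ‖a‖ * ‖a‖ + ‖w‖ * ‖w‖ := by
    rw [haw]
    exact norm_add_sq_eq_norm_sq_add_norm_sq_real (Submodule.inner_right_of_mem_orthogonal ha hw)
  have hy₁r : ‖y₁ - p‖ ≤ r := (mem_ball_iff_norm.1 hy₁).le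
  have har : ‖a‖ ≤ r := by nlinarith [norm_nonneg (y₁ - p), norm_nonneg a, norm_nonneg w]
  have hwr : ‖w‖ ≤ r := by nlinarith [norm_nonneg (y₁ - p), norm_nonneg a, norm_nonneg w]
  by_cases hnear : w ≠ 0 ∧ r * dist y₁ y₂ < δ * ‖w‖
  · refine (infDist_doublePoints_le_mul_dist hX hXc hr h hp hδr ha hw haw hnear.1 har hwr hy₁ hy₂
      hnear.2 hy).trans ?_
    gcongr
    exact le_max_left _ _
  have hpa : p + a ∈ doublePoints v c X := by
    have hcell := hr.sameCell_homothety ha one_pos (mem_ball_self hr.pos) (by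
      rw [sub_self, smul_zero, add_zero, mem_ball_iff_norm, add_sub_cancel_left]
      linarith)
    rw [sub_self, smul_zero, add_zero] at hcell
    exact hcell.mem_doublePoints hXc hp
  have hfar : δ * ‖w‖ ≤ r * dist y₁ y₂ := by
    rcases eq_or_ne w 0 with rfl | hw₀
    · rw [norm_zero, mul_zero]
      positivity
    · exact not_lt.1 fun hlt => hnear ⟨hw₀, hlt⟩
  calc _ ≤ dist y₁ (p + a) := infDist_le_dist_of_mem hpa
    _ = ‖w‖ := by rw [dist_eq_norm, ← sub_sub, haw, add_sub_cancel_left]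
    _ ≤ r / δ * dist y₁ y₂ := by rwa [div_mul_eq_mul_div, le_div_iff₀' hδ]
    _ ≤ _ := by gcongr; exact le_max_right _ _

end Sphere

theorem isSeparatedNear (hX : IsClosed X) (hXc : IsUnionOfCells v c X) (p : E) :
    IsSeparatedNear v c X p := by
  induction hN : {i | hyperplaneFun v c i p = 0}.ncard using Nat.strong_induction_on
    generalizing p with
  | _ N ih =>
    by_cases hpX : p ∈ X
    · obtain ⟨R, hR⟩ := exists_isConicalRadius v c p
      obtain ⟨r, rfl⟩ : ∃ r, R = 4 * r := ⟨R / 4, by ring⟩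
      have hr₀ : 0 < r := by linarith [hR.pos]
      have hK : IsCompact ((p + ·) '' (sphere (0 : E) r ∩ (linealitySpace v c p)ᗮ)) :=
        ((isCompact_sphere 0 r).inter_right (Submodule.closed_of_finiteDimensional _)).image
          (continuous_const_add p)
      obtain ⟨C, hC, δ, hδ, h⟩ := exists_forall_le_mul_dist_of_isCompact hK
        (OnDistinctHyperplanes v c X) (infDist · (doublePoints v c X)) (by
          rintro _ ⟨w, ⟨hwr, hw⟩, rfl⟩
          rw [mem_sphere_zero_iff_norm] at hwr
          refine ih _ ?_ (p + w) rfl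
          rw [← hN]
          exact ncard_lt_ncard (hR.setOf_eq_zero_ssubset hw
            (norm_pos_iff.1 (hwr ▸ hr₀)) (by linarith)))
      exact isSeparatedNear_of_sphere hX hXc hR
        (fun w hw hwr z hz => h _ (mem_image_of_mem _ ⟨mem_sphere_zero_iff_norm.2 hwr, hw⟩) z
          (hz.trans_le (min_le_left δ r))) hpX hC (lt_min hδ hr₀) (min_le_right δ r)
    · obtain ⟨r, hr, hball⟩ := Metric.isOpen_iff.1 hX.isOpen_compl p hpX
      exact ⟨1, one_pos, r, hr, fun y₁ hy₁ y₂ _ hy => absurd hy.1 (hball hy₁)⟩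

lemma exists_infDist_doublePoints_le (hX : IsCompact X) (hXc : IsUnionOfCells v c X)
    (hS : (doublePoints v c X).Nonempty) :
    ∃ C > (0 : ℝ), ∀ y₁ y₂, OnDistinctHyperplanes v c X y₁ y₂ →
      infDist y₁ (doublePoints v c X) ≤ C * dist y₁ y₂ := by
  obtain ⟨C, hC, r, hr, h⟩ := exists_forall_le_mul_dist_of_isCompact hX
    (OnDistinctHyperplanes v c X) (infDist · (doublePoints v c X))
    fun p _ => isSeparatedNear hX.isClosed hXc p
  refine ⟨max C (diam X / r), lt_max_of_lt_left hC, fun y₁ y₂ hy => ?_⟩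
  rcases lt_or_ge (dist y₁ y₂) r with hd | hd
  · refine (h y₁ hy.1 y₂ hd hy).trans ?_
    gcongr
    exact le_max_left _ _
  · obtain ⟨s, hs⟩ := hS
    calc _ ≤ dist y₁ s := infDist_le_dist_of_mem hs
      _ ≤ diam X := dist_le_diam_of_mem hX.isBounded hy.1 hs.1
      _ = diam X / r * r := by field_simp
      _ ≤ max C (diam X / r) * dist y₁ y₂ := by
        have := diam_nonneg (s := X)
        gcongr
        exact le_max_right _ _

/-- `Ω` is polyhedral with respect to the arrangement given by normals `v` and offsets `c`. -/
structure IsPolyhedral (v : ι → E) (c : ι → ℝ) (Ω : Set E) : Prop where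
  isOpen : IsOpen Ω
  isBounded : Bornology.IsBounded Ω
  frontier_closure : frontier Ω = frontier (closure Ω)
  ne_zero : ∀ i, v i ≠ 0
  exists_eq_zero : ∀ x ∈ frontier Ω, ∃ i, hyperplaneFun v c i x = 0

theorem IsPolyhedral.exists_ball_inter_frontier_subset {Ω : Set E} (h : IsPolyhedral v c Ω)
    (hS : (doublePoints v c (frontier Ω)).Nonempty) :
    ∃ κ > (0 : ℝ), κ ≤ 1 / 2 ∧ ∀ y, ∃ i,
      ball y (κ * infDist y (doublePoints v c (frontier Ω))) ∩ frontier Ω ⊆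
        {x | hyperplaneFun v c i x = 0} := by
  have hcompact : IsCompact (frontier Ω) := Metric.isCompact_of_isClosed_isBounded
    isClosed_frontier (h.isBounded.closure.subset frontier_subset_closure)
  obtain ⟨C, hC, hle⟩ := exists_infDist_doublePoints_le hcompact
    (isUnionOfCells_frontier h.ne_zero h.isOpen h.frontier_closure h.exists_eq_zero) hS
  set S := doublePoints v c (frontier Ω)
  refine ⟨min (1 / 2) (1 / (4 * C)), by positivity, min_le_left _ _, fun y => ?_⟩
  set κ := min (1 / 2) (1 / (4 * C))
  rcases (ball y (κ * infDist y S) ∩ frontier Ω).eq_empty_or_nonempty with hempty | ⟨y₁, hy₁, hy₁F⟩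
  · obtain ⟨s, hs⟩ := hS
    obtain ⟨i, -⟩ := h.exists_eq_zero s hs.1
    exact ⟨i, hempty ▸ empty_subset _⟩
  obtain ⟨i, hi⟩ := h.exists_eq_zero y₁ hy₁F
  refine ⟨i, fun y₂ ⟨hy₂, hy₂F⟩ => ?_⟩
  obtain ⟨j, hj⟩ := h.exists_eq_zero y₂ hy₂F
  by_contra hne
  have hij : i ≠ j := fun hij => hne (hij ▸ hj)
  have hy₁₂ := hle y₁ y₂ ⟨hy₁F, hy₂F, i, j, hij, hi, hj⟩
  rw [mem_ball] at hy₁ hy₂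
  have hη : 0 ≤ infDist y S := infDist_nonneg
  have hκ : κ * infDist y S ≤ 1 / 2 * infDist y S := by gcongr; exact min_le_left _ _
  have hCκ : C * (κ * infDist y S) ≤ 1 / 4 * infDist y S := by
    calc _ ≤ C * (1 / (4 * C) * infDist y S) := by gcongr; exact min_le_right _ _
      _ = _ := by field_simp
  have hdist : C * dist y₁ y₂ < C * (2 * (κ * infDist y S)) := by
    gcongr
    linarith [dist_triangle_right y₁ y₂ y]
  linarith [infDist_le_infDist_add_dist (s := S) (x := y) (y := y₁), dist_comm y y₁]

end Finite

end Arrangement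

/-- A translation parallel to the hyperplane moves neighbourhoods of points of `Ω` off the
hyperplane without crossing the frontier. -/
lemma add_mem_of_frontier_subset_hyperplane {E : Type*} [NormedAddCommGroup E]
    [InnerProductSpace ℝ E] [CompleteSpace E] {Ω : Set E} (hΩ : IsOpen Ω)
    (hΩ' : frontier Ω = frontier (closure Ω)) {v : E} {c : ℝ} (hv : v ≠ 0) {y : E} {R : ℝ}
    (hF : ball y R ∩ frontier Ω ⊆ {x | ⟪v, x⟫ = c}) {d : E} (hd : ⟪v, d⟫ = 0) {x : E}
    (hx : x ∈ ball y R) (hxd : x + d ∈ ball y R) (hxΩ : x ∈ Ω) : x + d ∈ Ω := by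
  by_contra hcon
  have hxd_closure : x + d ∈ closure (closure Ω)ᶜ := by
    rw [closure_compl]
    intro hint
    have hfrontier : x + d ∈ frontier Ω := ⟨interior_subset hint, by rwa [hΩ.interior_eq]⟩
    exact (hΩ' ▸ hfrontier).2 hint
  set W : Set E := ball y R ∩ (· - d) ⁻¹' (ball y R ∩ Ω)
  have hW : IsOpen W :=
    isOpen_ball.inter ((isOpen_ball.inter hΩ).preimage (continuous_id.sub continuous_const))
  have hxW : x + d ∈ W := ⟨hxd, by simpa using ⟨hx, hxΩ⟩⟩
  obtain ⟨w, ⟨⟨hwR, hwdR, hwdΩ⟩, hwΩ⟩, hw⟩ :=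
    (dense_setOf_hyperplaneFun_ne_zero (v := fun _ : Unit => v) (fun _ => c)
      fun _ => hv).inter_open_nonempty _ (hW.inter isClosed_closure.isOpen_compl)
      (mem_closure_iff.1 hxd_closure W hW hxW)
  have heq : ⟪v, w - d⟫ = ⟪v, w⟫ := by rw [inner_sub_right, hd, sub_zero]
  have hcell : SameCell (fun _ : Unit => v) (fun _ => c) (w - d) w := fun _ => by
    rw [hyperplaneFun, hyperplaneFun, heq]
  refine hwΩ (subset_closure (mem_of_segment_disjoint_frontier hΩ hwdΩ
    (disjoint_left.2 fun z hz hzF => ?_)))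
  have hzR := (convex_ball y R).segment_subset hwdR hwR hz
  refine hcell.ne_zero_of_mem_segment (i := ()) ?_ hz (sub_eq_zero.2 (hF ⟨hzR, hzF⟩))
  rw [hyperplaneFun, heq]
  exact hw ()

/-! ### Averaging over Whitney balls -/

section WhitneyKernel

variable {E : Type*} [NormedAddCommGroup E] {S : Set E} {s : ℝ} {x y : E}

lemma infDist_le_two_mul_infDist (h : dist x y ≤ 1 / 2 * infDist y S) :
    infDist y S ≤ 2 * infDist x S := by
  linarith [infDist_le_infDist_add_dist (s := S) (x := y) (y := x), dist_comm x y]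

/-- The balls `ball y (s * infDist y S)`, weighted by `(infDist y S)⁻¹ ^ d`. In dimension `d` they
cover every point off `S` with comparable total weight, so averaging over all centres `y` replaces
a Whitney decomposition. -/
def whitneyKernel (S : Set E) (d : ℕ) (s : ℝ) (x y : E) : ℝ≥0∞ :=
  (ball y (s * infDist y S)).indicator (fun _ => ENNReal.ofReal ((infDist y S)⁻¹ ^ d)) x

variable [NormedSpace ℝ E] [FiniteDimensional ℝ E] [MeasurableSpace E] [BorelSpace E]
  (μ : Measure E) (d : ℕ)

lemma measurable_whitneyKernel : Measurable (Function.uncurry (whitneyKernel S d s)) := by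
  have hset : MeasurableSet {z : E × E | dist z.1 z.2 < s * infDist z.2 S} :=
    (isOpen_lt (by fun_prop) (by fun_prop)).measurableSet
  have hweight : Measurable fun y => ENNReal.ofReal ((infDist y S)⁻¹ ^ d) := by fun_prop
  have heq : Function.uncurry (whitneyKernel S d s) =
      {z : E × E | dist z.1 z.2 < s * infDist z.2 S}.indicator
        fun z => ENNReal.ofReal ((infDist z.2 S)⁻¹ ^ d) := by
    ext ⟨x, y⟩
    simp only [Function.uncurry, whitneyKernel, indicator, mem_ball, mem_ofPred_eq]
  rw [heq]
  exact (hweight.comp measurable_snd).indicator hset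

lemma lintegral_mul_lintegral_whitneyKernel [SFinite μ] {F : E → ℝ≥0∞} (hF : Measurable F) :
    ∫⁻ x, F x * ∫⁻ y, whitneyKernel S d s x y ∂μ ∂μ =
      ∫⁻ y, ENNReal.ofReal ((infDist y S)⁻¹ ^ d) *
        ∫⁻ x in ball y (s * infDist y S), F x ∂μ ∂μ := by
  have hmul (x : E) : F x * ∫⁻ y, whitneyKernel S d s x y ∂μ =
      ∫⁻ y, F x * whitneyKernel S d s x y ∂μ :=
    (lintegral_const_mul _ ((measurable_whitneyKernel d).comp measurable_prodMk_left)).symm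
  simp_rw [hmul]
  rw [lintegral_lintegral_swap
    ((hF.comp measurable_fst).mul (measurable_whitneyKernel d)).aemeasurable]
  refine lintegral_congr fun y => ?_
  rw [← lintegral_const_mul _ hF, ← lintegral_indicator measurableSet_ball]
  refine lintegral_congr fun x => ?_
  simp only [whitneyKernel, indicator, mul_comm (F x), ite_mul, zero_mul]

variable [μ.IsAddHaarMeasure]

lemma setLIntegral_ball_inv_pow (x : E) {t c r : ℝ} (ht : 0 < t) (hc : 0 < c) (hr : 0 < r) :
    ∫⁻ _ in ball x (t * r), ENNReal.ofReal ((c * r)⁻¹ ^ Module.finrank ℝ E) ∂μ =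
      ENNReal.ofReal ((t / c) ^ Module.finrank ℝ E) * μ (ball 0 1) := by
  rw [setLIntegral_const, Measure.addHaar_ball_of_pos μ x (by positivity), ← mul_assoc,
    ← ENNReal.ofReal_mul (by positivity), ← mul_pow]
  congr 3
  field_simp

lemma le_lintegral_whitneyKernel (hs : 0 < s) (hs' : s ≤ 1 / 2) (hx : 0 < infDist x S) :
    ENNReal.ofReal ((s / 4) ^ Module.finrank ℝ E) * μ (ball 0 1) ≤
      ∫⁻ y, whitneyKernel S (Module.finrank ℝ E) s x y ∂μ := by
  rw [show s / 4 = s / 2 / 2 by ring,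
    ← setLIntegral_ball_inv_pow μ x (half_pos hs) two_pos hx,
    ← lintegral_indicator measurableSet_ball]
  refine lintegral_mono (indicator_le fun y hy => ?_)
  rw [mem_ball] at hy
  have hy_half : dist y x ≤ 1 / 2 * infDist x S := hy.le.trans (by gcongr; linarith)
  have hxy := infDist_le_two_mul_infDist hy_half
  have hyx : infDist y S ≤ 2 * infDist x S := by
    linarith [infDist_le_infDist_add_dist (s := S) (x := y) (y := x)]
  have hmem : x ∈ ball y (s * infDist y S) := by
    rw [mem_ball, dist_comm]
    nlinarith
  have hy_pos : 0 < infDist y S := by linarith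
  rw [whitneyKernel, indicator_of_mem hmem]
  gcongr

lemma lintegral_whitneyKernel_le (hs : 0 < s) (hs' : s ≤ 1 / 2) (hx : 0 < infDist x S) :
    ∫⁻ y, whitneyKernel S (Module.finrank ℝ E) s x y ∂μ ≤
      ENNReal.ofReal ((4 * s) ^ Module.finrank ℝ E) * μ (ball 0 1) := by
  rw [show 4 * s = 2 * s / (1 / 2) by ring,
    ← setLIntegral_ball_inv_pow μ x (mul_pos two_pos hs) one_half_pos hx,
    ← lintegral_indicator measurableSet_ball]
  refine lintegral_mono fun y => ?_
  by_cases hxy : x ∈ ball y (s * infDist y S)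
  · rw [whitneyKernel, indicator_of_mem hxy]
    rw [mem_ball] at hxy
    have hle : infDist y S ≤ 2 * infDist x S :=
      infDist_le_two_mul_infDist (hxy.le.trans (by gcongr; exact infDist_nonneg))
    have hle' : infDist x S ≤ 2 * infDist y S := by
      nlinarith [infDist_le_infDist_add_dist (s := S) (x := x) (y := y),
        infDist_nonneg (x := y) (s := S)]
    have hmem : y ∈ ball x (2 * s * infDist x S) := by
      rw [mem_ball, dist_comm]
      nlinarith
    rw [indicator_of_mem hmem]
    have hy_pos : 0 < infDist y S := by linarith
    gcongr
    linarith
  · rw [whitneyKernel, indicator_of_notMem hxy]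
    exact zero_le

lemma lintegral_mul_le_of_forall_ball {κ : ℝ} (hκ : 0 < κ) (hκ' : κ ≤ 1 / 2) {C : ℝ≥0}
    {F G : E → ℝ≥0∞} (hF : Measurable F) (hG : Measurable G)
    (hF₀ : ∀ x, infDist x S = 0 → F x = 0) (hG₀ : ∀ x, infDist x S = 0 → G x = 0)
    (hloc : ∀ y, 0 < infDist y S → ∫⁻ x in ball y (κ / 2 * infDist y S), F x ∂μ ≤
      C * ∫⁻ x in ball y (κ * infDist y S), G x ∂μ) :
    (∫⁻ x, F x ∂μ) * (ENNReal.ofReal ((κ / 2 / 4) ^ Module.finrank ℝ E) * μ (ball 0 1)) ≤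
      C * ((∫⁻ x, G x ∂μ) * (ENNReal.ofReal ((4 * κ) ^ Module.finrank ℝ E) * μ (ball 0 1))) := by
  set d := Module.finrank ℝ E
  calc (∫⁻ x, F x ∂μ) * (ENNReal.ofReal ((κ / 2 / 4) ^ d) * μ (ball 0 1))
      = ∫⁻ x, F x * (ENNReal.ofReal ((κ / 2 / 4) ^ d) * μ (ball 0 1)) ∂μ :=
        (lintegral_mul_const _ hF).symm
    _ ≤ ∫⁻ x, F x * ∫⁻ y, whitneyKernel S d (κ / 2) x y ∂μ ∂μ := by
        refine lintegral_mono fun x => ?_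
        rcases (infDist_nonneg (x := x) (s := S)).eq_or_lt' with hx | hx
        · simp only [hF₀ x hx, zero_mul, le_refl]
        · gcongr
          exact le_lintegral_whitneyKernel μ (half_pos hκ) (by linarith) hx
    _ ≤ ∫⁻ y, C * (ENNReal.ofReal ((infDist y S)⁻¹ ^ d) *
          ∫⁻ x in ball y (κ * infDist y S), G x ∂μ) ∂μ := by
        rw [lintegral_mul_lintegral_whitneyKernel μ d hF]
        refine lintegral_mono fun y => ?_
        rcases (infDist_nonneg (x := y) (s := S)).eq_or_lt' with hy | hy
        · simp only [hy, mul_zero, ball_zero, Measure.restrict_empty, lintegral_zero_measure,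
            zero_le]
        · rw [mul_left_comm]
          gcongr
          exact hloc y hy
    _ = C * ∫⁻ x, G x * ∫⁻ y, whitneyKernel S d κ x y ∂μ ∂μ := by
        rw [lintegral_const_mul' _ _ ENNReal.coe_ne_top,
          lintegral_mul_lintegral_whitneyKernel μ d hG]
    _ ≤ C * ∫⁻ x, G x * (ENNReal.ofReal ((4 * κ) ^ d) * μ (ball 0 1)) ∂μ := by
        refine mul_le_mul_right (lintegral_mono fun x => ?_) _
        rcases (infDist_nonneg (x := x) (s := S)).eq_or_lt' with hx | hx
        · simp only [hG₀ x hx, zero_mul, le_refl]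
        · gcongr
          exact lintegral_whitneyKernel_le μ hκ hκ' hx
    _ = _ := by rw [lintegral_mul_const _ hG]

theorem exists_lintegral_le_of_forall_ball {κ : ℝ} (hκ : 0 < κ) (hκ' : κ ≤ 1 / 2) (C : ℝ≥0) :
    ∃ C' : ℝ≥0, ∀ F G : E → ℝ≥0∞, Measurable F → Measurable G →
      (∀ x, infDist x S = 0 → F x = 0) → (∀ x, infDist x S = 0 → G x = 0) →
      (∀ y, 0 < infDist y S → ∫⁻ x in ball y (κ / 2 * infDist y S), F x ∂μ ≤
        C * ∫⁻ x in ball y (κ * infDist y S), G x ∂μ) →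
      ∫⁻ x, F x ∂μ ≤ C' * ∫⁻ x, G x ∂μ := by
  set A := ENNReal.ofReal ((κ / 2 / 4) ^ Module.finrank ℝ E) * μ (ball 0 1)
  set B := ENNReal.ofReal ((4 * κ) ^ Module.finrank ℝ E) * μ (ball 0 1)
  have hA : A ≠ 0 :=
    mul_ne_zero (ENNReal.ofReal_pos.2 (by positivity)).ne' (measure_ball_pos μ 0 one_pos).ne'
  have hA' : A ≠ ⊤ := ENNReal.mul_ne_top ENNReal.ofReal_ne_top measure_ball_lt_top.ne
  have hB : B ≠ ⊤ := ENNReal.mul_ne_top ENNReal.ofReal_ne_top measure_ball_lt_top.ne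
  refine ⟨(A⁻¹ * (C * B)).toNNReal, fun F G hF hG hF₀ hG₀ hloc => ?_⟩
  rw [ENNReal.coe_toNNReal (ENNReal.mul_ne_top (ENNReal.inv_ne_top.2 hA)
    (ENNReal.mul_ne_top ENNReal.coe_ne_top hB))]
  calc _ = A⁻¹ * ((∫⁻ x, F x ∂μ) * A) := by
        rw [mul_comm _ A, ← mul_assoc, ENNReal.inv_mul_cancel hA hA', one_mul]
    _ ≤ A⁻¹ * (C * ((∫⁻ x, G x ∂μ) * B)) :=
        mul_right_mono (lintegral_mul_le_of_forall_ball μ hκ hκ' hF hG hF₀ hG₀ hloc)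
    _ = _ := by ring

end WhitneyKernel

/-! ### The scaled local estimate -/

section Frames

variable {E ι : Type*} [NormedAddCommGroup E] [InnerProductSpace ℝ E] {i₀ : ι}
  {Ω : Set E} {v y : E} {c R : ℝ}

section

variable [MeasurableSpace E] (μ : Measure E) (A : Set E) (k : ℝ) (b : ι → E) (u : E → ℝ)
  (L : List ι)

lemma l2NormSq_dirDeriv_map_smul :
    l2NormSq μ A (dirDeriv (L.map (k • b)) u) =
      ENNReal.ofReal (k ^ 2) ^ L.length * l2NormSq μ A (dirDeriv (L.map b) u) := by
  rw [dirDeriv_map_smul, l2NormSq_const_smul, pow_right_comm,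
    ENNReal.ofReal_pow (sq_nonneg k)]

lemma l2NormSq_dirDeriv_frameLaplacian_smul [Fintype ι] :
    l2NormSq μ A (dirDeriv (L.map (k • b)) (frameLaplacian (k • b) u)) =
      ENNReal.ofReal (k ^ 2) ^ (L.length + 2) *
        l2NormSq μ A (dirDeriv (L.map b) (frameLaplacian b u)) := by
  rw [frameLaplacian_smul, dirDeriv_const_smul, l2NormSq_const_smul, l2NormSq_dirDeriv_map_smul,
    ENNReal.ofReal_pow (sq_nonneg k)]
  ring

end

variable [Fintype ι]

lemma exists_orthonormalBasis_inner_eq_zero [FiniteDimensional ℝ E]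
    (hι : Module.finrank ℝ E = Fintype.card ι) (hv : v ≠ 0) (i₀ : ι) :
    ∃ o : OrthonormalBasis ι ℝ E, ∀ i ≠ i₀, ⟪v, o i⟫ = 0 := by
  have hunit : Orthonormal ℝ (({i₀} : Set ι).domRestrict fun _ => ‖v‖⁻¹ • v) :=
    ⟨fun _ => norm_smul_inv_norm hv, fun i j hij => absurd (Subsingleton.elim i j) hij⟩
  obtain ⟨o, ho⟩ := hunit.exists_orthonormalBasis_extension_of_card_eq hι
  refine ⟨o, fun i hi => ?_⟩
  have hi₀ : ⟪o i₀, o i⟫ = 0 := o.orthonormal.2 hi.symm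
  rw [ho i₀ rfl, inner_smul_left] at hi₀
  simpa [hv] using hi₀

lemma isFlatFrame_of_frontier_subset_hyperplane [CompleteSpace E] (hΩ : IsOpen Ω)
    (hΩ' : frontier Ω = frontier (closure Ω)) (hv : v ≠ 0) (hR : 0 < R)
    (hF : ball y R ∩ frontier Ω ⊆ {x | ⟪v, x⟫ = c}) (o : OrthonormalBasis ι ℝ E)
    (ho : ∀ i ≠ i₀, ⟪v, o i⟫ = 0) : IsFlatFrame i₀ Ω y R (R • ⇑o) where
  isOpen := hΩ
  pos := hR
  norm_le i := by simp [norm_smul, abs_of_pos hR]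
  add_smul_mem i hi x hx t hxt hxΩ :=
    add_mem_of_frontier_subset_hyperplane hΩ hΩ' hv hF
      (by simp [inner_smul_right, ho i hi]) hx hxt hxΩ

lemma smul_orthonormalBasis_eq_sum (e o : OrthonormalBasis ι ℝ E) (i : ι) :
    (R • ⇑e) i = ∑ j, ⟪o j, e i⟫ • (R • ⇑o) j := by
  simp only [Pi.smul_apply, smul_comm _ R, ← Finset.smul_sum, o.sum_repr']

lemma frameLaplacian_orthonormalBasis [FiniteDimensional ℝ E] (e : OrthonormalBasis ι ℝ E)
    {G : Set E} (hG : IsOpen G) {u : E → ℝ} (hu : ContDiffOn ℝ ∞ u G) :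
    EqOn (frameLaplacian e u) (Laplacian.laplacian u) G := by
  intro x hx
  simp only [frameLaplacian, dirDeriv_pair hG hu _ _ hx,
    InnerProductSpace.laplacian_eq_iteratedFDeriv_orthonormalBasis u e,
    iteratedFDeriv_two_apply]
  simp

variable [MeasurableSpace E] [BorelSpace E] (μ : Measure E)

section ChangeOfFrame

variable {o e : ι → E} {a : ι → ι → ℝ} {G : Set E} {u : E → ℝ} {M : ℝ≥0∞}
  (ha : ∀ i j, |a i j| ≤ 1) (he : ∀ i, e i = ∑ j, a i j • o j) (hG : IsOpen G)
  (hu : ContDiffOn ℝ ∞ u G)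
include ha he hG hu

lemma l2NormSq_dirDeriv_append_le_of_frame (L J : List ι)
    (h : ∀ J' : List ι, J'.length = L.length + J.length →
      l2NormSq μ G (dirDeriv (J'.map o) u) ≤ M) :
    l2NormSq μ G (dirDeriv (L.map e ++ J.map o) u) ≤
      ((Fintype.card ι : ℝ≥0∞) ^ 2) ^ L.length * M := by
  induction L generalizing J with
  | nil => simpa using h J (by simp)
  | cons i L ih =>
    set D := L.map e ++ J.map o with hD
    have hexpand : dirDeriv ((i :: L).map e ++ J.map o) u =
        fun x => ∑ j, (a i j • dirDeriv (o j :: D) u) x := by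
      ext x
      simp only [List.map_cons, List.cons_append, dirDeriv_cons, he i, map_sum, map_smul,
        Pi.smul_apply, hD]
    have hterm (j : ι) : l2NormSq μ G (a i j • dirDeriv (o j :: D) u) ≤
        ((Fintype.card ι : ℝ≥0∞) ^ 2) ^ L.length * M := by
      have hperm : (o j :: D).Perm (L.map e ++ (j :: J).map o) := List.perm_middle.symm
      calc _ ≤ 1 * l2NormSq μ G (dirDeriv (o j :: D) u) := by
            rw [l2NormSq_const_smul]
            gcongr
            simpa using (sq_le_one_iff_abs_le_one _).2 (ha i j)
        _ = l2NormSq μ G (dirDeriv (L.map e ++ (j :: J).map o) u) := by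
            rw [one_mul, l2NormSq_congr μ hG.measurableSet (dirDeriv_perm hG hu hperm)]
        _ ≤ _ := ih (j :: J) fun J' hJ' => h J' (by simp only [List.length_cons] at *; omega)
    rw [hexpand]
    calc _ ≤ (Fintype.card ι : ℝ≥0∞) * ∑ j, l2NormSq μ G (a i j • dirDeriv (o j :: D) u) :=
          l2NormSq_sum_le μ hG.measurableSet Finset.univ fun j _ =>
            continuousOn_const.smul (contDiffOn_dirDeriv hG hu _).continuousOn
      _ ≤ (Fintype.card ι : ℝ≥0∞) *
            ∑ _j : ι, ((Fintype.card ι : ℝ≥0∞) ^ 2) ^ L.length * M := by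
          gcongr with j
          exact hterm j
      _ = ((Fintype.card ι : ℝ≥0∞) ^ 2) ^ (i :: L).length * M := by
          rw [Finset.sum_const, Finset.card_univ, nsmul_eq_mul, List.length_cons]
          ring

lemma l2NormSq_dirDeriv_le_of_frame [Nonempty ι] {k : ℕ} (h : ∀ J : List ι, J.length ≤ k →
      l2NormSq μ G (dirDeriv (J.map o) u) ≤ M) {L : List ι} (hL : L.length ≤ k) :
    l2NormSq μ G (dirDeriv (L.map e) u) ≤ ((Fintype.card ι : ℝ≥0∞) ^ 2) ^ k * M := by
  calc _ ≤ ((Fintype.card ι : ℝ≥0∞) ^ 2) ^ L.length * M := by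
        simpa using l2NormSq_dirDeriv_append_le_of_frame μ ha he hG hu L []
          fun J hJ => h J (by simp at hJ; omega)
    _ ≤ _ := by
        gcongr
        exact one_le_pow₀ (by exact_mod_cast Fintype.card_pos)

end ChangeOfFrame

variable [FiniteDimensional ℝ E]

lemma isBoundedSolution_of_frame [Nonempty ι] (e o : OrthonormalBasis ι ℝ E) {u : E → ℝ} {m : ℕ}
    {M : ℝ≥0} (hflat : IsFlatFrame i₀ Ω y R (R • ⇑o)) (hu : IsDirichletOn Ω (ball y R) u)
    (hM : l2NormSq μ (Ω ∩ ball y R) u ≤ M)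
    (hM' : ∀ L : List ι, L.length ≤ m → l2NormSq μ (Ω ∩ ball y R)
      (dirDeriv (L.map (R • ⇑e)) (frameLaplacian (R • ⇑e) u)) ≤ M) :
    IsBoundedSolution μ i₀ Ω y R (R • ⇑o) 1 m u ((Fintype.card ι ^ 2) ^ m * M) := by
  have hG : IsOpen (Ω ∩ ball y R) := hflat.isOpen.inter isOpen_ball
  have hlap : EqOn (frameLaplacian (R • ⇑o) u) (frameLaplacian (R • ⇑e) u) (Ω ∩ ball y R) := by
    intro x hx
    simp only [frameLaplacian_smul, Pi.smul_apply,
      frameLaplacian_orthonormalBasis _ hG hu.contDiffOn hx]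
  refine ⟨hflat, by rwa [one_mul], ?_, fun L hL => ?_⟩
  · rw [one_mul]
    refine hM.trans (ENNReal.coe_le_coe.2 (le_mul_of_one_le_left zero_le ?_))
    exact one_le_pow₀ (one_le_pow₀ (by exact_mod_cast Fintype.card_pos))
  · rw [one_mul, l2NormSq_congr μ hG.measurableSet (eqOn_dirDeriv hG hlap _)]
    push_cast
    exact l2NormSq_dirDeriv_le_of_frame μ
      (fun i j => by simpa using abs_real_inner_le_norm (e j) (o i))
      (smul_orthonormalBasis_eq_sum o e) hG (contDiffOn_frameLaplacian _ hG hu.contDiffOn) hM' hL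

theorem exists_l2NormSq_dirDeriv_le_of_frontier_subset_hyperplane [μ.IsAddHaarMeasure]
    [Nonempty ι] (e : OrthonormalBasis ι ℝ E) (m : ℕ) :
    ∃ C : ℝ≥0, ∀ {Ω : Set E} {v y : E} {c R : ℝ} {u : E → ℝ} {M : ℝ≥0∞}, IsOpen Ω →
      frontier Ω = frontier (closure Ω) → v ≠ 0 → 0 < R →
      ball y R ∩ frontier Ω ⊆ {x | ⟪v, x⟫ = c} → IsDirichletOn Ω (ball y R) u →
      l2NormSq μ (Ω ∩ ball y R) u ≤ M →
      (∀ L : List ι, L.length ≤ m → l2NormSq μ (Ω ∩ ball y R)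
        (dirDeriv (L.map (R • ⇑e)) (frameLaplacian (R • ⇑e) u)) ≤ M) →
      ∀ L : List ι, L.length ≤ m + 2 →
        l2NormSq μ (Ω ∩ ball y (1 / 2 * R)) (dirDeriv (L.map (R • ⇑e)) u) ≤ C * M := by
  obtain ⟨C, hC⟩ := exists_l2NormSq_dirDeriv_le μ ι m
  set N : ℝ≥0 := Fintype.card ι ^ 2
  refine ⟨N ^ (m + 2) * (C * N ^ m) + 1, fun {Ω v y c R u M} hΩ hΩ' hv hR hF hu hM hM' L hL => ?_⟩
  obtain rfl | hMtop := eq_or_ne M ⊤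
  · simp
  lift M to ℝ≥0 using hMtop
  obtain ⟨i₀⟩ := ‹Nonempty ι›
  obtain ⟨o, ho⟩ := exists_orthonormalBasis_inner_eq_zero
    (Module.finrank_eq_card_basis e.toBasis) hv i₀
  have hflat := isFlatFrame_of_frontier_subset_hyperplane hΩ hΩ' hv hR hF o ho
  have hsol := isBoundedSolution_of_frame μ e o hflat hu hM hM'
  calc _ ≤ ((Fintype.card ι : ℝ≥0∞) ^ 2) ^ (m + 2) * (C * (N ^ m * M) : ℝ≥0) :=
        l2NormSq_dirDeriv_le_of_frame μ
          (fun i j => by simpa using abs_real_inner_le_norm (o j) (e i))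
          (smul_orthonormalBasis_eq_sum e o) (hflat.isOpen_inter _)
          (hsol.contDiffOn.mono (hflat.inter_subset (by norm_num))) (hC hsol) hL
    _ = (N ^ (m + 2) * (C * N ^ m) : ℝ≥0) * M := by
        push_cast [N]
        ring
    _ ≤ _ := by
        gcongr
        exact le_self_add

end Frames

/-! ### Kondratiev densities -/

section MultiIndex

variable {n : ℕ}

lemma mem_multiIndicesLE {m : ℕ} {β : Fin n → ℕ} : β ∈ multiIndicesLE n m ↔ ∑ i, β i ≤ m := by
  simp only [multiIndicesLE, Finset.mem_image, Finset.mem_filter, Finset.mem_univ, true_and]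
  refine ⟨fun ⟨_, hγ, h⟩ => h ▸ hγ, fun h => ?_⟩
  have hβ (i : Fin n) : β i < m + 1 :=
    Nat.lt_succ_of_le <|
      (Finset.single_le_sum (fun _ _ => Nat.zero_le _) (Finset.mem_univ i)).trans h
  exact ⟨fun i => ⟨β i, hβ i⟩, h, rfl⟩

/-- The coordinate directions, in increasing order and with multiplicity, along which
`pderivMulti β` differentiates. -/
def multiIndexList (β : Fin n → ℕ) : List (Fin n) :=
  (List.finRange n).flatMap fun i => List.replicate (β i) i

lemma length_multiIndexList (β : Fin n → ℕ) : (multiIndexList β).length = ∑ i, β i := by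
  simp [multiIndexList, List.length_flatMap, Fin.sum_univ_def]

lemma perm_multiIndexList_count (L : List (Fin n)) :
    L.Perm (multiIndexList fun i => L.count i) := by
  rw [List.perm_iff_count]
  intro i
  rw [multiIndexList, List.count_flatMap, ← Fin.sum_univ_def]
  simp [List.count_replicate]

lemma sum_count_eq_length (L : List (Fin n)) : ∑ i, L.count i = L.length := by
  rw [(perm_multiIndexList_count L).length_eq, length_multiIndexList]

lemma derivAlong_eq_dirDeriv (L : List (Fin n)) (u : EuclideanSpace ℝ (Fin n) → ℝ) :
    derivAlong L u = dirDeriv (L.map (EuclideanSpace.basisFun (Fin n) ℝ)) u := by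
  induction L with
  | nil => rfl
  | cons i L ih =>
    simp only [derivAlong, List.map_cons, dirDeriv_cons, ih, EuclideanSpace.basisFun_apply]

lemma laplaceOp_eq_frameLaplacian :
    laplaceOp (n := n) = frameLaplacian (EuclideanSpace.basisFun (Fin n) ℝ) := by
  ext u x
  simp [laplaceOp, frameLaplacian, derivAlong_eq_dirDeriv]

lemma pderivMulti_eq_dirDeriv (β : Fin n → ℕ) (u : EuclideanSpace ℝ (Fin n) → ℝ) :
    pderivMulti β u = dirDeriv ((multiIndexList β).map (EuclideanSpace.basisFun (Fin n) ℝ)) u :=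
  derivAlong_eq_dirDeriv _ _

lemma pderivMulti_zero (u : EuclideanSpace ℝ (Fin n) → ℝ) : pderivMulti 0 u = u := by
  have h : multiIndexList (0 : Fin n → ℕ) = [] := by
    simp [← List.length_eq_zero_iff, length_multiIndexList]
  rw [pderivMulti_eq_dirDeriv, h, List.map_nil, dirDeriv_nil]

variable {G : Set (EuclideanSpace ℝ (Fin n))} {u v : EuclideanSpace ℝ (Fin n) → ℝ}

lemma eqOn_pderivMulti (hG : IsOpen G) (h : EqOn u v G) (β : Fin n → ℕ) :
    EqOn (pderivMulti β u) (pderivMulti β v) G := by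
  simpa only [pderivMulti_eq_dirDeriv] using eqOn_dirDeriv hG h _

lemma continuousOn_pderivMulti (hG : IsOpen G) (hu : ContDiffOn ℝ ∞ u G) (β : Fin n → ℕ) :
    ContinuousOn (pderivMulti β u) G := by
  rw [pderivMulti_eq_dirDeriv]
  exact (contDiffOn_dirDeriv hG hu _).continuousOn

lemma contDiffOn_laplaceOp (hG : IsOpen G) (hu : ContDiffOn ℝ ∞ u G) :
    ContDiffOn ℝ ∞ (laplaceOp u) G := by
  rw [laplaceOp_eq_frameLaplacian]
  exact contDiffOn_frameLaplacian _ hG hu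

lemma eqOn_dirDeriv_pderivMulti_count (hG : IsOpen G) (hu : ContDiffOn ℝ ∞ u G)
    (L : List (Fin n)) :
    EqOn (dirDeriv (L.map (EuclideanSpace.basisFun (Fin n) ℝ)) u)
      (pderivMulti (fun i => L.count i) u) G := by
  rw [pderivMulti_eq_dirDeriv]
  exact dirDeriv_perm hG hu ((perm_multiIndexList_count L).map _)

end MultiIndex

section Density

variable {n : ℕ} (Ω S : Set (EuclideanSpace ℝ (Fin n)))

/-- The integrand of the term of `KnormSq` with multi-index `β`. -/
def kondratievTerm (a : ℝ) (β : Fin n → ℕ) (u : EuclideanSpace ℝ (Fin n) → ℝ)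
    (x : EuclideanSpace ℝ (Fin n)) : ℝ≥0∞ :=
  ENNReal.ofReal (infDist x S ^ (2 * (((∑ i, β i : ℕ) : ℝ) - a)) * pderivMulti β u x ^ 2)

/-- The density of the squared Babuška–Kondratiev norm, extended by zero off `Ω` so that it can be
integrated over arbitrary balls. -/
def kondratievDensity (m : ℕ) (a : ℝ) (u : EuclideanSpace ℝ (Fin n) → ℝ) :
    EuclideanSpace ℝ (Fin n) → ℝ≥0∞ :=
  fun x => ∑ β ∈ multiIndicesLE n m, Ω.indicator (kondratievTerm S a β u) x

variable {Ω S} {u v : EuclideanSpace ℝ (Fin n) → ℝ}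

lemma kondratievDensity_eq_zero (hη : ∀ x ∈ Ω, 0 < infDist x S) (m : ℕ) (a : ℝ)
    {x : EuclideanSpace ℝ (Fin n)} (hx : infDist x S = 0) : kondratievDensity Ω S m a u x = 0 :=
  Finset.sum_eq_zero fun _ _ => indicator_of_notMem (fun hxΩ => (hη x hxΩ).ne' hx) _

lemma KnormSq_congr (hΩ : IsOpen Ω) (h : EqOn u v Ω) (m : ℕ) (a : ℝ) :
    KnormSq Ω S m a u = KnormSq Ω S m a v :=
  Finset.sum_congr rfl fun β _ => setLIntegral_congr_fun hΩ.measurableSet fun x hx => by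
    simp only [eqOn_pderivMulti hΩ h β hx]

lemma KnormSq_mono {k m : ℕ} (hkm : k ≤ m) (a : ℝ) (u : EuclideanSpace ℝ (Fin n) → ℝ) :
    KnormSq Ω S k a u ≤ KnormSq Ω S m a u :=
  Finset.sum_le_sum_of_subset fun _ hβ =>
    mem_multiIndicesLE.2 ((mem_multiIndicesLE.1 hβ).trans hkm)

variable (hΩ : IsOpen Ω) (hη : ∀ x ∈ Ω, 0 < infDist x S) (hu : ContDiffOn ℝ ∞ u Ω)
include hΩ hη hu

lemma measurable_indicator_kondratievTerm (a : ℝ) (β : Fin n → ℕ) :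
    Measurable (Ω.indicator (kondratievTerm S a β u)) := by
  have hcont : ContinuousOn (kondratievTerm S a β u) Ω :=
    ENNReal.continuous_ofReal.comp_continuousOn <|
      ((continuous_infDist_pt S).continuousOn.rpow_const fun x hx => .inl (hη x hx).ne').mul
        ((continuousOn_pderivMulti hΩ hu β).pow 2)
  classical
  rw [← piecewise_eq_indicator]
  exact hcont.measurable_piecewise continuousOn_const hΩ.measurableSet

lemma measurable_kondratievDensity (m : ℕ) (a : ℝ) : Measurable (kondratievDensity Ω S m a u) :=
  Finset.measurable_fun_sum _ fun β _ => measurable_indicator_kondratievTerm hΩ hη hu a β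

lemma setLIntegral_kondratievDensity (m : ℕ) (a : ℝ) (A : Set (EuclideanSpace ℝ (Fin n))) :
    ∫⁻ x in A, kondratievDensity Ω S m a u x =
      ∑ β ∈ multiIndicesLE n m, ∫⁻ x in Ω ∩ A, kondratievTerm S a β u x := by
  simp only [kondratievDensity]
  rw [lintegral_finsetSum _ fun β _ => measurable_indicator_kondratievTerm hΩ hη hu a β]
  exact Finset.sum_congr rfl fun β _ => setLIntegral_indicator hΩ.measurableSet _

lemma setLIntegral_kondratievTerm_le {m : ℕ} (a : ℝ) (A : Set (EuclideanSpace ℝ (Fin n)))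
    {β : Fin n → ℕ} (hβ : ∑ i, β i ≤ m) :
    ∫⁻ x in Ω ∩ A, kondratievTerm S a β u x ≤ ∫⁻ x in A, kondratievDensity Ω S m a u x := by
  rw [setLIntegral_kondratievDensity hΩ hη hu]
  exact Finset.single_le_sum (f := fun β => ∫⁻ x in Ω ∩ A, kondratievTerm S a β u x)
    (fun _ _ => zero_le) (mem_multiIndicesLE.2 hβ)

lemma KnormSq_eq_lintegral_kondratievDensity (m : ℕ) (a : ℝ) :
    KnormSq Ω S m a u = ∫⁻ x, kondratievDensity Ω S m a u x := by
  rw [← setLIntegral_univ, setLIntegral_kondratievDensity hΩ hη hu, inter_univ]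
  rfl

end Density

section Weights

variable {R q η : ℝ} (hR : 0 < R) (hRη : R ≤ η)

lemma rpow_two_mul_sub_one (hη : 0 < η) (k : ℕ) :
    η ^ (2 * ((k : ℝ) - 1)) = (η ^ 2) ^ k / η ^ 2 := by
  rw [show 2 * ((k : ℝ) - 1) = ((2 * k : ℕ) : ℝ) - ((2 : ℕ) : ℝ) by push_cast; ring,
    Real.rpow_sub hη, Real.rpow_natCast, Real.rpow_natCast, pow_mul]

lemma rpow_two_mul_sub_neg_one (η : ℝ) (k : ℕ) :
    η ^ (2 * ((k : ℝ) - -1)) = (η ^ 2) ^ (k + 1) := by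
  rw [show 2 * ((k : ℝ) - -1) = ((2 * (k + 1) : ℕ) : ℝ) by push_cast; ring,
    Real.rpow_natCast, pow_mul]

include hR hRη

lemma sq_mul_rpow_le (hηq : η ≤ q * R) (k : ℕ) :
    R ^ 2 * η ^ (2 * ((k : ℝ) - 1)) ≤ (q ^ 2) ^ k * (R ^ 2) ^ k := by
  have hη : 0 < η := hR.trans_le hRη
  calc R ^ 2 * η ^ (2 * ((k : ℝ) - 1)) = R ^ 2 / η ^ 2 * (η ^ 2) ^ k := by
        rw [rpow_two_mul_sub_one hη]
        ring
    _ ≤ 1 * ((q * R) ^ 2) ^ k := by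
        gcongr
        exact div_le_one_of_le₀ (by gcongr) (sq_nonneg η)
    _ = (q ^ 2) ^ k * (R ^ 2) ^ k := by rw [one_mul, mul_pow, mul_pow]

lemma pow_add_two_le_sq_mul_rpow (k : ℕ) :
    (R ^ 2) ^ (k + 2) ≤ R ^ 2 * η ^ (2 * ((k : ℝ) - -1)) := by
  rw [rpow_two_mul_sub_neg_one, pow_succ' (R ^ 2) (k + 1)]
  gcongr

lemma one_le_sq_mul_sq_mul_rpow (hηq : η ≤ q * R) :
    1 ≤ q ^ 2 * (R ^ 2 * η ^ (2 * (((0 : ℕ) : ℝ) - 1))) := by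
  have hη : 0 < η := hR.trans_le hRη
  rw [rpow_two_mul_sub_one hη, pow_zero, ← mul_assoc, ← mul_pow, mul_one_div,
    one_le_div (by positivity)]
  gcongr

end Weights

lemma ofReal_mul_setLIntegral_ofReal_le {α : Type*} [MeasurableSpace α] {μ : Measure α}
    {A : Set α} (hA : MeasurableSet A) {p q : ℝ} (hp : 0 ≤ p) (hq : 0 ≤ q) {f g : α → ℝ}
    (h : ∀ x ∈ A, p * f x ≤ q * g x) :
    ENNReal.ofReal p * ∫⁻ x in A, ENNReal.ofReal (f x) ∂μ ≤
      ENNReal.ofReal q * ∫⁻ x in A, ENNReal.ofReal (g x) ∂μ := by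
  rw [← lintegral_const_mul' _ _ ENNReal.ofReal_ne_top,
    ← lintegral_const_mul' _ _ ENNReal.ofReal_ne_top]
  refine setLIntegral_mono' hA fun x hx => ?_
  rw [← ENNReal.ofReal_mul hp, ← ENNReal.ofReal_mul hq]
  exact ENNReal.ofReal_le_ofReal (h x hx)

section LocalComparison

variable {n : ℕ} {Ω S A : Set (EuclideanSpace ℝ (Fin n))} {u : EuclideanSpace ℝ (Fin n) → ℝ}
  {R q : ℝ} {m : ℕ} (hΩ : IsOpen Ω) (hη : ∀ x ∈ Ω, 0 < infDist x S) (hu : ContDiffOn ℝ ∞ u Ω)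
  (hA : MeasurableSet A) (hR : 0 < R) (hRη : ∀ x ∈ Ω ∩ A, R ≤ infDist x S)
include hΩ hη hu hA hR hRη

lemma l2NormSq_dirDeriv_frameLaplacian_le_kondratievDensity {L : List (Fin n)}
    (hL : L.length ≤ m) :
    l2NormSq volume (Ω ∩ A) (dirDeriv (L.map (R • ⇑(EuclideanSpace.basisFun (Fin n) ℝ)))
        (frameLaplacian (R • ⇑(EuclideanSpace.basisFun (Fin n) ℝ)) u)) ≤
      ENNReal.ofReal (R ^ 2) * ∫⁻ x in A, kondratievDensity Ω S m (-1) (laplaceOp u) x := by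
  have hlap := contDiffOn_laplaceOp hΩ hu
  have hΩA : MeasurableSet (Ω ∩ A) := hΩ.measurableSet.inter hA
  rw [l2NormSq_dirDeriv_frameLaplacian_smul, ← laplaceOp_eq_frameLaplacian,
    l2NormSq_congr volume hΩA
      ((eqOn_dirDeriv_pderivMulti_count hΩ hlap L).mono inter_subset_left),
    ← ENNReal.ofReal_pow (sq_nonneg R)]
  refine (ofReal_mul_setLIntegral_ofReal_le hΩA (by positivity) (sq_nonneg R) fun x hx => ?_).trans
    (mul_right_mono (setLIntegral_kondratievTerm_le hΩ hη hlap (-1) A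
      ((sum_count_eq_length L).trans_le hL)))
  rw [sum_count_eq_length, ← mul_assoc]
  exact mul_le_mul_of_nonneg_right (pow_add_two_le_sq_mul_rpow hR (hRη x hx) _) (sq_nonneg _)

variable (hηq : ∀ x ∈ Ω ∩ A, infDist x S ≤ q * R)
include hηq

lemma l2NormSq_le_kondratievDensity :
    l2NormSq volume (Ω ∩ A) u ≤ ENNReal.ofReal (q ^ 2) *
      (ENNReal.ofReal (R ^ 2) * ∫⁻ x in A, kondratievDensity Ω S 0 1 u x) := by
  have hterm := setLIntegral_kondratievTerm_le hΩ hη hu 1 A (β := 0) (m := 0) (by simp)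
  rw [← mul_assoc, ← ENNReal.ofReal_mul (sq_nonneg q), ← one_mul (l2NormSq _ _ _),
    ← ENNReal.ofReal_one]
  refine (ofReal_mul_setLIntegral_ofReal_le (hΩ.measurableSet.inter hA) zero_le_one
    (by positivity) fun x hx => ?_).trans (mul_right_mono hterm)
  simp only [pderivMulti_zero, Pi.zero_apply, Finset.sum_const_zero]
  rw [← mul_assoc, mul_assoc (q ^ 2)]
  exact mul_le_mul_of_nonneg_right (one_le_sq_mul_sq_mul_rpow hR (hRη x hx) (hηq x hx))
    (sq_nonneg _)

lemma kondratievDensity_le_of_l2NormSq_dirDeriv_le (hq : 1 ≤ q) {M : ℝ≥0∞}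
    (hM : ∀ L : List (Fin n), L.length ≤ m → l2NormSq volume (Ω ∩ A)
      (dirDeriv (L.map (R • ⇑(EuclideanSpace.basisFun (Fin n) ℝ))) u) ≤ M) :
    ENNReal.ofReal (R ^ 2) * ∫⁻ x in A, kondratievDensity Ω S m 1 u x ≤
      (multiIndicesLE n m).card * (ENNReal.ofReal (q ^ 2) ^ m * M) := by
  rw [setLIntegral_kondratievDensity hΩ hη hu, Finset.mul_sum, ← nsmul_eq_mul]
  refine Finset.sum_le_card_nsmul _ _ _ fun β hβ => ?_
  rw [mem_multiIndicesLE, ← length_multiIndexList] at hβ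
  have hderiv := hM _ hβ
  rw [l2NormSq_dirDeriv_map_smul, ← pderivMulti_eq_dirDeriv, length_multiIndexList] at hderiv
  rw [length_multiIndexList] at hβ
  have hq' : 1 ≤ ENNReal.ofReal (q ^ 2) := ENNReal.one_le_ofReal.2 (one_le_pow₀ hq)
  calc ENNReal.ofReal (R ^ 2) * ∫⁻ x in Ω ∩ A, kondratievTerm S 1 β u x
      ≤ ENNReal.ofReal ((q ^ 2) ^ (∑ i, β i) * (R ^ 2) ^ (∑ i, β i)) *
          l2NormSq volume (Ω ∩ A) (pderivMulti β u) := by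
        refine ofReal_mul_setLIntegral_ofReal_le (hΩ.measurableSet.inter hA) (sq_nonneg R)
          (by positivity) fun x hx => ?_
        rw [← mul_assoc]
        exact mul_le_mul_of_nonneg_right (sq_mul_rpow_le hR (hRη x hx) (hηq x hx) _) (sq_nonneg _)
    _ = ENNReal.ofReal (q ^ 2) ^ (∑ i, β i) * (ENNReal.ofReal (R ^ 2) ^ (∑ i, β i) *
          l2NormSq volume (Ω ∩ A) (pderivMulti β u)) := by
        rw [ENNReal.ofReal_mul (by positivity), ENNReal.ofReal_pow (sq_nonneg q),
          ENNReal.ofReal_pow (sq_nonneg R), mul_assoc]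
    _ ≤ ENNReal.ofReal (q ^ 2) ^ m * M := by gcongr

end LocalComparison

section Global

lemma IsDirichletOn.mono {E : Type*} [NormedAddCommGroup E] [NormedSpace ℝ E] {V B B' : Set E}
    {w : E → ℝ} (h : IsDirichletOn V B w) (hB : B' ⊆ B) : IsDirichletOn V B' w where
  continuousOn := h.continuousOn.mono hB
  eq_zero x hx := h.eq_zero x (hB hx)
  contDiffOn := h.contDiffOn.mono (inter_subset_inter_right V hB)

lemma isDirichletOn_indicator {E : Type*} [NormedAddCommGroup E] [NormedSpace ℝ E] {Ω : Set E}
    {u : E → ℝ} (hu : ContDiffOn ℝ ∞ u Ω) (huc : ContinuousOn u (closure Ω))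
    (hu0 : ∀ x ∈ frontier Ω, u x = 0) : IsDirichletOn Ω univ (Ω.indicator u) where
  continuousOn := (continuous_indicator hu0 huc).continuousOn
  eq_zero _ _ hx := indicator_of_notMem hx u
  contDiffOn := (hu.congr (eqOn_indicator (f := u))).mono inter_subset_left

variable {n : ℕ} {Ω S : Set (EuclideanSpace ℝ (Fin n))}

theorem exists_setLIntegral_kondratievDensity_le [Nonempty (Fin n)] {q : ℝ} (hq : 1 ≤ q) (m : ℕ) :
    ∃ C : ℝ≥0, ∀ {Ω S : Set (EuclideanSpace ℝ (Fin n))} {v y : EuclideanSpace ℝ (Fin n)} {c R : ℝ}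
      {u : EuclideanSpace ℝ (Fin n) → ℝ}, IsOpen Ω → frontier Ω = frontier (closure Ω) →
      (∀ x ∈ Ω, 0 < infDist x S) → v ≠ 0 → 0 < R → (∀ x ∈ Ω ∩ ball y R, R ≤ infDist x S) →
      (∀ x ∈ Ω ∩ ball y R, infDist x S ≤ q * R) → ball y R ∩ frontier Ω ⊆ {x | ⟪v, x⟫ = c} →
      IsDirichletOn Ω univ u →
      ∫⁻ x in ball y (1 / 2 * R), kondratievDensity Ω S (m + 2) 1 u x ≤
        C * ∫⁻ x in ball y R,
          (kondratievDensity Ω S m (-1) (laplaceOp u) x + kondratievDensity Ω S 0 1 u x) := by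
  obtain ⟨C, hC⟩ := exists_l2NormSq_dirDeriv_le_of_frontier_subset_hyperplane
    (volume : Measure (EuclideanSpace ℝ (Fin n))) (EuclideanSpace.basisFun (Fin n) ℝ) m
  set Q := Real.toNNReal (q ^ 2)
  have hQ : (1 : ℝ≥0∞) ≤ Q := by exact_mod_cast Real.one_le_toNNReal.2 (one_le_pow₀ hq)
  refine ⟨(multiIndicesLE n (m + 2)).card * (Q ^ (m + 2) * (C * Q)),
    fun {Ω S v y c R u} hΩ hΩ' hη hv hR hRη hηq hflat hdir => ?_⟩
  have hu : ContDiffOn ℝ ∞ u Ω := hdir.contDiffOn.mono (by simp)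
  have hlap := contDiffOn_laplaceOp hΩ hu
  set B := ∫⁻ x in ball y R,
    (kondratievDensity Ω S m (-1) (laplaceOp u) x + kondratievDensity Ω S 0 1 u x)
  have hB : B = _ + _ := lintegral_add_left (measurable_kondratievDensity hΩ hη hlap m (-1)) _
  have hsource (L : List (Fin n)) (hL : L.length ≤ m) := calc
    _ ≤ ENNReal.ofReal (R ^ 2) * _ :=
      l2NormSq_dirDeriv_frameLaplacian_le_kondratievDensity hΩ hη hu measurableSet_ball hR hRη hL
    _ ≤ ENNReal.ofReal (R ^ 2) * B := by rw [hB]; gcongr; exact le_self_add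
    _ ≤ Q * (ENNReal.ofReal (R ^ 2) * B) := le_mul_of_one_le_left zero_le hQ
  have hzero := calc
    _ ≤ Q * (ENNReal.ofReal (R ^ 2) * _) :=
      l2NormSq_le_kondratievDensity hΩ hη hu measurableSet_ball hR hRη hηq
    _ ≤ Q * (ENNReal.ofReal (R ^ 2) * B) := by rw [hB]; gcongr; exact le_add_self
  have hsub : Ω ∩ ball y (1 / 2 * R) ⊆ Ω ∩ ball y R :=
    inter_subset_inter_right Ω (ball_subset_ball (by linarith))
  have hlocal := hC hΩ hΩ' hv hR hflat (hdir.mono (subset_univ _)) hzero hsource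
  have hR0 : ENNReal.ofReal (R ^ 2) ≠ 0 := (ENNReal.ofReal_pos.2 (by positivity)).ne'
  rw [← ENNReal.mul_le_mul_iff_right hR0 ENNReal.ofReal_ne_top]
  calc _ ≤ ((multiIndicesLE n (m + 2)).card : ℝ≥0∞) *
        (Q ^ (m + 2) * (C * (Q * (ENNReal.ofReal (R ^ 2) * B)))) :=
        kondratievDensity_le_of_l2NormSq_dirDeriv_le hΩ hη hu measurableSet_ball hR
          (fun x hx => hRη x (hsub hx)) (fun x hx => hηq x (hsub hx)) hq hlocal
    _ = _ := by
      push_cast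
      ring

lemma le_infDist_and_infDist_le_of_mem_ball {κ : ℝ} (hκ : 0 < κ) (hκ' : κ ≤ 1 / 2)
    {x y : EuclideanSpace ℝ (Fin n)} (hx : x ∈ ball y (κ * infDist y S)) :
    κ * infDist y S ≤ infDist x S ∧ infDist x S ≤ 2 / κ * (κ * infDist y S) := by
  have h := (infDist_nonneg (x := y) (s := S))
  have hdist : dist x y ≤ 1 / 2 * infDist y S := (mem_ball.1 hx).le.trans (by gcongr)
  have hle := infDist_le_two_mul_infDist hdist
  have hle' := infDist_le_infDist_add_dist (s := S) (x := x) (y := y)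
  rw [← mul_assoc, div_mul_cancel₀ _ hκ.ne']
  constructor <;> nlinarith

theorem exists_KnormSq_le [Nonempty (Fin n)] (hΩ : IsOpen Ω)
    (hΩ' : frontier Ω = frontier (closure Ω)) (hη : ∀ x ∈ Ω, 0 < infDist x S) {κ : ℝ}
    (hκ : 0 < κ) (hκ' : κ ≤ 1 / 2) (hflat : ∀ y, ∃ (v : EuclideanSpace ℝ (Fin n)) (c : ℝ), v ≠ 0 ∧
      ball y (κ * infDist y S) ∩ frontier Ω ⊆ {x | ⟪v, x⟫ = c}) (m : ℕ) :
    ∃ C : ℝ≥0, ∀ u : EuclideanSpace ℝ (Fin n) → ℝ, IsDirichletOn Ω univ u →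
      KnormSq Ω S (m + 2) 1 u ≤
        C * (KnormSq Ω S m (-1) (laplaceOp u) + KnormSq Ω S 0 1 u) := by
  obtain ⟨C, hC⟩ := exists_setLIntegral_kondratievDensity_le (n := n) (q := 2 / κ)
    ((one_le_div hκ).2 (by linarith)) m
  obtain ⟨C', hC'⟩ := exists_lintegral_le_of_forall_ball (S := S)
    (volume : Measure (EuclideanSpace ℝ (Fin n))) hκ hκ' C
  refine ⟨C', fun u hdir => ?_⟩
  have hu : ContDiffOn ℝ ∞ u Ω := hdir.contDiffOn.mono (by simp)
  have hlap := contDiffOn_laplaceOp hΩ hu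
  have hmeas := measurable_kondratievDensity hΩ hη hlap m (-1)
  simp only [KnormSq_eq_lintegral_kondratievDensity hΩ hη hu,
    KnormSq_eq_lintegral_kondratievDensity hΩ hη hlap]
  rw [← lintegral_add_left hmeas]
  refine hC' _ _ (measurable_kondratievDensity hΩ hη hu _ _)
    (hmeas.add (measurable_kondratievDensity hΩ hη hu _ _))
    (fun x hx => kondratievDensity_eq_zero hη _ _ hx)
    (fun x hx => by simp only [kondratievDensity_eq_zero hη _ _ hx, add_zero]) fun y hy => ?_
  obtain ⟨v, c, hv, hF⟩ := hflat y
  have h := hC hΩ hΩ' hη hv (mul_pos hκ hy)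
    (fun x hx => (le_infDist_and_infDist_le_of_mem_ball hκ hκ' hx.2).1)
    (fun x hx => (le_infDist_and_infDist_le_of_mem_ball hκ hκ' hx.2).2) hF hdir
  rwa [show κ / 2 * infDist y S = 1 / 2 * (κ * infDist y S) by ring]

end Global

section Polyhedral

variable {n : ℕ} {Ω : Set (EuclideanSpace ℝ (Fin n))}
  {𝓗 : Finset (Set (EuclideanSpace ℝ (Fin n)))}

lemma exists_isPolyhedral (hΩ : IsOpen Ω) (hb : Bornology.IsBounded Ω)
    (hΩ' : frontier Ω = frontier (closure Ω)) (h𝓗 : ∀ H ∈ 𝓗, IsAffineHyperplane H)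
    (hsub : frontier Ω ⊆ ⋃ H ∈ 𝓗, H) :
    ∃ (v : {H // H ∈ 𝓗} → EuclideanSpace ℝ (Fin n)) (c : {H // H ∈ 𝓗} → ℝ),
      IsPolyhedral v c Ω ∧ doublePoints v c (frontier Ω) = polySingularSet Ω 𝓗 := by
  choose v c hv hH using fun H : {H // H ∈ 𝓗} => h𝓗 H.1 H.2
  have hmem (H : {H // H ∈ 𝓗}) (x) : hyperplaneFun v c H x = 0 ↔ x ∈ H.1 := by
    rw [hH H, hyperplaneFun, sub_eq_zero, mem_ofPred_eq]
  refine ⟨v, c, ⟨hΩ, hb, hΩ', hv, fun x hx => ?_⟩, ?_⟩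
  · obtain ⟨H, hH𝓗, hxH⟩ := mem_iUnion₂.1 (hsub hx)
    exact ⟨⟨H, hH𝓗⟩, (hmem _ x).2 hxH⟩
  · ext x
    simp only [doublePoints, polySingularSet, hmem, Subtype.exists, ne_eq, Subtype.mk.injEq,
      mem_ofPred_eq, exists_prop]

lemma infDist_polySingularSet_pos (hΩ : IsOpen Ω) (hS : (polySingularSet Ω 𝓗).Nonempty)
    (hclosed : IsClosed (polySingularSet Ω 𝓗)) {x : EuclideanSpace ℝ (Fin n)} (hx : x ∈ Ω) :
    0 < infDist x (polySingularSet Ω 𝓗) :=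
  (hclosed.notMem_iff_infDist_pos hS).1 fun hxS => (hΩ.frontier_eq ▸ hxS.1).2 hx

lemma rpow_half_le_of_le_mul_add {x a b : ℝ≥0∞} {C : ℝ≥0} (h : x ≤ C * (a + b)) :
    x ^ (1 / 2 : ℝ) ≤ ENNReal.ofReal (√C + 1) * (a ^ (1 / 2 : ℝ) + b ^ (1 / 2 : ℝ)) := by
  have hhalf : (0 : ℝ) ≤ 1 / 2 := by norm_num
  calc x ^ (1 / 2 : ℝ) ≤ (C * (a + b)) ^ (1 / 2 : ℝ) := ENNReal.rpow_le_rpow h hhalf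
    _ = ENNReal.ofReal √C * (a + b) ^ (1 / 2 : ℝ) := by
      rw [ENNReal.mul_rpow_of_nonneg _ _ hhalf, Real.sqrt_eq_rpow,
        ← ENNReal.ofReal_rpow_of_nonneg C.coe_nonneg hhalf, ENNReal.ofReal_coe_nnreal]
    _ ≤ _ := by
      gcongr
      · linarith
      · exact ENNReal.rpow_add_le_add_rpow _ _ hhalf (by norm_num)

theorem kondratiev_regularity_general (hΩ : IsOpen Ω) (hb : Bornology.IsBounded Ω)
    (hΩ' : frontier Ω = frontier (closure Ω)) (h𝓗 : ∀ H ∈ 𝓗, IsAffineHyperplane H)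
    (hsub : frontier Ω ⊆ ⋃ H ∈ 𝓗, H) (hS : (polySingularSet Ω 𝓗).Nonempty) (m : ℕ) :
    ∃ C : ℝ, 0 < C ∧ ∀ u : EuclideanSpace ℝ (Fin n) → ℝ,
      ContDiffOn ℝ ∞ u Ω → ContinuousOn u (closure Ω) → (∀ x ∈ frontier Ω, u x = 0) →
      (KnormSq Ω (polySingularSet Ω 𝓗) (m + 2) 1 u) ^ (1 / 2 : ℝ) ≤
        ENNReal.ofReal C *
          ((KnormSq Ω (polySingularSet Ω 𝓗) m (-1) (laplaceOp u)) ^ (1 / 2 : ℝ) +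
            (KnormSq Ω (polySingularSet Ω 𝓗) 0 1 u) ^ (1 / 2 : ℝ)) := by
  obtain ⟨v, c, hpoly, hdouble⟩ := exists_isPolyhedral hΩ hb hΩ' h𝓗 hsub
  obtain ⟨κ, hκ, hκ', hflat⟩ := hpoly.exists_ball_inter_frontier_subset (hdouble ▸ hS)
  rw [hdouble] at hflat
  have hη := fun x (hx : x ∈ Ω) => infDist_polySingularSet_pos hΩ hS
    (hdouble ▸ isClosed_doublePoints v c isClosed_frontier) hx
  obtain ⟨x, -, H, hH, -⟩ := hS
  have : Nonempty (Fin n) := by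
    by_contra! h
    exact hpoly.ne_zero ⟨H, hH⟩ (Subsingleton.elim _ _)
  obtain ⟨C, hC⟩ := exists_KnormSq_le hΩ hΩ' hη hκ hκ' (fun y => by
    obtain ⟨i, hi⟩ := hflat y
    exact ⟨v i, c i, hpoly.ne_zero i, fun x hx => sub_eq_zero.1 (hi hx)⟩) m
  refine ⟨√C + 1, by positivity, fun u hu huc hu0 => rpow_half_le_of_le_mul_add ?_⟩
  have h := hC _ (isDirichletOn_indicator hu huc hu0)
  have heq : EqOn (Ω.indicator u) u Ω := eqOn_indicator
  rw [laplaceOp_eq_frameLaplacian] at h ⊢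
  rwa [KnormSq_congr hΩ heq, KnormSq_congr hΩ heq,
    KnormSq_congr hΩ (eqOn_frameLaplacian _ hΩ heq)] at h

end Polyhedral

/-- Regularity estimate in Babuška–Kondratiev spaces on a polyhedral domain:
`‖u‖_{K^{μ+1}_1} ≤ C (‖Δu‖_{K^{μ-1}_{-1}} + ‖u‖_{K^0_1})` for functions vanishing on the
boundary. -/
theorem kondratiev_regularity {n : ℕ} (hn : 2 ≤ n)
    (Ω : Set (EuclideanSpace ℝ (Fin n))) (𝓗 : Finset (Set (EuclideanSpace ℝ (Fin n))))
    (hΩ : IsPolyhedralDomain Ω 𝓗) (hS : (polySingularSet Ω 𝓗).Nonempty)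
    (μ : ℕ) (hμ : 1 ≤ μ) :
    ∃ C : ℝ, 0 < C ∧ ∀ u : EuclideanSpace ℝ (Fin n) → ℝ,
      ContDiffOn ℝ (⊤ : ℕ∞) u Ω → ContinuousOn u (closure Ω) →
      (∀ x ∈ frontier Ω, u x = 0) →
      KnormSq Ω (polySingularSet Ω 𝓗) 1 1 u < ⊤ →
      KnormSq Ω (polySingularSet Ω 𝓗) (μ - 1) (-1) (laplaceOp u) < ⊤ →
      KnormSq Ω (polySingularSet Ω 𝓗) (μ + 1) 1 u < ⊤ ∧
      (KnormSq Ω (polySingularSet Ω 𝓗) (μ + 1) 1 u) ^ (1 / 2 : ℝ) ≤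
        ENNReal.ofReal C *
          ((KnormSq Ω (polySingularSet Ω 𝓗) (μ - 1) (-1) (laplaceOp u)) ^ (1 / 2 : ℝ) +
            (KnormSq Ω (polySingularSet Ω 𝓗) 0 1 u) ^ (1 / 2 : ℝ)) := by
  obtain ⟨m, rfl⟩ := Nat.exists_eq_add_of_le' hμ
  obtain ⟨C, hC, hle⟩ := kondratiev_regularity_general hΩ.isOpen hΩ.isBounded hΩ.frontier_closure
    hΩ.hyperplane hΩ.subset_union hS m
  refine ⟨C, hC, fun u hu huc hu0 hu1 hlap => ?_⟩
  have hhalf : (0 : ℝ) < 1 / 2 := by norm_num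
  have hlap' := ENNReal.rpow_lt_top_of_nonneg hhalf.le hlap.ne
  have hu' := ENNReal.rpow_lt_top_of_nonneg hhalf.le
    ((KnormSq_mono zero_le_one 1 u).trans_lt hu1).ne
  have h := hle u hu huc hu0
  refine ⟨(ENNReal.rpow_lt_top_iff_of_pos hhalf).1 (h.trans_lt ?_), h⟩
  exact ENNReal.mul_lt_top ENNReal.ofReal_lt_top (ENNReal.add_lt_top.2 ⟨hlap', hu'⟩)
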